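/- arXiv:1805.09100 — 5 statements merged into one kernel-verified Lean document; each statement's English description precedes it below -/
import Mathlib

section
/- With Ω ⊂ ℝ^N a disjoint union of S shifted cubes Ω_i = a_i + [0,h)^N and the elementary operators 𝓔_{ij}^α[𝐀] on L²(Ω → ℂ^M) as defined in the context, the composition of two elementary operators satisfies 𝓔_{ij}^α[𝐀] ∘ 𝓔_{kl}^β[𝐁] = δ_{jk} 𝓔_{il}^{α∪β}[𝐀𝐁] for all 𝐀, 𝐁 ∈ ℂ^{M×M}, α, β ⊆ {1,...,N}, and i, j, k, l ∈ {1,...,S}, where δ_{jk} is the Kronecker delta and 𝐀𝐁 is the matrix product. -/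
/-!
STATEMENT 6: For the elementary operators 𝓔_{ij}^α[𝐀] on L²(Ω → ℂ^M):
𝓔_{ij}^α[𝐀] ∘ 𝓔_{kl}^β[𝐁] = δ_{jk} 𝓔_{il}^{α∪β}[𝐀𝐁].
-/

open MeasureTheory Finset

noncomputable section

namespace Stmt6

/-- `ℂ^M` with its Euclidean (Hilbert) structure. -/
abbrev V (M : ℕ) := EuclideanSpace ℂ (Fin M)

/-- The half-open cube `H = [0,h)^N`. -/
def cube (N : ℕ) (h : ℝ) : Set (Fin N → ℝ) := Set.univ.pi fun _ => Set.Ico 0 h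

/-- `combine α y x` agrees with `y` in the coordinates `n ∈ α` and with `x`
in the coordinates `n ∉ α`. -/
def combine {N : ℕ} (α : Finset (Fin N)) (y x : Fin N → ℝ) : Fin N → ℝ :=
  fun n => if n ∈ α then y n else x n

/-- The shifted cube `Ω_i = a_i + [0,h)^N`. -/
def OmegaI {N S : ℕ} (a : Fin S → Fin N → ℝ) (h : ℝ) (i : Fin S) :
    Set (Fin N → ℝ) := {x | x - a i ∈ cube N h}

/-- `Ω = ⋃_{i=1}^S Ω_i`. -/
def Omega {N S : ℕ} (a : Fin S → Fin N → ℝ) (h : ℝ) : Set (Fin N → ℝ) :=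
  ⋃ i, OmegaI a h i

/-- The pointwise formula for the elementary operator `𝓔_{ij}^α[𝐀]`:
`(𝓔_{ij}^α[𝐀]u)(x + a_i) = h^{−|α|} 𝐀 ∫_{[0,h)^{|α|}} u(x' + a_j) dx'_α` for
`x ∈ H`, and `0` outside `Ω_i`.  Here the partial integral over the coordinates
in `α` is realized as an integral over the whole cube `[0,h)^N` (the integrand
does not depend on the coordinates of `y` outside `α`), compensated by the
additional normalization `h^{−(N−|α|)}`. -/
def Efun {N M S : ℕ} (a : Fin S → Fin N → ℝ) (h : ℝ) (i j : Fin S)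
    (α : Finset (Fin N)) (A : Matrix (Fin M) (Fin M) ℂ)
    (u : (Fin N → ℝ) → V M) : (Fin N → ℝ) → V M :=
  (OmegaI a h i).indicator fun x =>
    ((h ^ α.card)⁻¹ * (h ^ (N - α.card))⁻¹ : ℝ) •
      (show V M from WithLp.toLp 2 (A.mulVec
        (show Fin M → ℂ from ∫ y in cube N h, u (a j + combine α y (x - a i)))))

/-- The uniform probability measure on the cube `[0,h)^N`. -/
def cubeAvg (N : ℕ) (h : ℝ) : Measure (Fin N → ℝ) :=
  Measure.pi fun _ => (ENNReal.ofReal h)⁻¹ • volume.restrict (Set.Ico 0 h)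

lemma isProbabilityMeasure_uniform_Ico {h : ℝ} (hh : 0 < h) :
    IsProbabilityMeasure ((ENNReal.ofReal h)⁻¹ • volume.restrict (Set.Ico 0 h)) := by
  constructor
  simp only [Measure.smul_apply, Measure.restrict_apply_univ, Real.volume_Ico, sub_zero,
    smul_eq_mul]
  exact ENNReal.inv_mul_cancel (by simpa using hh) ENNReal.ofReal_ne_top

lemma isProbabilityMeasure_cubeAvg (N : ℕ) {h : ℝ} (hh : 0 < h) :
    IsProbabilityMeasure (cubeAvg N h) := by
  have := isProbabilityMeasure_uniform_Ico hh
  unfold cubeAvg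
  infer_instance

lemma cubeAvg_eq (N : ℕ) {h : ℝ} (hh : 0 < h) :
    cubeAvg N h = (ENNReal.ofReal h)⁻¹ ^ N • volume.restrict (cube N h) := by
  have := isProbabilityMeasure_uniform_Ico hh
  refine Measure.pi_eq fun s hs => ?_
  rw [cube, volume_pi, Measure.restrict_pi_pi, Measure.smul_apply, Measure.pi_pi]
  simp [Finset.prod_mul_distrib]

lemma ae_cubeAvg_iff {N : ℕ} {h : ℝ} (hh : 0 < h) {p : (Fin N → ℝ) → Prop} :
    (∀ᵐ x ∂cubeAvg N h, p x) ↔ ∀ᵐ x ∂volume.restrict (cube N h), p x := by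
  rw [cubeAvg_eq N hh, Measure.ae_ennreal_smul_measure_iff]
  simp

lemma measurableSet_cube (N : ℕ) (h : ℝ) : MeasurableSet (cube N h) :=
  MeasurableSet.univ_pi fun _ => measurableSet_Ico

lemma ae_mem_cube (N : ℕ) {h : ℝ} (hh : 0 < h) : ∀ᵐ x ∂cubeAvg N h, x ∈ cube N h :=
  (ae_cubeAvg_iff hh).2 (ae_restrict_mem (measurableSet_cube N h))

lemma combine_mem_cube {N : ℕ} {h : ℝ} (α : Finset (Fin N)) {y x : Fin N → ℝ}
    (hy : y ∈ cube N h) (hx : x ∈ cube N h) : combine α y x ∈ cube N h := by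
  intro n _
  unfold combine
  split_ifs
  exacts [hy n trivial, hx n trivial]

lemma combine_combine {N : ℕ} (α β : Finset (Fin N)) (z y x : Fin N → ℝ) :
    combine β z (combine α y x) = combine (α ∪ β) (combine β z y) x := by
  funext n
  simp only [combine, Finset.mem_union]
  split_ifs <;> tauto

lemma measurable_combine {N : ℕ} (α : Finset (Fin N)) :
    Measurable fun p : (Fin N → ℝ) × (Fin N → ℝ) => combine α p.2 p.1 := by
  refine measurable_pi_lambda _ fun n => ?_
  unfold combine
  split_ifs <;> fun_prop

/-- Replacing the coordinates in `α` by those of an independent uniform point preserves the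
uniform distribution on the cube. -/
lemma measurePreserving_combine {N : ℕ} {h : ℝ} (hh : 0 < h) (α : Finset (Fin N)) :
    MeasurePreserving (fun p : (Fin N → ℝ) × (Fin N → ℝ) => combine α p.2 p.1)
      ((cubeAvg N h).prod (cubeAvg N h)) (cubeAvg N h) := by
  have := isProbabilityMeasure_uniform_Ico hh
  have := isProbabilityMeasure_cubeAvg N hh
  refine ⟨measurable_combine α, (Measure.pi_eq fun s hs => ?_).symm⟩
  rw [Measure.map_apply (measurable_combine α) (MeasurableSet.univ_pi hs)]
  have hpre : (fun p : (Fin N → ℝ) × (Fin N → ℝ) => combine α p.2 p.1) ⁻¹' Set.univ.pi s =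
      (Set.univ.pi fun n => if n ∈ α then Set.univ else s n) ×ˢ
        (Set.univ.pi fun n => if n ∈ α then s n else Set.univ) := by
    ext p
    simp only [Set.mem_preimage, Set.mem_univ_pi, Set.mem_prod, combine, ← forall_and]
    refine forall_congr' fun n => ?_
    split_ifs <;> simp
  rw [hpre, Measure.prod_prod, cubeAvg, Measure.pi_pi, Measure.pi_pi, ← Finset.prod_mul_distrib]
  refine Finset.prod_congr rfl fun n _ => ?_
  split_ifs <;> simp only [measure_univ, one_mul, mul_one]

lemma ae_ae_combine {N : ℕ} {h : ℝ} (hh : 0 < h) (α : Finset (Fin N))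
    {p : (Fin N → ℝ) → Prop} (hp : ∀ᵐ x ∂cubeAvg N h, p x) :
    ∀ᵐ x ∂cubeAvg N h, ∀ᵐ y ∂cubeAvg N h, p (combine α y x) := by
  have := isProbabilityMeasure_cubeAvg N hh
  exact Measure.ae_ae_of_ae_prod ((measurePreserving_combine hh α).quasiMeasurePreserving.ae hp)

lemma ae_integrable_combine {N : ℕ} {h : ℝ} (hh : 0 < h) (α : Finset (Fin N))
    {E : Type*} [NormedAddCommGroup E] {g : (Fin N → ℝ) → E} (hg : Integrable g (cubeAvg N h)) :
    ∀ᵐ x ∂cubeAvg N h, Integrable (fun y => g (combine α y x)) (cubeAvg N h) := by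
  have := isProbabilityMeasure_cubeAvg N hh
  exact ((measurePreserving_combine hh α).integrable_comp_of_integrable hg).prod_right_ae

lemma integral_integral_combine {N : ℕ} {h : ℝ} (hh : 0 < h) (α : Finset (Fin N))
    {E : Type*} [NormedAddCommGroup E] [NormedSpace ℝ E] {g : (Fin N → ℝ) → E}
    (hg : Integrable g (cubeAvg N h)) :
    ∫ y, ∫ z, g (combine α z y) ∂cubeAvg N h ∂cubeAvg N h = ∫ w, g w ∂cubeAvg N h := by
  have := isProbabilityMeasure_cubeAvg N hh
  have hmp := measurePreserving_combine hh α
  have hint := hmp.integrable_comp_of_integrable hg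
  refine (integral_prod _ hint).symm.trans ?_
  refine (integral_map hmp.measurable.aemeasurable (by rw [hmp.map_eq]; exact hg.1)).symm.trans ?_
  rw [hmp.map_eq]

lemma preimage_add_OmegaI {N S : ℕ} (a : Fin S → Fin N → ℝ) (h : ℝ) (i : Fin S) :
    (fun x => a i + x) ⁻¹' OmegaI a h i = cube N h := by
  ext x
  simp [OmegaI]

lemma measurableSet_OmegaI {N S : ℕ} (a : Fin S → Fin N → ℝ) (h : ℝ) (i : Fin S) :
    MeasurableSet (OmegaI a h i) :=
  measurableSet_cube N h |>.preimage (measurable_id.sub_const (a i))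

lemma measurePreserving_add_cube {N S : ℕ} (a : Fin S → Fin N → ℝ) (h : ℝ) (i : Fin S) :
    MeasurePreserving (fun x => a i + x) (volume.restrict (cube N h))
      (volume.restrict (OmegaI a h i)) := by
  rw [← preimage_add_OmegaI a h i]
  exact (measurePreserving_add_left volume (a i)).restrict_preimage (measurableSet_OmegaI a h i)

lemma ae_cubeAvg_of_ae_Omega {N S : ℕ} {h : ℝ} (hh : 0 < h) (a : Fin S → Fin N → ℝ) (i : Fin S)
    {p : (Fin N → ℝ) → Prop} (hp : ∀ᵐ x ∂volume.restrict (Omega a h), p x) :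
    ∀ᵐ x ∂cubeAvg N h, p (a i + x) :=
  (ae_cubeAvg_iff hh).2 <| (measurePreserving_add_cube a h i).quasiMeasurePreserving.ae <|
    ae_restrict_of_ae_restrict_of_subset (Set.subset_iUnion _ i) hp

lemma ae_OmegaI_of_ae_cubeAvg {N S : ℕ} {h : ℝ} (hh : 0 < h) (a : Fin S → Fin N → ℝ) (i : Fin S)
    {p : (Fin N → ℝ) → Prop} (hp : ∀ᵐ x ∂cubeAvg N h, p x) :
    ∀ᵐ x, x ∈ OmegaI a h i → p (x - a i) := by
  have hp' := (ae_restrict_iff' (measurableSet_cube N h)).1 ((ae_cubeAvg_iff hh).1 hp)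
  exact (measurePreserving_sub_right volume (a i)).quasiMeasurePreserving.ae hp'

lemma integrable_translate {N S : ℕ} {h : ℝ} (hh : 0 < h) (a : Fin S → Fin N → ℝ) (i : Fin S)
    {E : Type*} [NormedAddCommGroup E] {u : (Fin N → ℝ) → E}
    (hu : MemLp u 2 (volume.restrict (Omega a h))) :
    Integrable (fun x => u (a i + x)) (cubeAvg N h) := by
  have := isProbabilityMeasure_cubeAvg N hh
  have hui : MemLp u 2 (volume.restrict (OmegaI a h i)) :=
    hu.mono_measure (Measure.restrict_mono (Set.subset_iUnion _ i) le_rfl)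
  have huc := hui.comp_measurePreserving (measurePreserving_add_cube a h i)
  have hua : MemLp (fun x => u (a i + x)) 2 (cubeAvg N h) := by
    rw [cubeAvg_eq N hh]
    exact huc.smul_measure (by simp [hh])
  exact hua.integrable (by norm_num)

lemma Efun_of_notMem {N M S : ℕ} (a : Fin S → Fin N → ℝ) (h : ℝ) (i j : Fin S)
    (α : Finset (Fin N)) (A : Matrix (Fin M) (Fin M) ℂ) (u : (Fin N → ℝ) → V M)
    {x : Fin N → ℝ} (hx : x ∉ OmegaI a h i) : Efun a h i j α A u x = 0 :=
  Set.indicator_of_notMem hx _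

/-- On `Ω_i`, the elementary operator applies `𝐀` to an average over the cube. -/
lemma Efun_of_mem {N M S : ℕ} {h : ℝ} (hh : 0 < h) (a : Fin S → Fin N → ℝ) (i j : Fin S)
    (α : Finset (Fin N)) (A : Matrix (Fin M) (Fin M) ℂ) (u : (Fin N → ℝ) → V M)
    {x : Fin N → ℝ} (hx : x ∈ OmegaI a h i) :
    Efun a h i j α A u x = Matrix.toEuclideanCLM (𝕜 := ℂ) A
      (∫ y, u (a j + combine α y (x - a i)) ∂cubeAvg N h) := by
  have hcard : α.card ≤ N := by simpa using α.card_le_univ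
  have hofLp : (∫ y in cube N h, (u (a j + combine α y (x - a i))).ofLp) =
      (∫ y in cube N h, u (a j + combine α y (x - a i))).ofLp :=
    (PiLp.continuousLinearEquiv 2 ℂ fun _ : Fin M => ℂ).integral_comp_comm _
  rw [Efun, Set.indicator_of_mem hx, cubeAvg_eq N hh, integral_smul_measure, ← mul_inv, ← pow_add,
    Nat.add_sub_cancel' hcard, ContinuousLinearMap.map_smul_of_tower]
  simp only [ENNReal.toReal_pow, ENNReal.toReal_inv, ENNReal.toReal_ofReal hh.le, inv_pow]
  rw [hofLp]
  rfl

lemma Efun_congr_ae {N M S : ℕ} {h : ℝ} (hh : 0 < h) (a : Fin S → Fin N → ℝ) (i j : Fin S)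
    (α : Finset (Fin N)) (A : Matrix (Fin M) (Fin M) ℂ) {u v : (Fin N → ℝ) → V M}
    (huv : u =ᵐ[volume.restrict (Omega a h)] v) :
    Efun a h i j α A u =ᵐ[volume] Efun a h i j α A v := by
  filter_upwards [ae_OmegaI_of_ae_cubeAvg hh a i
    (ae_ae_combine hh α (ae_cubeAvg_of_ae_Omega hh a j huv))] with x hx
  by_cases hxi : x ∈ OmegaI a h i
  · rw [Efun_of_mem hh a i j α A u hxi, Efun_of_mem hh a i j α A v hxi, integral_congr_ae (hx hxi)]
  · rw [Efun_of_notMem a h i j α A u hxi, Efun_of_notMem a h i j α A v hxi]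

lemma add_mem_OmegaI {N S : ℕ} (a : Fin S → Fin N → ℝ) (h : ℝ) (i : Fin S) {x : Fin N → ℝ}
    (hx : x ∈ cube N h) : a i + x ∈ OmegaI a h i := by
  simpa [OmegaI] using hx

lemma Efun_Efun_of_ne {N M S : ℕ} {h : ℝ} (hh : 0 < h) (a : Fin S → Fin N → ℝ)
    {i j k l : Fin S} (hjk : Disjoint (OmegaI a h j) (OmegaI a h k))
    (α β : Finset (Fin N)) (A B : Matrix (Fin M) (Fin M) ℂ) (u : (Fin N → ℝ) → V M) :
    Efun a h i j α A (Efun a h k l β B u) = 0 := by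
  funext x
  by_cases hxi : x ∈ OmegaI a h i
  · have hzero : ∀ᵐ y ∂cubeAvg N h,
        Efun a h k l β B u (a j + combine α y (x - a i)) = 0 := by
      filter_upwards [ae_mem_cube N hh] with y hy
      exact Efun_of_notMem a h k l β B u
        (hjk.notMem_of_mem_left (add_mem_OmegaI a h j (combine_mem_cube α hy hxi)))
    rw [Efun_of_mem hh a i j α A _ hxi, integral_eq_zero_of_ae hzero, map_zero, Pi.zero_apply]
  · exact Efun_of_notMem a h i j α A _ hxi

lemma Efun_Efun_ae {N M S : ℕ} {h : ℝ} (hh : 0 < h) (a : Fin S → Fin N → ℝ) (i j l : Fin S)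
    (α β : Finset (Fin N)) (A B : Matrix (Fin M) (Fin M) ℂ) {u : (Fin N → ℝ) → V M}
    (hu : Integrable (fun x => u (a l + x)) (cubeAvg N h)) :
    Efun a h i j α A (Efun a h j l β B u) =ᵐ[volume] Efun a h i l (α ∪ β) (A * B) u := by
  have := isProbabilityMeasure_cubeAvg N hh
  filter_upwards [ae_OmegaI_of_ae_cubeAvg hh a i (ae_integrable_combine hh (α ∪ β) hu)] with x hx
  by_cases hxi : x ∈ OmegaI a h i
  · have hG := hx hxi
    have hinner : ∀ᵐ y ∂cubeAvg N h,
        Efun a h j l β B u (a j + combine α y (x - a i)) = Matrix.toEuclideanCLM (𝕜 := ℂ) B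
          (∫ z, u (a l + combine (α ∪ β) (combine β z y) (x - a i)) ∂cubeAvg N h) := by
      filter_upwards [ae_mem_cube N hh] with y hy
      rw [Efun_of_mem hh a j l β B u (add_mem_OmegaI a h j (combine_mem_cube α hy hxi))]
      simp only [add_sub_cancel_left, combine_combine]
    have hint : Integrable (fun y => ∫ z, u (a l + combine (α ∪ β) (combine β z y) (x - a i))
        ∂cubeAvg N h) (cubeAvg N h) :=
      ((measurePreserving_combine hh β).integrable_comp_of_integrable hG).integral_prod_left
    rw [Efun_of_mem hh a i j α A _ hxi, Efun_of_mem hh a i l _ _ u hxi, integral_congr_ae hinner,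
      ContinuousLinearMap.integral_comp_comm _ hint, integral_integral_combine hh β hG, map_mul,
      mul_apply_eq_comp]
  · rw [Efun_of_notMem a h i j α A _ hxi, Efun_of_notMem a h i l _ _ u hxi]

/-- Let `Ω ⊂ ℝ^N` be a disjoint union of `S` shifted cubes
`Ω_i = a_i + [0,h)^N` and let `𝓔_{ij}^α[𝐀]` be bounded operators on
`L²(Ω → ℂ^M)` acting by the defining formula `Efun`.  Then
`𝓔_{ij}^α[𝐀] ∘ 𝓔_{kl}^β[𝐁] = δ_{jk} 𝓔_{il}^{α∪β}[𝐀𝐁]`. -/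
theorem comp_elementary_operators (N M S : ℕ) (hN : 1 ≤ N) (hM : 1 ≤ M)
    (hS : 1 ≤ S) (h : ℝ) (hh : 0 < h) (a : Fin S → Fin N → ℝ)
    (hdisj : ∀ i j : Fin S, i ≠ j → Disjoint (OmegaI a h i) (OmegaI a h j))
    (EE : Fin S → Fin S → Finset (Fin N) → Matrix (Fin M) (Fin M) ℂ →
      (Lp (V M) 2 (volume.restrict (Omega a h)) →L[ℂ]
        Lp (V M) 2 (volume.restrict (Omega a h))))
    (hEE : ∀ i j α A (u : Lp (V M) 2 (volume.restrict (Omega a h))),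
      (EE i j α A u : (Fin N → ℝ) → V M) =ᵐ[volume.restrict (Omega a h)]
        Efun a h i j α A u)
    (i j k l : Fin S) (α β : Finset (Fin N)) (A B : Matrix (Fin M) (Fin M) ℂ) :
    (EE i j α A).comp (EE k l β B) = if j = k then EE i l (α ∪ β) (A * B) else 0 := by
  ext1 u
  apply Lp.ext
  rw [ContinuousLinearMap.comp_apply]
  have hcomp := (hEE i j α A (EE k l β B u)).trans
    (ae_restrict_of_ae (Efun_congr_ae hh a i j α A (hEE k l β B u)))
  refine hcomp.trans ?_
  split_ifs with hjk
  · subst hjk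
    have hprod := Efun_Efun_ae hh a i j l α β A B (integrable_translate hh a l (Lp.memLp u))
    exact Filter.EventuallyEq.trans (ae_restrict_of_ae hprod) (hEE i l (α ∪ β) (A * B) u).symm
  · rw [Efun_Efun_of_ne hh a (hdisj j k hjk), zero_apply]
    exact (Lp.coeFn_zero _ _ _).symm

end Stmt6
end
end

section
/- With Ω ⊂ ℝ^N a disjoint union of S shifted cubes Ω_i = a_i + [0,h)^N, let 𝔄 be the C*-subalgebra of bounded operators on L²(Ω → ℂ^M) generated by all elementary operators 𝓔_{ij}^α[𝐀] (𝐀 ∈ ℂ^{M×M}, α ⊆ {1,...,N}, i,j ∈ {1,...,S}). Then every element 𝒜 ∈ 𝔄 has the form 𝒜 = ∑_{α⊆{1,...,N}} ∑_{i,j=1}^S 𝓔_{ij}^α[𝐀_{ij}^α] with uniquely determined matrices 𝐀_{ij}^α ∈ ℂ^{M×M}, and the map π : 𝔄 → (ℂ^{MS×MS})^{2^N} defined by π(𝒜) = (𝐁_α)_{α⊆{1,...,N}}, where 𝐀_α = (𝐀_{ij}^α)_{i,j=1}^S ∈ ℂ^{MS×MS} is the block matrix of coefficients and 𝐁_α =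 ∑_{β⊆α} 𝐀_β, is a *-algebra isomorphism of C*-algebras from 𝔄 onto the product C*-algebra (ℂ^{MS×MS})^{2^N}. -/
/-!
STATEMENT 8: The C*-algebra 𝔄 generated by the elementary operators
𝓔_{ij}^α[𝐀] on L²(Ω → ℂ^M): every 𝒜 ∈ 𝔄 has a unique expansion
𝒜 = ∑_α ∑_{i,j} 𝓔_{ij}^α[𝐀_{ij}^α], and π(𝒜) = (𝐁_α)_α with
𝐁_α = ∑_{β⊆α} 𝐀_β (block matrices 𝐀_α = (𝐀_{ij}^α)) is a *-algebra
isomorphism of 𝔄 onto the product C*-algebra (ℂ^{MS×MS})^{2^N}.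
-/

open MeasureTheory Finset

noncomputable section

namespace Stmt8

/-- `ℂ^M` with its Euclidean (Hilbert) structure. -/
abbrev V (M : ℕ) := EuclideanSpace ℂ (Fin M)

/-- The half-open cube `H = [0,h)^N`. -/
def cube (N : ℕ) (h : ℝ) : Set (Fin N → ℝ) := Set.univ.pi fun _ => Set.Ico 0 h

/-- `combine α y x` agrees with `y` in the coordinates `n ∈ α` and with `x`
in the coordinates `n ∉ α`. -/
def combine {N : ℕ} (α : Finset (Fin N)) (y x : Fin N → ℝ) : Fin N → ℝ :=
  fun n => if n ∈ α then y n else x n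

/-- The shifted cube `Ω_i = a_i + [0,h)^N`. -/
def OmegaI {N S : ℕ} (a : Fin S → Fin N → ℝ) (h : ℝ) (i : Fin S) :
    Set (Fin N → ℝ) := {x | x - a i ∈ cube N h}

/-- `Ω = ⋃_{i=1}^S Ω_i`. -/
def Omega {N S : ℕ} (a : Fin S → Fin N → ℝ) (h : ℝ) : Set (Fin N → ℝ) :=
  ⋃ i, OmegaI a h i

/-- The pointwise formula for the elementary operator `𝓔_{ij}^α[𝐀]`:
`(𝓔_{ij}^α[𝐀]u)(x + a_i) = h^{−|α|} 𝐀 ∫_{[0,h)^{|α|}} u(x' + a_j) dx'_α` for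
`x ∈ H`, and `0` outside `Ω_i`.  Here the partial integral over the coordinates
in `α` is realized as an integral over the whole cube `[0,h)^N` (the integrand
does not depend on the coordinates of `y` outside `α`), compensated by the
additional normalization `h^{−(N−|α|)}`. -/
def Efun {N M S : ℕ} (a : Fin S → Fin N → ℝ) (h : ℝ) (i j : Fin S)
    (α : Finset (Fin N)) (A : Matrix (Fin M) (Fin M) ℂ)
    (u : (Fin N → ℝ) → V M) : (Fin N → ℝ) → V M :=
  (OmegaI a h i).indicator fun x =>
    ((h ^ α.card)⁻¹ * (h ^ (N - α.card))⁻¹ : ℝ) •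
      (show V M from WithLp.toLp 2 (A.mulVec
        (show Fin M → ℂ from ∫ y in cube N h, u (a j + combine α y (x - a i)))))

/-- The operator `∑_{α ⊆ {1,...,N}} ∑_{i,j=1}^S 𝓔_{ij}^α[coef α i j]`. -/
def bigSum {N M S : ℕ} {a : Fin S → Fin N → ℝ} {h : ℝ}
    (EE : Fin S → Fin S → Finset (Fin N) → Matrix (Fin M) (Fin M) ℂ →
      (Lp (V M) 2 (volume.restrict (Omega a h)) →L[ℂ]
        Lp (V M) 2 (volume.restrict (Omega a h))))
    (coef : Finset (Fin N) → Fin S → Fin S → Matrix (Fin M) (Fin M) ℂ) :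
    Lp (V M) 2 (volume.restrict (Omega a h)) →L[ℂ]
      Lp (V M) 2 (volume.restrict (Omega a h)) :=
  ∑ α : Finset (Fin N), ∑ i : Fin S, ∑ j : Fin S, EE i j α (coef α i j)

/-- The block matrix `(𝐀_{ij})_{i,j=1}^S ∈ ℂ^{MS×MS}` built from an `S×S` array
of `M×M` matrices. -/
def blockM {M S : ℕ} (c : Fin S → Fin S → Matrix (Fin M) (Fin M) ℂ) :
    Matrix (Fin S × Fin M) (Fin S × Fin M) ℂ :=
  Matrix.of fun p q => c p.1 q.1 p.2 q.2

/-- The uniform probability measure on `[0,h)^N`. -/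
def cubeMeasure (N : ℕ) (h : ℝ) : Measure (Fin N → ℝ) :=
  Measure.pi fun _ => (ENNReal.ofReal h)⁻¹ • (volume : Measure ℝ).restrict (Set.Ico 0 h)

/-- Exchange the coordinates in `α` between the two components of a pair. -/
def exchange {N : ℕ} (α : Finset (Fin N)) (p : (Fin N → ℝ) × (Fin N → ℝ)) :
    (Fin N → ℝ) × (Fin N → ℝ) :=
  (combine α p.2 p.1, combine α p.1 p.2)

lemma exchange_exchange {N : ℕ} (α : Finset (Fin N)) (p : (Fin N → ℝ) × (Fin N → ℝ)) :
    exchange α (exchange α p) = p := by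
  ext n <;> by_cases hn : n ∈ α <;> simp [exchange, combine, hn]

lemma combine_combine {N : ℕ} (α β : Finset (Fin N)) (x y z : Fin N → ℝ) :
    combine β z (combine α y x) = combine (α ∪ β) (combine β z y) x := by
  ext n
  by_cases hα : n ∈ α <;> by_cases hβ : n ∈ β <;> simp [combine, hα, hβ]

lemma combine_empty {N : ℕ} (x y : Fin N → ℝ) : combine ∅ y x = x := by
  ext n
  simp [combine]

lemma integrable_inner_of_memLp {X E : Type*} [MeasurableSpace X] {μ : Measure X}
    [NormedAddCommGroup E] [InnerProductSpace ℂ E] {f g : X → E} (hf : MemLp f 2 μ)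
    (hg : MemLp g 2 μ) : Integrable (fun x => inner ℂ (f x) (g x)) μ := by
  refine (L2.integrable_inner (hf.toLp f) (hg.toLp g)).congr ?_
  filter_upwards [hf.coeFn_toLp, hg.coeFn_toLp] with x h₁ h₂
  rw [h₁, h₂]

lemma isProbabilityMeasure_uniform {h : ℝ} (hh : 0 < h) :
    IsProbabilityMeasure
      ((ENNReal.ofReal h)⁻¹ • (volume : Measure ℝ).restrict (Set.Ico 0 h)) := by
  constructor
  simp only [Measure.smul_apply, MeasurableSet.univ, Measure.restrict_apply, Set.univ_inter,
    Real.volume_Ico, sub_zero, smul_eq_mul]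
  exact ENNReal.inv_mul_cancel (by simpa using hh) ENNReal.ofReal_ne_top

lemma isProbabilityMeasure_cubeMeasure (N : ℕ) {h : ℝ} (hh : 0 < h) :
    IsProbabilityMeasure (cubeMeasure N h) := by
  have := isProbabilityMeasure_uniform hh
  unfold cubeMeasure
  infer_instance

lemma restrict_cube (N : ℕ) {h : ℝ} (hh : 0 < h) :
    (volume : Measure (Fin N → ℝ)).restrict (cube N h) =
      ENNReal.ofReal h ^ N • cubeMeasure N h := by
  have := isProbabilityMeasure_uniform hh
  rw [cube, volume_pi, Measure.restrict_pi_pi]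
  refine (Measure.pi_eq fun s _ => ?_)
  have h0 : ENNReal.ofReal h ≠ 0 := by simpa using hh
  simp only [cubeMeasure, Measure.smul_apply, smul_eq_mul, Measure.pi_pi, Finset.prod_mul_distrib,
    Finset.prod_const, Finset.card_univ, Fintype.card_fin]
  rw [← mul_assoc, ← mul_pow, ENNReal.mul_inv_cancel h0 ENNReal.ofReal_ne_top, one_pow, one_mul]

lemma setIntegral_cube {E : Type*} [NormedAddCommGroup E] [NormedSpace ℝ E] (N : ℕ) {h : ℝ}
    (hh : 0 < h) (f : (Fin N → ℝ) → E) :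
    ∫ x in cube N h, f x = h ^ N • ∫ x, f x ∂cubeMeasure N h := by
  rw [restrict_cube N hh, integral_smul_measure]
  simp [ENNReal.toReal_ofReal hh.le]

lemma ae_restrict_cube_iff {N : ℕ} {h : ℝ} (hh : 0 < h) {p : (Fin N → ℝ) → Prop} :
    (∀ᵐ x ∂(volume : Measure (Fin N → ℝ)).restrict (cube N h), p x) ↔
      ∀ᵐ x ∂cubeMeasure N h, p x := by
  rw [restrict_cube N hh, Measure.ae_ennreal_smul_measure_iff]
  exact pow_ne_zero _ (by simpa using hh)

lemma measurableSet_cube (N : ℕ) (h : ℝ) : MeasurableSet (cube N h) :=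
  MeasurableSet.univ_pi fun _ => measurableSet_Ico

lemma ae_mem_cube (N : ℕ) {h : ℝ} (hh : 0 < h) : ∀ᵐ x ∂cubeMeasure N h, x ∈ cube N h :=
  (ae_restrict_cube_iff hh).1 (ae_restrict_mem (measurableSet_cube N h))

lemma measurePreserving_exchange {N : ℕ} {h : ℝ} (hh : 0 < h) (α : Finset (Fin N)) :
    MeasurePreserving (exchange α) ((cubeMeasure N h).prod (cubeMeasure N h))
      ((cubeMeasure N h).prod (cubeMeasure N h)) := by
  have := isProbabilityMeasure_uniform hh
  set κ := (ENNReal.ofReal h)⁻¹ • (volume : Measure ℝ).restrict (Set.Ico 0 h) with hκ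
  have harrow := measurePreserving_arrowProdEquivProdArrow ℝ ℝ (Fin N) (fun _ => κ) (fun _ => κ)
  have hswap : MeasurePreserving
      (fun (q : Fin N → ℝ × ℝ) n => (if n ∈ α then Prod.swap else id) (q n))
      (Measure.pi fun _ => κ.prod κ) (Measure.pi fun _ => κ.prod κ) := by
    refine measurePreserving_pi (fun _ => κ.prod κ) (fun _ => κ.prod κ)
      (f := fun n => if n ∈ α then Prod.swap else id) fun n => ?_
    by_cases hn : n ∈ α
    · simpa [hn] using Measure.measurePreserving_swap (μ := κ) (ν := κ)
    · simpa [hn] using MeasurePreserving.id (κ.prod κ)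
  have hcomp := harrow.comp (hswap.comp (harrow.symm _))
  change MeasurePreserving (exchange α) ((Measure.pi fun _ => κ).prod (Measure.pi fun _ => κ))
    ((Measure.pi fun _ => κ).prod (Measure.pi fun _ => κ))
  convert hcomp using 1
  funext p
  ext n <;> by_cases hn : n ∈ α <;>
    simp [exchange, combine, hn, MeasurableEquiv.arrowProdEquivProdArrow,
      Equiv.arrowProdEquivProdArrow]

lemma measurable_combine {N : ℕ} (α : Finset (Fin N)) :
    Measurable fun p : (Fin N → ℝ) × (Fin N → ℝ) => combine α p.1 p.2 := by
  refine measurable_pi_iff.2 fun n => ?_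
  by_cases hn : n ∈ α <;> simp only [combine, hn, if_true, if_false] <;> fun_prop

lemma measurableEmbedding_exchange {N : ℕ} (α : Finset (Fin N)) :
    MeasurableEmbedding (exchange α) := by
  have hmeas : Measurable (exchange α) :=
    ((measurable_combine α).comp measurable_swap).prodMk (measurable_combine α)
  exact MeasurableEquiv.measurableEmbedding
    ⟨(Function.Involutive.toPerm _ (exchange_exchange α)), hmeas, hmeas⟩

lemma measurePreserving_combine {N : ℕ} {h : ℝ} (hh : 0 < h) (α : Finset (Fin N)) :
    MeasurePreserving (fun p : (Fin N → ℝ) × (Fin N → ℝ) => combine α p.1 p.2)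
      ((cubeMeasure N h).prod (cubeMeasure N h)) (cubeMeasure N h) := by
  have := isProbabilityMeasure_cubeMeasure N hh
  exact measurePreserving_snd.comp (measurePreserving_exchange hh α)

lemma ae_ae_combine {N : ℕ} {h : ℝ} (hh : 0 < h) (α : Finset (Fin N)) {p : (Fin N → ℝ) → Prop}
    (hp : ∀ᵐ x ∂cubeMeasure N h, p x) :
    ∀ᵐ x ∂cubeMeasure N h, ∀ᵐ y ∂cubeMeasure N h, p (combine α y x) := by
  have := isProbabilityMeasure_cubeMeasure N hh
  have hprod := (measurePreserving_combine hh α).quasiMeasurePreserving.ae hp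
  exact Measure.ae_ae_of_ae_prod (Measure.measurePreserving_swap.quasiMeasurePreserving.ae hprod)

lemma ae_integrable_combine {N : ℕ} {h : ℝ} (hh : 0 < h) {E : Type*} [NormedAddCommGroup E]
    (α : Finset (Fin N)) {f : (Fin N → ℝ) → E} (hf : Integrable f (cubeMeasure N h)) :
    ∀ᵐ x ∂cubeMeasure N h, Integrable (fun y => f (combine α y x)) (cubeMeasure N h) := by
  have := isProbabilityMeasure_cubeMeasure N hh
  exact ((measurePreserving_combine hh α).integrable_comp_of_integrable hf).prod_left_ae

lemma integral_integral_combine {N : ℕ} {h : ℝ} (hh : 0 < h) {E : Type*} [NormedAddCommGroup E]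
    [NormedSpace ℝ E] (β : Finset (Fin N)) {f : (Fin N → ℝ) → E}
    (hf : Integrable f (cubeMeasure N h)) :
    ∫ y, ∫ z, f (combine β z y) ∂cubeMeasure N h ∂cubeMeasure N h =
      ∫ w, f w ∂cubeMeasure N h := by
  have := isProbabilityMeasure_cubeMeasure N hh
  have hmp := measurePreserving_combine hh β
  have hint_comp := hmp.integrable_comp_of_integrable hf
  rw [← hmp.map_eq] at hf ⊢
  rw [integral_map hmp.measurable.aemeasurable hf.aestronglyMeasurable, hmp.map_eq]
  exact (integral_prod_symm _ hint_comp).symm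

section Omega

variable {N M S : ℕ} {a : Fin S → Fin N → ℝ} {h : ℝ}

lemma measurePreserving_shift (a : Fin S → Fin N → ℝ) (h : ℝ) (i : Fin S) :
    MeasurePreserving (fun x => a i + x)
      ((volume : Measure (Fin N → ℝ)).restrict (cube N h))
      ((volume : Measure (Fin N → ℝ)).restrict (OmegaI a h i)) := by
  have hpre : cube N h = (fun x => a i + x) ⁻¹' OmegaI a h i := by
    ext x; simp [OmegaI]
  rw [hpre]
  refine (measurePreserving_add_left volume (a i)).restrict_preimage ?_
  exact (measurable_id.sub_const (a i)) (measurableSet_cube N h)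

lemma measurableSet_OmegaI (a : Fin S → Fin N → ℝ) (h : ℝ) (i : Fin S) :
    MeasurableSet (OmegaI a h i) :=
  (measurable_id.sub_const (a i)) (measurableSet_cube N h)

lemma measurableEmbedding_shift (b : Fin N → ℝ) : MeasurableEmbedding (fun x => b + x) :=
  (MeasurableEquiv.addLeft b).measurableEmbedding

lemma ae_Omega_iff (hh : 0 < h) {p : (Fin N → ℝ) → Prop} :
    (∀ᵐ x ∂(volume : Measure (Fin N → ℝ)).restrict (Omega a h), p x) ↔
      ∀ i, ∀ᵐ x ∂cubeMeasure N h, p (a i + x) := by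
  rw [Omega, ae_restrict_iUnion_iff]
  refine forall_congr' fun i => ?_
  rw [← ae_restrict_cube_iff hh, ← (measurePreserving_shift a h i).map_eq,
    (measurableEmbedding_shift (a i)).ae_map_iff]

lemma memLp_shift (hh : 0 < h) {E : Type*} [NormedAddCommGroup E] {f : (Fin N → ℝ) → E}
    (hf : MemLp f 2 ((volume : Measure (Fin N → ℝ)).restrict (Omega a h))) (i : Fin S) :
    MemLp (fun x => f (a i + x)) 2 (cubeMeasure N h) := by
  have hi : MemLp f 2 ((volume : Measure (Fin N → ℝ)).restrict (OmegaI a h i)) :=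
    hf.mono_measure (Measure.restrict_mono (Set.subset_iUnion _ i) le_rfl)
  have hc := hi.comp_measurePreserving (measurePreserving_shift a h i)
  rw [restrict_cube N hh] at hc
  have h0 : ENNReal.ofReal h ^ N ≠ 0 := pow_ne_zero _ (by simpa using hh)
  have ht : ENNReal.ofReal h ^ N ≠ ⊤ := ENNReal.pow_ne_top ENNReal.ofReal_ne_top
  have hs := hc.smul_measure (ENNReal.inv_ne_top.2 h0)
  rwa [smul_smul, ENNReal.inv_mul_cancel h0 ht, one_smul] at hs

lemma integral_Omega (hh : 0 < h)
    (hdisj : ∀ i j : Fin S, i ≠ j → Disjoint (OmegaI a h i) (OmegaI a h j))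
    {E : Type*} [NormedAddCommGroup E] [NormedSpace ℝ E] {f : (Fin N → ℝ) → E}
    (hf : Integrable f ((volume : Measure (Fin N → ℝ)).restrict (Omega a h))) :
    ∫ x in Omega a h, f x = h ^ N • ∑ i, ∫ x, f (a i + x) ∂cubeMeasure N h := by
  rw [Omega, integral_iUnion (measurableSet_OmegaI a h) (fun i j hij => hdisj i j hij) hf,
    tsum_fintype, Finset.smul_sum]
  refine Finset.sum_congr rfl fun i _ => ?_
  rw [← setIntegral_cube N hh,
    (measurePreserving_shift a h i).integral_comp (measurableEmbedding_shift (a i))]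

lemma shift_mem_OmegaI_iff
    (hdisj : ∀ i j : Fin S, i ≠ j → Disjoint (OmegaI a h i) (OmegaI a h j))
    {x : Fin N → ℝ} (hx : x ∈ cube N h) (k i : Fin S) :
    a k + x ∈ OmegaI a h i ↔ k = i := by
  have hk : a k + x ∈ OmegaI a h k := by simpa [OmegaI] using hx
  constructor
  · intro hi
    by_contra hne
    exact Set.disjoint_left.1 (hdisj k i hne) hk hi
  · rintro rfl
    exact hk

lemma Efun_shift (hh : 0 < h)
    (hdisj : ∀ i j : Fin S, i ≠ j → Disjoint (OmegaI a h i) (OmegaI a h j))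
    (i j k : Fin S) (α : Finset (Fin N)) (A : Matrix (Fin M) (Fin M) ℂ)
    (u : (Fin N → ℝ) → V M) {x : Fin N → ℝ} (hx : x ∈ cube N h) :
    Efun a h i j α A u (a k + x) =
      if k = i then
        Matrix.toEuclideanCLM (𝕜 := ℂ) A (∫ y, u (a j + combine α y x) ∂cubeMeasure N h)
      else 0 := by
  by_cases hki : k = i
  · subst hki
    have hmem := (shift_mem_OmegaI_iff hdisj hx k k).2 rfl
    have hofLp : ∫ y in cube N h, (u (a j + combine α y x)).ofLp =
        (∫ y in cube N h, u (a j + combine α y x)).ofLp :=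
      (PiLp.continuousLinearEquiv 2 ℂ (fun _ : Fin M => ℂ)).integral_comp_comm _
    have hcard : (h ^ α.card)⁻¹ * (h ^ (N - α.card))⁻¹ * h ^ N = 1 := by
      have hle : α.card ≤ N := by simpa using α.card_le_univ
      rw [← mul_inv, ← pow_add, Nat.add_sub_cancel' hle]
      exact inv_mul_cancel₀ (pow_ne_zero _ hh.ne')
    rw [Efun, Set.indicator_of_mem hmem, if_pos rfl]
    simp only [add_sub_cancel_left]
    rw [hofLp, setIntegral_cube N hh]
    have hlin : WithLp.toLp 2
        (A.mulVec (h ^ N • ∫ y, u (a j + combine α y x) ∂cubeMeasure N h).ofLp) =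
        h ^ N • Matrix.toEuclideanCLM (𝕜 := ℂ) A
            (∫ y, u (a j + combine α y x) ∂cubeMeasure N h) := by
      rw [← Matrix.toEuclideanCLM_toLp, WithLp.toLp_ofLp,
        ContinuousLinearMap.map_smul_of_tower]
    rw [hlin, smul_smul, hcard, one_smul]
  · rw [Efun, Set.indicator_of_notMem (fun hm => hki ((shift_mem_OmegaI_iff hdisj hx k i).1 hm)),
      if_neg hki]

variable (M a h) in
/-- The Hilbert space `L²(Ω → ℂ^M)`. -/
abbrev L2Omega := Lp (V M) 2 ((volume : Measure (Fin N → ℝ)).restrict (Omega a h))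

/-- `T` is the elementary operator `𝓔_{ij}^α[𝐀]`. -/
def IsElementary (i j : Fin S) (α : Finset (Fin N)) (A : Matrix (Fin M) (Fin M) ℂ)
    (T : L2Omega M a h →L[ℂ] L2Omega M a h) : Prop :=
  ∀ u : L2Omega M a h, (T u : (Fin N → ℝ) → V M)
    =ᵐ[(volume : Measure (Fin N → ℝ)).restrict (Omega a h)] Efun a h i j α A u

lemma ae_shift_of_ae_eq (hh : 0 < h) {E : Type*} {f g : (Fin N → ℝ) → E}
    (hfg : f =ᵐ[(volume : Measure (Fin N → ℝ)).restrict (Omega a h)] g) (k : Fin S) :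
    ∀ᵐ x ∂cubeMeasure N h, f (a k + x) = g (a k + x) :=
  (ae_Omega_iff hh).1 hfg k

lemma L2Omega_ext (hh : 0 < h) {u v : L2Omega M a h}
    (huv : ∀ k, ∀ᵐ x ∂cubeMeasure N h, u (a k + x) = v (a k + x)) : u = v :=
  Lp.ext ((ae_Omega_iff hh).2 huv)

lemma ae_shift_add (hh : 0 < h) (u v : L2Omega M a h) (k : Fin S) :
    ∀ᵐ x ∂cubeMeasure N h, (u + v) (a k + x) = u (a k + x) + v (a k + x) :=
  ae_shift_of_ae_eq hh (Lp.coeFn_add u v) k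

lemma ae_shift_smul (hh : 0 < h) (c : ℂ) (u : L2Omega M a h) (k : Fin S) :
    ∀ᵐ x ∂cubeMeasure N h, (c • u) (a k + x) = c • u (a k + x) :=
  ae_shift_of_ae_eq hh (Lp.coeFn_smul c u) k

lemma ae_shift_zero (hh : 0 < h) (k : Fin S) :
    ∀ᵐ x ∂cubeMeasure N h, (0 : L2Omega M a h) (a k + x) = 0 :=
  ae_shift_of_ae_eq hh (Lp.coeFn_zero _ _ _) k

lemma ae_shift_sum (hh : 0 < h) {ι : Type*} (s : Finset ι) (f : ι → L2Omega M a h)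
    (k : Fin S) :
    ∀ᵐ x ∂cubeMeasure N h, (∑ b ∈ s, f b) (a k + x) = ∑ b ∈ s, f b (a k + x) := by
  classical
  induction s using Finset.induction_on with
  | empty => simpa using ae_shift_zero hh k
  | insert b s hb ih =>
    rw [Finset.sum_insert hb]
    filter_upwards [ih, ae_shift_add hh (f b) (∑ b ∈ s, f b) k] with x h₁ h₂
    rw [h₂, h₁, Finset.sum_insert hb]

lemma memLp_two_shift (hh : 0 < h) (u : L2Omega M a h) (k : Fin S) :
    MemLp (fun x => u (a k + x)) 2 (cubeMeasure N h) :=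
  memLp_shift hh (Lp.memLp u) k

lemma integrable_shift (hh : 0 < h) (u : L2Omega M a h) (k : Fin S) :
    Integrable (fun x => u (a k + x)) (cubeMeasure N h) := by
  have := isProbabilityMeasure_cubeMeasure N hh
  exact (memLp_two_shift hh u k).integrable one_le_two

namespace IsElementary

variable {i j k l : Fin S} {α β : Finset (Fin N)} {A B : Matrix (Fin M) (Fin M) ℂ}
  {T U W : L2Omega M a h →L[ℂ] L2Omega M a h}

lemma apply_shift (hT : IsElementary i j α A T) (hh : 0 < h)
    (hdisj : ∀ i j : Fin S, i ≠ j → Disjoint (OmegaI a h i) (OmegaI a h j))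
    (u : L2Omega M a h) (k : Fin S) :
    ∀ᵐ x ∂cubeMeasure N h, T u (a k + x) =
      if k = i then
        Matrix.toEuclideanCLM (𝕜 := ℂ) A (∫ y, u (a j + combine α y x) ∂cubeMeasure N h)
      else 0 := by
  filter_upwards [ae_shift_of_ae_eq hh (hT u) k, ae_mem_cube N hh] with x hx hxc
  rw [hx, Efun_shift hh hdisj i j k α A u hxc]

lemma add (hT : IsElementary i j α A T) (hU : IsElementary i j α B U)
    (hW : IsElementary i j α (A + B) W) (hh : 0 < h)
    (hdisj : ∀ i j : Fin S, i ≠ j → Disjoint (OmegaI a h i) (OmegaI a h j)) :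
    W = T + U := by
  ext1 u
  refine L2Omega_ext hh fun k => ?_
  rw [add_apply]
  filter_upwards [hT.apply_shift hh hdisj u k, hU.apply_shift hh hdisj u k,
    hW.apply_shift hh hdisj u k, ae_shift_add hh (T u) (U u) k] with x h₁ h₂ h₃ h₄
  rw [h₄, h₁, h₂, h₃]
  split_ifs <;> simp

lemma smul {c : ℂ} (hT : IsElementary i j α A T) (hW : IsElementary i j α (c • A) W)
    (hh : 0 < h)
    (hdisj : ∀ i j : Fin S, i ≠ j → Disjoint (OmegaI a h i) (OmegaI a h j)) :
    W = c • T := by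
  ext1 u
  refine L2Omega_ext hh fun k => ?_
  rw [smul_apply]
  filter_upwards [hT.apply_shift hh hdisj u k, hW.apply_shift hh hdisj u k,
    ae_shift_smul hh c (T u) k] with x h₁ h₂ h₃
  rw [h₃, h₁, h₂]
  split_ifs <;> simp

lemma mul (hT : IsElementary i j α A T) (hU : IsElementary k l β B U)
    (hW : IsElementary i l (α ∪ β) (A * B) W) (hh : 0 < h)
    (hdisj : ∀ i j : Fin S, i ≠ j → Disjoint (OmegaI a h i) (OmegaI a h j)) :
    T * U = if j = k then W else 0 := by
  have := isProbabilityMeasure_cubeMeasure N hh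
  ext1 u
  refine L2Omega_ext hh fun m => ?_
  rw [mul_apply_eq_comp]
  have hinner := ae_ae_combine hh α (hU.apply_shift hh hdisj u j)
  have hint_comp := ae_integrable_combine hh (α ∪ β) (integrable_shift hh u l)
  have hint_inner := ae_ae_combine hh α (ae_integrable_combine hh β (integrable_shift hh u l))
  by_cases hjk : j = k
  · simp only [if_pos hjk] at hinner ⊢
    filter_upwards [hT.apply_shift hh hdisj (U u) m, hW.apply_shift hh hdisj u m, hinner, hint_comp,
      hint_inner] with x h₁ h₂ h₃ h₄ h₅
    rw [h₁, h₂]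
    split_ifs
    · rw [map_mul, mul_apply_eq_comp]
      congr 1
      set L := Matrix.toEuclideanCLM (𝕜 := ℂ) B
      have hpull : ∀ᵐ y ∂cubeMeasure N h,
          U u (a j + combine α y x) =
            ∫ z, L (u (a l + combine (α ∪ β) (combine β z y) x)) ∂cubeMeasure N h := by
        filter_upwards [h₃, h₅] with y hy hy'
        rw [hy, ← L.integral_comp_comm hy']
        simp only [combine_combine]
      rw [integral_congr_ae hpull,
        integral_integral_combine hh β (f := fun w => L (u (a l + combine (α ∪ β) w x)))
          (L.integrable_comp h₄), L.integral_comp_comm h₄]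
    · rfl
  · simp only [if_neg hjk] at hinner ⊢
    rw [zero_apply]
    filter_upwards [hT.apply_shift hh hdisj (U u) m, ae_shift_zero hh m, hinner] with x h₁ h₂ h₃
    rw [h₁, h₂, integral_congr_ae h₃]
    simp

lemma one_eq_sum {T : Fin S → L2Omega M a h →L[ℂ] L2Omega M a h}
    (hT : ∀ i, IsElementary i i ∅ 1 (T i)) (hh : 0 < h)
    (hdisj : ∀ i j : Fin S, i ≠ j → Disjoint (OmegaI a h i) (OmegaI a h j)) :
    1 = ∑ i, T i := by
  have := isProbabilityMeasure_cubeMeasure N hh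
  ext1 u
  refine L2Omega_ext hh fun k => ?_
  rw [_root_.sum_apply, one_apply_eq_self]
  have hall := ae_all_iff.2 fun i => (hT i).apply_shift hh hdisj u k
  filter_upwards [ae_shift_sum hh Finset.univ (fun i => T i u) k, hall] with x h₁ h₂
  rw [h₁]
  simp [h₂, combine_empty]

lemma inner_eq (hT : IsElementary i j α A T) (hh : 0 < h)
    (hdisj : ∀ i j : Fin S, i ≠ j → Disjoint (OmegaI a h i) (OmegaI a h j))
    (u v : L2Omega M a h) :
    inner ℂ v (T u) = h ^ N • ∫ p, inner ℂ (v (a i + p.2))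
      (Matrix.toEuclideanCLM (𝕜 := ℂ) A (u (a j + combine α p.1 p.2)))
        ∂(cubeMeasure N h).prod (cubeMeasure N h) := by
  have := isProbabilityMeasure_cubeMeasure N hh
  set L := Matrix.toEuclideanCLM (𝕜 := ℂ) A
  have hu : MemLp (fun p : (Fin N → ℝ) × (Fin N → ℝ) => L (u (a j + combine α p.1 p.2))) 2
      ((cubeMeasure N h).prod (cubeMeasure N h)) :=
    L.comp_memLp' ((memLp_two_shift hh u j).comp_measurePreserving (measurePreserving_combine hh α))
  have hv : MemLp (fun p : (Fin N → ℝ) × (Fin N → ℝ) => v (a i + p.2)) 2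
      ((cubeMeasure N h).prod (cubeMeasure N h)) :=
    (memLp_two_shift hh v i).comp_measurePreserving measurePreserving_snd
  rw [L2.inner_def, integral_Omega hh hdisj (L2.integrable_inner v (T u)),
    integral_prod_symm _ (integrable_inner_of_memLp hv hu), Finset.sum_eq_single i]
  · congr 1
    refine integral_congr_ae ?_
    filter_upwards [hT.apply_shift hh hdisj u i,
      ae_integrable_combine hh α (integrable_shift hh u j)] with x h₁ h₂
    rw [h₁, if_pos rfl, ← L.integral_comp_comm h₂, integral_inner (L.integrable_comp h₂)]
  · intro k _ hk
    refine integral_eq_zero_of_ae ?_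
    filter_upwards [hT.apply_shift hh hdisj u k] with x h₁
    simp [h₁, hk]
  · simp

lemma star_eq (hT : IsElementary i j α A T) (hU : IsElementary j i α A.conjTranspose U)
    (hh : 0 < h)
    (hdisj : ∀ i j : Fin S, i ≠ j → Disjoint (OmegaI a h i) (OmegaI a h j)) :
    star T = U := by
  have := isProbabilityMeasure_cubeMeasure N hh
  rw [ContinuousLinearMap.star_eq_adjoint]
  symm
  rw [ContinuousLinearMap.eq_adjoint_iff]
  intro v u
  rw [hT.inner_eq hh hdisj u v, ← inner_conj_symm, hU.inner_eq hh hdisj v u,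
    Complex.real_smul, Complex.real_smul, map_mul, Complex.conj_ofReal, ← integral_conj,
    ← (measurePreserving_exchange hh α).integral_comp (measurableEmbedding_exchange α)]
  congr 2
  funext p
  have hcomb : combine α (exchange α p).1 (exchange α p).2 = p.2 :=
    congrArg Prod.snd (exchange_exchange α p)
  rw [hcomb, inner_conj_symm, ← Matrix.star_eq_conjTranspose, map_star,
    ContinuousLinearMap.star_eq_adjoint, ContinuousLinearMap.adjoint_inner_left]
  rfl

end IsElementary

/-- The mean-zero sign function `1` on `(-∞, h/2)` and `-1` on `[h/2, ∞)`. -/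
def halfSign (h t : ℝ) : ℂ := if t < h / 2 then 1 else -1

lemma measurable_halfSign (h : ℝ) : Measurable (halfSign h) :=
  Measurable.ite measurableSet_Iio measurable_const measurable_const

lemma norm_halfSign (h t : ℝ) : ‖halfSign h t‖ = 1 := by
  unfold halfSign
  split_ifs <;> simp

lemma integral_halfSign (hh : 0 < h) :
    ∫ t, halfSign h t ∂((ENNReal.ofReal h)⁻¹ • (volume : Measure ℝ).restrict (Set.Ico 0 h)) =
      0 := by
  have hleft : Set.EqOn (halfSign h) (fun _ => 1) (Set.Ico 0 (h / 2)) :=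
    fun t ht => if_pos ht.2
  have hright : Set.EqOn (halfSign h) (fun _ => -1) (Set.Ico (h / 2) h) :=
    fun t ht => if_neg (not_lt.2 ht.1)
  rw [integral_smul_measure, ← Set.Ico_union_Ico_eq_Ico (by positivity : 0 ≤ h / 2) (by linarith),
    setIntegral_union (Set.Ico_disjoint_Ico_same) measurableSet_Ico
      ((integrableOn_congr_fun hleft measurableSet_Ico).2 (by simp))
      ((integrableOn_congr_fun hright measurableSet_Ico).2 (by simp)),
    setIntegral_congr_fun measurableSet_Ico hleft, setIntegral_congr_fun measurableSet_Ico hright]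
  have hhalf : h - h / 2 = h / 2 := by ring
  simp [hhalf]

/-- The product of `halfSign` over the coordinates in `γ`. -/
def walsh (h : ℝ) (γ : Finset (Fin N)) (x : Fin N → ℝ) : ℂ :=
  ∏ n, if n ∈ γ then halfSign h (x n) else 1

lemma norm_walsh (h : ℝ) (γ : Finset (Fin N)) (x : Fin N → ℝ) : ‖walsh h γ x‖ = 1 := by
  rw [walsh, norm_prod]
  refine Finset.prod_eq_one fun n _ => ?_
  split_ifs
  · exact norm_halfSign h _
  · exact norm_one

lemma walsh_ne_zero (h : ℝ) (γ : Finset (Fin N)) (x : Fin N → ℝ) : walsh h γ x ≠ 0 := by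
  rw [← norm_ne_zero_iff, norm_walsh]
  exact one_ne_zero

lemma measurable_walsh (h : ℝ) (γ : Finset (Fin N)) : Measurable (walsh h γ) := by
  refine Finset.measurable_fun_prod _ fun n _ => ?_
  split_ifs
  · exact (measurable_halfSign h).comp (measurable_pi_apply n)
  · exact measurable_const

lemma integral_walsh_combine (hh : 0 < h) (α γ : Finset (Fin N)) (x : Fin N → ℝ) :
    ∫ y, walsh h γ (combine α y x) ∂cubeMeasure N h =
      if Disjoint α γ then walsh h γ x else 0 := by
  have := isProbabilityMeasure_uniform hh
  have hprod := integral_fintype_prod_eq_prod (𝕜 := ℂ)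
    (fun (n : Fin N) (t : ℝ) => if n ∈ γ then halfSign h (if n ∈ α then t else x n) else 1)
    (μ := fun _ => (ENNReal.ofReal h)⁻¹ • (volume : Measure ℝ).restrict (Set.Ico 0 h))
  refine Eq.trans hprod ?_
  split_ifs with hd
  · refine Finset.prod_congr rfl fun n _ => ?_
    by_cases hγ : n ∈ γ
    · have hα : n ∉ α := Finset.disjoint_right.1 hd hγ
      simp [hα, hγ]
    · simp [hγ]
  · obtain ⟨n, hα, hγ⟩ := Finset.not_disjoint_iff.1 hd
    refine Finset.prod_eq_zero (Finset.mem_univ n) ?_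
    simpa only [hα, hγ, if_true] using integral_halfSign hh

variable (a) in
/-- The function equal to `walsh γ ⊗ e` on the shifted cube `Ω_j` and zero elsewhere. -/
def walshOn (h : ℝ) (γ : Finset (Fin N)) (j : Fin S) (e : V M) : (Fin N → ℝ) → V M :=
  (OmegaI a h j).indicator fun x => walsh h γ (x - a j) • e

lemma isFiniteMeasure_Omega (hh : 0 < h) :
    IsFiniteMeasure ((volume : Measure (Fin N → ℝ)).restrict (Omega a h)) := by
  have := isProbabilityMeasure_cubeMeasure N hh
  refine ⟨?_⟩
  rw [Measure.restrict_apply_univ]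
  refine (measure_iUnion_le _).trans_lt ?_
  rw [tsum_fintype]
  refine ENNReal.sum_lt_top.2 fun i _ => ?_
  rw [← Measure.restrict_apply_univ, ← (measurePreserving_shift a h i).map_eq,
    Measure.map_apply (measurePreserving_shift a h i).measurable MeasurableSet.univ,
    restrict_cube N hh]
  simp only [Set.preimage_univ, Measure.smul_apply, measure_univ, smul_eq_mul, mul_one]
  exact ENNReal.pow_lt_top ENNReal.ofReal_lt_top

lemma memLp_walshOn (hh : 0 < h) (γ : Finset (Fin N)) (j : Fin S) (e : V M) :
    MemLp (walshOn a h γ j e) 2 ((volume : Measure (Fin N → ℝ)).restrict (Omega a h)) := by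
  have := isFiniteMeasure_Omega (a := a) hh
  have hmeas : Measurable (walshOn a h γ j e) :=
    (((measurable_walsh h γ).comp (measurable_id.sub_const (a j))).smul_const e).indicator
      (measurableSet_OmegaI a h j)
  refine MemLp.of_bound hmeas.aestronglyMeasurable ‖e‖ (ae_of_all _ fun x => ?_)
  refine (norm_indicator_le_norm_self _ _).trans ?_
  rw [norm_smul, norm_walsh, one_mul]

lemma ae_walshOn_shift (hh : 0 < h)
    (hdisj : ∀ i j : Fin S, i ≠ j → Disjoint (OmegaI a h i) (OmegaI a h j))
    (γ : Finset (Fin N)) (j : Fin S) (e : V M) (k : Fin S) :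
    ∀ᵐ x ∂cubeMeasure N h, (memLp_walshOn hh γ j e).toLp (walshOn a h γ j e) (a k + x) =
      if k = j then walsh h γ x • e else 0 := by
  filter_upwards [ae_shift_of_ae_eq hh (memLp_walshOn (a := a) hh γ j e).coeFn_toLp k,
    ae_mem_cube N hh] with x hx hxc
  classical
  rw [hx, walshOn, Set.indicator_apply]
  simp only [shift_mem_OmegaI_iff hdisj hxc]
  split_ifs with hkj
  · rw [hkj, add_sub_cancel_left]
  · rfl

lemma IsElementary.apply_walshOn {i j : Fin S} {α : Finset (Fin N)}
    {A : Matrix (Fin M) (Fin M) ℂ} {T : L2Omega M a h →L[ℂ] L2Omega M a h}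
    (hT : IsElementary i j α A T) (hh : 0 < h)
    (hdisj : ∀ i j : Fin S, i ≠ j → Disjoint (OmegaI a h i) (OmegaI a h j))
    (γ : Finset (Fin N)) (l : Fin S) (e : V M) (k : Fin S) :
    ∀ᵐ x ∂cubeMeasure N h, T ((memLp_walshOn hh γ l e).toLp (walshOn a h γ l e)) (a k + x) =
      if k = i then if j = l then if Disjoint α γ then
        walsh h γ x • Matrix.toEuclideanCLM (𝕜 := ℂ) A e else 0 else 0 else 0 := by
  filter_upwards [hT.apply_shift hh hdisj ((memLp_walshOn hh γ l e).toLp (walshOn a h γ l e)) k,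
    ae_ae_combine hh α (ae_walshOn_shift hh hdisj γ l e j)] with x h₁ h₂
  rw [h₁, integral_congr_ae h₂]
  by_cases hjl : j = l
  · simp only [hjl, if_true]
    rw [integral_smul_const, integral_walsh_combine hh]
    split_ifs <;> simp
  · simp [hjl]

lemma sum_disjoint_eq_zero_of_bigSum_eq_zero (hh : 0 < h)
    (hdisj : ∀ i j : Fin S, i ≠ j → Disjoint (OmegaI a h i) (OmegaI a h j))
    {EE : Fin S → Fin S → Finset (Fin N) → Matrix (Fin M) (Fin M) ℂ →
      (L2Omega M a h →L[ℂ] L2Omega M a h)}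
    (hEE : ∀ i j α A, IsElementary i j α A (EE i j α A))
    {coef : Finset (Fin N) → Fin S → Fin S → Matrix (Fin M) (Fin M) ℂ}
    (hcoef : bigSum EE coef = 0) (γ : Finset (Fin N)) (k l : Fin S) :
    ∑ α with Disjoint α γ, coef α k l = 0 := by
  have := isProbabilityMeasure_cubeMeasure N hh
  apply EquivLike.injective (Matrix.toEuclideanCLM (𝕜 := ℂ) (n := Fin M))
  ext1 e
  set u := (memLp_walshOn hh γ l e).toLp (walshOn a h γ l e)
  have hzero : ∀ᵐ x ∂cubeMeasure N h,
      (∑ α, ∑ i, ∑ j, EE i j α (coef α i j) u) (a k + x) = 0 := by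
    have happ : ∑ α, ∑ i, ∑ j, EE i j α (coef α i j) u = 0 := by
      simpa [bigSum, _root_.sum_apply] using congrArg (fun T => T u) hcoef
    rw [happ]
    exact ae_shift_zero hh k
  have hsum₁ := ae_shift_sum hh Finset.univ (fun α => ∑ i, ∑ j, EE i j α (coef α i j) u) k
  have hsum₂ := ae_all_iff.2 fun α =>
    ae_shift_sum hh Finset.univ (fun i => ∑ j, EE i j α (coef α i j) u) k
  have hsum₃ := ae_all_iff.2 fun α => ae_all_iff.2 fun i =>
    ae_shift_sum hh Finset.univ (fun j => EE i j α (coef α i j) u) k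
  have hterm := ae_all_iff.2 fun α => ae_all_iff.2 fun i => ae_all_iff.2 fun j =>
    (hEE i j α (coef α i j)).apply_walshOn hh hdisj γ l e k
  obtain ⟨x, h₀, h₁, h₂, h₃, h₄⟩ :=
    (hzero.and (hsum₁.and (hsum₂.and (hsum₃.and hterm)))).exists
  rw [h₁] at h₀
  simp only [h₂, h₃] at h₀
  simp only [u, h₄, Finset.sum_ite_irrel, Finset.sum_const_zero, Finset.sum_ite_eq, Finset.sum_ite_eq',
    Finset.mem_univ, if_true] at h₀
  rw [← Finset.sum_filter, ← Finset.smul_sum, smul_eq_zero] at h₀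
  simpa [_root_.sum_apply] using h₀.resolve_left (walsh_ne_zero h γ x)

/-- The linear map `(𝐀_α)_α ↦ (∑_{β ⊆ α} 𝐀_β)_α` on families of block matrices. -/
def zetaMap (N M S : ℕ) :
    (Finset (Fin N) → Fin S → Fin S → Matrix (Fin M) (Fin M) ℂ) →ₗ[ℂ]
      (Finset (Fin N) → Matrix (Fin S × Fin M) (Fin S × Fin M) ℂ) where
  toFun coef α := ∑ β ∈ α.powerset, blockM (coef β)
  map_add' c d := by
    ext α p q
    simp [blockM, Matrix.sum_apply, Finset.sum_add_distrib]
  map_smul' c d := by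
    ext α p q
    simp [blockM, Matrix.sum_apply, Finset.mul_sum]

lemma blockM_injective : Function.Injective (blockM (M := M) (S := S)) := by
  intro c d hcd
  ext i j m n
  exact congrFun (congrFun hcd (i, m)) (j, n)

lemma zetaMap_injective (N M S : ℕ) : Function.Injective (zetaMap N M S) := by
  rw [injective_iff_map_eq_zero]
  intro c hc
  funext α
  induction α using Finset.strongInduction with
  | H α ih =>
    have hα : ∑ β ∈ α.powerset, blockM (c β) = 0 := congrFun hc α
    rw [Finset.sum_eq_single α] at hα
    · exact blockM_injective hα
    · intro β hβ hne
      rw [ih β (Finset.ssubset_iff_subset_ne.2 ⟨Finset.mem_powerset.1 hβ, hne⟩)]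
      rfl
    · simp

lemma zetaMap_surjective (N M S : ℕ) : Function.Surjective (zetaMap N M S) := by
  refine (LinearMap.injective_iff_surjective_of_finrank_eq_finrank ?_).1 (zetaMap_injective N M S)
  simp only [Module.finrank_pi_fintype, Module.finrank_matrix, Module.finrank_self,
    Finset.sum_const, Finset.card_univ, Fintype.card_prod, Fintype.card_fin, smul_eq_mul]
  ring

/-- The coefficient family with the single entry `A` at `(α, i, j)`. -/
def singleCoef (i j : Fin S) (α : Finset (Fin N)) (A : Matrix (Fin M) (Fin M) ℂ) :
    Finset (Fin N) → Fin S → Fin S → Matrix (Fin M) (Fin M) ℂ :=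
  Pi.single α (Pi.single i (Pi.single j A))

open scoped Kronecker in
lemma blockM_single (i j : Fin S) (A : Matrix (Fin M) (Fin M) ℂ) :
    blockM (Pi.single i (Pi.single j A)) = Matrix.single i j (1 : ℂ) ⊗ₖ A := by
  ext ⟨k, m⟩ ⟨l, n⟩
  by_cases hk : i = k
  · subst hk
    by_cases hl : j = l
    · subst hl
      simp [blockM]
    · simp [blockM, hl]
  · simp [blockM, hk]

open scoped Kronecker in
lemma zetaMap_singleCoef (i j : Fin S) (α : Finset (Fin N)) (A : Matrix (Fin M) (Fin M) ℂ) :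
    zetaMap N M S (singleCoef i j α A) =
      fun γ => if α ⊆ γ then Matrix.single i j (1 : ℂ) ⊗ₖ A else 0 := by
  funext γ
  change ∑ β ∈ γ.powerset, blockM (singleCoef i j α A β) = _
  have hterm : ∀ β, blockM (singleCoef i j α A β) =
      if β = α then Matrix.single i j (1 : ℂ) ⊗ₖ A else 0 := by
    intro β
    split_ifs with hβ
    · rw [hβ, singleCoef, Pi.single_eq_same, blockM_single]
    · rw [singleCoef, Pi.single_eq_of_ne hβ]
      rfl
  simp [hterm]

section Algebra

variable {EE : Fin S → Fin S → Finset (Fin N) → Matrix (Fin M) (Fin M) ℂ →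
  (L2Omega M a h →L[ℂ] L2Omega M a h)}

/-- `bigSum` as a linear map in the coefficients. -/
def bigSumLin (hh : 0 < h)
    (hdisj : ∀ i j : Fin S, i ≠ j → Disjoint (OmegaI a h i) (OmegaI a h j))
    (hEE : ∀ i j α A, IsElementary i j α A (EE i j α A)) :
    (Finset (Fin N) → Fin S → Fin S → Matrix (Fin M) (Fin M) ℂ) →ₗ[ℂ]
      (L2Omega M a h →L[ℂ] L2Omega M a h) where
  toFun := bigSum EE
  map_add' c d := by
    simp only [bigSum, Pi.add_apply, ← Finset.sum_add_distrib]
    refine Finset.sum_congr rfl fun α _ => Finset.sum_congr rfl fun i _ =>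
      Finset.sum_congr rfl fun j _ => ?_
    exact (hEE _ _ _ _).add (hEE _ _ _ _) (hEE _ _ _ _) hh hdisj
  map_smul' c d := by
    simp only [bigSum, Pi.smul_apply, Finset.smul_sum, RingHom.id_apply]
    refine Finset.sum_congr rfl fun α _ => Finset.sum_congr rfl fun i _ =>
      Finset.sum_congr rfl fun j _ => ?_
    exact (hEE _ _ _ _).smul (hEE _ _ _ _) hh hdisj

lemma bigSumLin_injective (hh : 0 < h)
    (hdisj : ∀ i j : Fin S, i ≠ j → Disjoint (OmegaI a h i) (OmegaI a h j))
    (hEE : ∀ i j α A, IsElementary i j α A (EE i j α A)) :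
    Function.Injective (bigSumLin hh hdisj hEE) := by
  rw [injective_iff_map_eq_zero]
  intro c hc
  apply zetaMap_injective N M S
  rw [map_zero]
  ext α ⟨k, m⟩ ⟨l, n⟩
  have hsum := sum_disjoint_eq_zero_of_bigSum_eq_zero hh hdisj hEE hc αᶜ k l
  have hfilter : (Finset.univ.filter fun β => Disjoint β αᶜ) = α.powerset := by
    ext β
    simp [disjoint_compl_right_iff]
  rw [hfilter] at hsum
  simpa [zetaMap, blockM, Matrix.sum_apply] using congrFun (congrFun hsum m) n

lemma bigSum_singleCoef (hh : 0 < h)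
    (hdisj : ∀ i j : Fin S, i ≠ j → Disjoint (OmegaI a h i) (OmegaI a h j))
    (hEE : ∀ i j α A, IsElementary i j α A (EE i j α A))
    (i j : Fin S) (α : Finset (Fin N)) (A : Matrix (Fin M) (Fin M) ℂ) :
    bigSum EE (singleCoef i j α A) = EE i j α A := by
  have hzero : ∀ k l β, EE k l β 0 = 0 := by
    intro k l β
    have h0 := (hEE k l β 0).smul (c := 0) (W := EE k l β 0)
      (by rw [zero_smul]; exact hEE k l β 0) hh hdisj
    rwa [zero_smul] at h0
  rw [bigSum, Finset.sum_eq_single α, Finset.sum_eq_single i, Finset.sum_eq_single j]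
  · simp [singleCoef]
  · intro l _ hl
    simp [singleCoef, Pi.single_eq_of_ne hl, hzero]
  · simp
  · intro k _ hk
    simp [singleCoef, Pi.single_eq_of_ne hk, hzero]
  · simp
  · intro β _ hβ
    simp [singleCoef, Pi.single_eq_of_ne hβ, hzero]
  · simp

lemma bigSum_induction {p : (L2Omega M a h →L[ℂ] L2Omega M a h) → Prop} (hzero : p 0)
    (hadd : ∀ T U, p T → p U → p (T + U)) (hmem : ∀ i j α A, p (EE i j α A))
    (coef : Finset (Fin N) → Fin S → Fin S → Matrix (Fin M) (Fin M) ℂ) : p (bigSum EE coef) :=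
  Finset.sum_induction _ p hadd hzero fun _ _ =>
    Finset.sum_induction _ p hadd hzero fun _ _ =>
      Finset.sum_induction _ p hadd hzero fun _ _ => hmem _ _ _ _

lemma elementary_mem_range_bigSumLin
    (hh : 0 < h)
    (hdisj : ∀ i j : Fin S, i ≠ j → Disjoint (OmegaI a h i) (OmegaI a h j))
    (hE : ∀ i j α A, IsElementary i j α A (EE i j α A))
    (i j : Fin S) (α : Finset (Fin N)) (A : Matrix (Fin M) (Fin M) ℂ) :
    EE i j α A ∈ (bigSumLin hh hdisj hE).range :=
  ⟨singleCoef i j α A, bigSum_singleCoef hh hdisj hE i j α A⟩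

lemma mul_mem_range_bigSumLin_and_map_mul
    {π : (L2Omega M a h →L[ℂ] L2Omega M a h) →ₗ[ℂ]
      (Finset (Fin N) → Matrix (Fin S × Fin M) (Fin S × Fin M) ℂ)}
    (hh : 0 < h)
    (hdisj : ∀ i j : Fin S, i ≠ j → Disjoint (OmegaI a h i) (OmegaI a h j))
    (hE : ∀ i j α A, IsElementary i j α A (EE i j α A))
    (hπE : ∀ i j α A, π (EE i j α A) =
      fun γ => if α ⊆ γ then Matrix.kroneckerMap (· * ·) (Matrix.single i j (1 : ℂ)) A else 0)
    {T U : L2Omega M a h →L[ℂ] L2Omega M a h} (hT : T ∈ (bigSumLin hh hdisj hE).range)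
    (hU : U ∈ (bigSumLin hh hdisj hE).range) :
    T * U ∈ (bigSumLin hh hdisj hE).range ∧ π (T * U) = π T * π U := by
  have hRE := elementary_mem_range_bigSumLin hh hdisj hE
  set R := (bigSumLin hh hdisj hE).range
  obtain ⟨c, rfl⟩ := hT
  obtain ⟨d, rfl⟩ := hU
  refine bigSum_induction (EE := EE)
    (p := fun T => T * bigSum EE d ∈ R ∧ π (T * bigSum EE d) = π T * π (bigSum EE d))
    ?_ ?_ (fun i j α A => ?_) c
  · simp
  · intro T U hT hU
    rw [add_mul, map_add, map_add, add_mul, hT.2, hU.2]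
    exact ⟨R.add_mem hT.1 hU.1, rfl⟩
  refine bigSum_induction (EE := EE)
    (p := fun U => EE i j α A * U ∈ R ∧ π (EE i j α A * U) = π (EE i j α A) * π U)
    ?_ ?_ (fun k l β B => ?_) d
  · simp
  · intro T U hT hU
    rw [mul_add, map_add, map_add, mul_add, hT.2, hU.2]
    exact ⟨R.add_mem hT.1 hU.1, rfl⟩
  rw [(hE i j α A).mul (hE k l β B) (hE i l (α ∪ β) (A * B)) hh hdisj]
  constructor
  · split_ifs
    exacts [hRE _ _ _ _, R.zero_mem]
  · rw [hπE, hπE]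
    funext γ
    by_cases hjk : j = k
    · subst hjk
      rw [if_pos rfl, hπE, Pi.mul_apply]
      by_cases hα : α ⊆ γ <;> by_cases hβ : β ⊆ γ <;>
        simp [hα, hβ, Finset.union_subset_iff, ← Matrix.mul_kronecker_mul]
    · rw [if_neg hjk, map_zero, Pi.mul_apply]
      by_cases hα : α ⊆ γ <;> by_cases hβ : β ⊆ γ <;>
        simp [hα, hβ, ← Matrix.mul_kronecker_mul, hjk]

lemma star_mem_range_bigSumLin_and_map_star
    {π : (L2Omega M a h →L[ℂ] L2Omega M a h) →ₗ[ℂ]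
      (Finset (Fin N) → Matrix (Fin S × Fin M) (Fin S × Fin M) ℂ)}
    (hh : 0 < h)
    (hdisj : ∀ i j : Fin S, i ≠ j → Disjoint (OmegaI a h i) (OmegaI a h j))
    (hE : ∀ i j α A, IsElementary i j α A (EE i j α A))
    (hπE : ∀ i j α A, π (EE i j α A) =
      fun γ => if α ⊆ γ then Matrix.kroneckerMap (· * ·) (Matrix.single i j (1 : ℂ)) A else 0)
    {T : L2Omega M a h →L[ℂ] L2Omega M a h} (hT : T ∈ (bigSumLin hh hdisj hE).range) :
    star T ∈ (bigSumLin hh hdisj hE).range ∧ π (star T) = star (π T) := by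
  have hRE := elementary_mem_range_bigSumLin hh hdisj hE
  set R := (bigSumLin hh hdisj hE).range
  obtain ⟨c, rfl⟩ := hT
  refine bigSum_induction (EE := EE) (p := fun T => star T ∈ R ∧ π (star T) = star (π T))
    ?_ ?_ (fun i j α A => ?_) c
  · simp
  · intro T U hT hU
    rw [star_add, map_add, map_add, star_add, hT.2, hU.2]
    exact ⟨R.add_mem hT.1 hU.1, rfl⟩
  rw [(hE i j α A).star_eq (hE j i α A.conjTranspose) hh hdisj]
  refine ⟨hRE _ _ _ _, ?_⟩
  rw [hπE, hπE]
  funext γ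
  rw [Pi.star_apply]
  split_ifs
  · rw [Matrix.star_eq_conjTranspose, Matrix.conjTranspose_kronecker]
    simp
  · simp

lemma map_one_of_map_elementary
    {π : (L2Omega M a h →L[ℂ] L2Omega M a h) →ₗ[ℂ]
      (Finset (Fin N) → Matrix (Fin S × Fin M) (Fin S × Fin M) ℂ)}
    (hh : 0 < h)
    (hdisj : ∀ i j : Fin S, i ≠ j → Disjoint (OmegaI a h i) (OmegaI a h j))
    (hE : ∀ i j α A, IsElementary i j α A (EE i j α A))
    (hπE : ∀ i j α A, π (EE i j α A) =
      fun γ => if α ⊆ γ then Matrix.kroneckerMap (· * ·) (Matrix.single i j (1 : ℂ)) A else 0) :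
    π 1 = 1 := by
  rw [IsElementary.one_eq_sum (fun i => hE i i ∅ 1) hh hdisj, map_sum]
  ext γ ⟨k, m⟩ ⟨l, n⟩
  simp only [hπE, Finset.empty_subset, if_true, Finset.sum_apply, Matrix.sum_apply]
  simp [Matrix.single_apply, Matrix.one_apply, Prod.ext_iff, ite_and]
  split_ifs <;> rfl

end Algebra

end Omega

/-- Let `𝔄` be the C*-subalgebra of bounded operators on
`L²(Ω → ℂ^M)` generated by the elementary operators `𝓔_{ij}^α[𝐀]` (the
topological closure of the *-subalgebra they generate).  Every `𝒜 ∈ 𝔄` has a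
unique coefficient expansion `𝒜 = ∑_α ∑_{i,j} 𝓔_{ij}^α[𝐀_{ij}^α]`, and there
is a map `π` sending such an `𝒜` to `(𝐁_α)_α`, `𝐁_α = ∑_{β⊆α} 𝐀_β`, which is
a bijection of `𝔄` onto `(ℂ^{MS×MS})^{2^N}` preserving addition,
multiplication, scalar multiplication, unit, and star. -/
theorem generated_CStar_algebra_isomorphism (N M S : ℕ) (hN : 1 ≤ N)
    (hM : 1 ≤ M) (hS : 1 ≤ S) (h : ℝ) (hh : 0 < h) (a : Fin S → Fin N → ℝ)
    (hdisj : ∀ i j : Fin S, i ≠ j → Disjoint (OmegaI a h i) (OmegaI a h j))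
    (EE : Fin S → Fin S → Finset (Fin N) → Matrix (Fin M) (Fin M) ℂ →
      (Lp (V M) 2 (volume.restrict (Omega a h)) →L[ℂ]
        Lp (V M) 2 (volume.restrict (Omega a h))))
    (hEE : ∀ i j α A (u : Lp (V M) 2 (volume.restrict (Omega a h))),
      (EE i j α A u : (Fin N → ℝ) → V M) =ᵐ[volume.restrict (Omega a h)]
        Efun a h i j α A u) :
    -- `𝔄` is the C*-algebra generated by the elementary operators:
    ∀ AlgA : StarSubalgebra ℂ
        (Lp (V M) 2 (volume.restrict (Omega a h)) →L[ℂ]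
          Lp (V M) 2 (volume.restrict (Omega a h))),
      AlgA = (StarAlgebra.adjoin ℂ
          {T | ∃ i j α A, T = EE i j α A}).topologicalClosure →
      -- unique expansion of every element of 𝔄:
      (∀ T ∈ AlgA, ∃! coef : Finset (Fin N) → Fin S → Fin S → Matrix (Fin M) (Fin M) ℂ,
          T = bigSum EE coef) ∧
      -- the *-algebra isomorphism π onto (ℂ^{MS×MS})^{2^N}:
      ∃ π : (Lp (V M) 2 (volume.restrict (Omega a h)) →L[ℂ]
              Lp (V M) 2 (volume.restrict (Omega a h))) →
            (Finset (Fin N) → Matrix (Fin S × Fin M) (Fin S × Fin M) ℂ),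
        (∀ coef, π (bigSum EE coef) =
            fun α => ∑ β ∈ α.powerset, blockM (coef β)) ∧
        Set.BijOn π AlgA Set.univ ∧
        (∀ T ∈ AlgA, ∀ U ∈ AlgA,
            π (T + U) = π T + π U ∧ π (T * U) = π T * π U) ∧
        (∀ (c : ℂ), ∀ T ∈ AlgA, π (c • T) = c • π T) ∧
        π 1 = 1 ∧
        (∀ T ∈ AlgA, π (star T) = star (π T)) := by
  rintro AlgA rfl
  have hE : ∀ i j α A, IsElementary i j α A (EE i j α A) := hEE
  obtain ⟨ρ, hρ⟩ := LinearMap.exists_leftInverse_of_injective (bigSumLin hh hdisj hE)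
    (LinearMap.ker_eq_bot.2 (bigSumLin_injective hh hdisj hE))
  set R := (bigSumLin hh hdisj hE).range
  set π := zetaMap N M S ∘ₗ ρ
  have hπsum : ∀ c, π (bigSum EE c) = zetaMap N M S c := fun c =>
    congrArg (zetaMap N M S) (LinearMap.congr_fun hρ c)
  have hRsum : ∀ c, bigSum EE c ∈ R := fun c => ⟨c, rfl⟩
  have hRE := elementary_mem_range_bigSumLin hh hdisj hE
  have hπE : ∀ i j α A, π (EE i j α A) =
      fun γ => if α ⊆ γ then Matrix.kroneckerMap (· * ·) (Matrix.single i j (1 : ℂ)) A else 0 :=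
    fun i j α A => by
      rw [← bigSum_singleCoef hh hdisj hE i j α A, hπsum, zetaMap_singleCoef]
  have hRone : 1 ∈ R := by
    rw [IsElementary.one_eq_sum (fun i => hE i i ∅ 1) hh hdisj]
    exact R.sum_mem fun i _ => hRE _ _ _ _
  have hAlg : ∀ T, T ∈ (StarAlgebra.adjoin ℂ
      {T | ∃ i j α A, T = EE i j α A}).topologicalClosure ↔ T ∈ R := by
    let R' : StarSubalgebra ℂ (L2Omega M a h →L[ℂ] L2Omega M a h) :=
      { carrier := R
        mul_mem' := fun hT hU => (mul_mem_range_bigSumLin_and_map_mul hh hdisj hE hπE hT hU).1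
        add_mem' := R.add_mem
        algebraMap_mem' := fun c => by
          rw [Algebra.algebraMap_eq_smul_one]
          exact R.smul_mem c hRone
        star_mem' := fun hT => (star_mem_range_bigSumLin_and_map_star hh hdisj hE hπE hT).1 }
    intro T
    constructor
    · have hle : StarAlgebra.adjoin ℂ {T | ∃ i j α A, T = EE i j α A} ≤ R' := by
        refine StarAlgebra.adjoin_le ?_
        rintro _ ⟨i, j, α, A, rfl⟩
        exact hRE i j α A
      exact fun hT => StarSubalgebra.topologicalClosure_minimal hle
        (R.closed_of_finiteDimensional) hT
    · rintro ⟨c, rfl⟩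
      refine StarSubalgebra.le_topologicalClosure _ ?_
      exact bigSum_induction (EE := EE)
        (p := fun T => T ∈ StarAlgebra.adjoin ℂ {T | ∃ i j α A, T = EE i j α A})
        (zero_mem _) (fun _ _ => add_mem)
        (fun i j α A => StarAlgebra.subset_adjoin ℂ _ ⟨i, j, α, A, rfl⟩) c
  refine ⟨fun T hT => ?_, π, hπsum, ⟨fun _ _ => Set.mem_univ _, ?_, ?_⟩,
    fun T hT U hU => ⟨map_add π T U,
      (mul_mem_range_bigSumLin_and_map_mul hh hdisj hE hπE ((hAlg T).1 hT) ((hAlg U).1 hU)).2⟩,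
    fun c T _ => map_smul π c T, map_one_of_map_elementary hh hdisj hE hπE,
    fun T hT => (star_mem_range_bigSumLin_and_map_star hh hdisj hE hπE ((hAlg T).1 hT)).2⟩
  · obtain ⟨c, rfl⟩ := (hAlg T).1 hT
    exact ⟨c, rfl, fun d hd => (bigSumLin_injective hh hdisj hE hd).symm⟩
  · intro T hT U hU hTU
    obtain ⟨c, rfl⟩ := (hAlg T).1 hT
    obtain ⟨d, rfl⟩ := (hAlg U).1 hU
    have hcd : zetaMap N M S c = zetaMap N M S d := by
      rw [← hπsum, ← hπsum]
      exact hTU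
    rw [zetaMap_injective N M S hcd]
  · intro B _
    obtain ⟨c, rfl⟩ := zetaMap_surjective N M S B
    exact ⟨bigSum EE c, (hAlg _).2 (hRsum c), hπsum c⟩

end Stmt8
end
end

section
/- Let 𝒜 = ∑_{α⊆{1,...,N}} ∑_{i,j=1}^S 𝓔_{ij}^α[𝐀_{ij}^α] be an element of the C*-algebra 𝔄 of operators on L²(Ω → ℂ^M) generated by the elementary operators, and let 𝐁_α = ∑_{β⊆α} 𝐀_β with 𝐀_α = (𝐀_{ij}^α)_{i,j=1}^S. Then 𝒜 is invertible as a bounded operator on L² if and only if every matrix 𝐁_α (α ⊆ {1,...,N}) is invertible, and in that case 𝒜⁻¹ = π⁻¹((𝐁_α⁻¹)_{α⊆{1,...,N}}), i.e. 𝒜⁻¹ = ∑_α ∑_{i,j} 𝓔_{ij}^α[𝐂_{ij}^α] where the block matrices 𝐂_α = (𝐂_{ij}^α) are given by 𝐂_α = ∑_{β⊆α} (−1)^{|α∖β|} 𝐁_β⁻¹. -/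
/-!
STATEMENT 10: 𝒜 = ∑_{α,i,j} 𝓔_{ij}^α[𝐀_{ij}^α] ∈ 𝔄 is invertible iff every
matrix 𝐁_α = ∑_{β⊆α} 𝐀_β is invertible, and then
𝒜⁻¹ = π⁻¹((𝐁_α⁻¹)_α) = ∑_{α,i,j} 𝓔_{ij}^α[𝐂_{ij}^α] with
𝐂_α = ∑_{β⊆α} (−1)^{|α∖β|} 𝐁_β⁻¹.
-/

open MeasureTheory Finset

noncomputable section

namespace Stmt10

/-- `ℂ^M` with its Euclidean (Hilbert) structure. -/
abbrev V (M : ℕ) := EuclideanSpace ℂ (Fin M)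

/-- The half-open cube `H = [0,h)^N`. -/
def cube (N : ℕ) (h : ℝ) : Set (Fin N → ℝ) := Set.univ.pi fun _ => Set.Ico 0 h

/-- `combine α y x` agrees with `y` in the coordinates `n ∈ α` and with `x`
in the coordinates `n ∉ α`. -/
def combine {N : ℕ} (α : Finset (Fin N)) (y x : Fin N → ℝ) : Fin N → ℝ :=
  fun n => if n ∈ α then y n else x n

/-- The shifted cube `Ω_i = a_i + [0,h)^N`. -/
def OmegaI {N S : ℕ} (a : Fin S → Fin N → ℝ) (h : ℝ) (i : Fin S) :
    Set (Fin N → ℝ) := {x | x - a i ∈ cube N h}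

/-- `Ω = ⋃_{i=1}^S Ω_i`. -/
def Omega {N S : ℕ} (a : Fin S → Fin N → ℝ) (h : ℝ) : Set (Fin N → ℝ) :=
  ⋃ i, OmegaI a h i

/-- The pointwise formula for the elementary operator `𝓔_{ij}^α[𝐀]`:
`(𝓔_{ij}^α[𝐀]u)(x + a_i) = h^{−|α|} 𝐀 ∫_{[0,h)^{|α|}} u(x' + a_j) dx'_α` for
`x ∈ H`, and `0` outside `Ω_i`.  Here the partial integral over the coordinates
in `α` is realized as an integral over the whole cube `[0,h)^N` (the integrand
does not depend on the coordinates of `y` outside `α`), compensated by the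
additional normalization `h^{−(N−|α|)}`. -/
def Efun {N M S : ℕ} (a : Fin S → Fin N → ℝ) (h : ℝ) (i j : Fin S)
    (α : Finset (Fin N)) (A : Matrix (Fin M) (Fin M) ℂ)
    (u : (Fin N → ℝ) → V M) : (Fin N → ℝ) → V M :=
  (OmegaI a h i).indicator fun x =>
    ((h ^ α.card)⁻¹ * (h ^ (N - α.card))⁻¹ : ℝ) •
      (show V M from WithLp.toLp 2 (A.mulVec
        (show Fin M → ℂ from ∫ y in cube N h, u (a j + combine α y (x - a i)))))

/-- The operator `∑_{α ⊆ {1,...,N}} ∑_{i,j=1}^S 𝓔_{ij}^α[coef α i j]`. -/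
def bigSum {N M S : ℕ} {a : Fin S → Fin N → ℝ} {h : ℝ}
    (EE : Fin S → Fin S → Finset (Fin N) → Matrix (Fin M) (Fin M) ℂ →
      (Lp (V M) 2 (volume.restrict (Omega a h)) →L[ℂ]
        Lp (V M) 2 (volume.restrict (Omega a h))))
    (coef : Finset (Fin N) → Fin S → Fin S → Matrix (Fin M) (Fin M) ℂ) :
    Lp (V M) 2 (volume.restrict (Omega a h)) →L[ℂ]
      Lp (V M) 2 (volume.restrict (Omega a h)) :=
  ∑ α : Finset (Fin N), ∑ i : Fin S, ∑ j : Fin S, EE i j α (coef α i j)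

/-- The block matrix `(𝐀_{ij})_{i,j=1}^S ∈ ℂ^{MS×MS}` built from an `S×S` array
of `M×M` matrices. -/
def blockM {M S : ℕ} (c : Fin S → Fin S → Matrix (Fin M) (Fin M) ℂ) :
    Matrix (Fin S × Fin M) (Fin S × Fin M) ℂ :=
  Matrix.of fun p q => c p.1 q.1 p.2 q.2

/-- `∑_{α,i,j} 𝓔_{ij}^α[𝐂_{ij}^α]` where the blocks `𝐂_α = (𝐂_{ij}^α)` come
from a family of `MS×MS` matrices by the Möbius formula
`𝐂_α = ∑_{β⊆α} (−1)^{|α∖β|} B β`. -/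
def psiOp {N M S : ℕ} {a : Fin S → Fin N → ℝ} {h : ℝ}
    (EE : Fin S → Fin S → Finset (Fin N) → Matrix (Fin M) (Fin M) ℂ →
      (Lp (V M) 2 (volume.restrict (Omega a h)) →L[ℂ]
        Lp (V M) 2 (volume.restrict (Omega a h))))
    (B : Finset (Fin N) → Matrix (Fin S × Fin M) (Fin S × Fin M) ℂ) :
    Lp (V M) 2 (volume.restrict (Omega a h)) →L[ℂ]
      Lp (V M) 2 (volume.restrict (Omega a h)) :=
  bigSum EE fun α i j => Matrix.of fun m m' =>
    (∑ β ∈ α.powerset, ((-1 : ℂ) ^ ((α \ β).card)) • B β) (i, m) (j, m')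

/-! ### The normalized measure on the cube -/

/-- The uniform probability measure on `[0,h)`. -/
def unifMeasure (h : ℝ) : Measure ℝ :=
  (ENNReal.ofReal h)⁻¹ • volume.restrict (Set.Ico 0 h)

/-- The uniform probability measure on the cube `[0,h)^N`. -/
def cubeMeasure (N : ℕ) (h : ℝ) : Measure (Fin N → ℝ) :=
  Measure.pi fun _ => unifMeasure h

theorem isProbabilityMeasure_unifMeasure {h : ℝ} (hh : 0 < h) :
    IsProbabilityMeasure (unifMeasure h) := by
  constructor
  have h0 : ENNReal.ofReal h ≠ 0 := by simpa using hh
  simp [unifMeasure, ENNReal.inv_mul_cancel h0 ENNReal.ofReal_ne_top]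

theorem isProbabilityMeasure_cubeMeasure {N : ℕ} {h : ℝ} (hh : 0 < h) :
    IsProbabilityMeasure (cubeMeasure N h) := by
  have := isProbabilityMeasure_unifMeasure hh
  unfold cubeMeasure
  infer_instance

theorem measurableSet_cube (N : ℕ) (h : ℝ) : MeasurableSet (cube N h) :=
  MeasurableSet.univ_pi fun _ => measurableSet_Ico

theorem cubeMeasure_eq_smul {N : ℕ} {h : ℝ} (hh : 0 < h) :
    cubeMeasure N h = ((ENNReal.ofReal h)⁻¹ ^ N) • volume.restrict (cube N h) := by
  have := isProbabilityMeasure_unifMeasure hh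
  refine Measure.pi_eq fun s hs => ?_
  rw [cube, volume_pi, Measure.restrict_pi_pi]
  simp [unifMeasure, Finset.prod_mul_distrib]

theorem ae_cubeMeasure_iff {N : ℕ} {h : ℝ} (hh : 0 < h) {p : (Fin N → ℝ) → Prop} :
    (∀ᵐ x ∂cubeMeasure N h, p x) ↔ ∀ᵐ x ∂volume.restrict (cube N h), p x := by
  rw [cubeMeasure_eq_smul hh, Measure.ae_ennreal_smul_measure_iff]
  simp

theorem ae_mem_cube {N : ℕ} {h : ℝ} (hh : 0 < h) :
    ∀ᵐ x ∂cubeMeasure N h, x ∈ cube N h :=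
  (ae_cubeMeasure_iff hh).2 (ae_restrict_mem (measurableSet_cube N h))

theorem integral_cubeMeasure {N : ℕ} {h : ℝ} (hh : 0 < h) {E : Type*}
    [NormedAddCommGroup E] [NormedSpace ℝ E] (f : (Fin N → ℝ) → E) :
    ∫ y, f y ∂cubeMeasure N h = (h ^ N)⁻¹ • ∫ y in cube N h, f y := by
  rw [cubeMeasure_eq_smul hh, integral_smul_measure]
  simp [hh.le]

/-! ### Partial averages -/

theorem combine_mem_cube {N : ℕ} {h : ℝ} (α : Finset (Fin N)) {y x : Fin N → ℝ}
    (hy : y ∈ cube N h) (hx : x ∈ cube N h) : combine α y x ∈ cube N h := by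
  intro n _
  unfold combine
  split_ifs
  exacts [hy n trivial, hx n trivial]

theorem combine_empty {N : ℕ} (y x : Fin N → ℝ) : combine ∅ y x = x := by
  funext n
  simp [combine]

theorem combine_combine {N : ℕ} (α β : Finset (Fin N)) (z y x : Fin N → ℝ) :
    combine β z (combine α y x) = combine (α ∪ β) (combine β z y) x := by
  funext n
  by_cases h₁ : n ∈ α <;> by_cases h₂ : n ∈ β <;> simp [combine, h₁, h₂]

theorem measurePreserving_combine {N : ℕ} {h : ℝ} (hh : 0 < h) (α : Finset (Fin N)) :
    MeasurePreserving (fun p : (Fin N → ℝ) × (Fin N → ℝ) => combine α p.2 p.1)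
      ((cubeMeasure N h).prod (cubeMeasure N h)) (cubeMeasure N h) := by
  have := isProbabilityMeasure_unifMeasure hh
  have := isProbabilityMeasure_cubeMeasure (N := N) hh
  have hmeas : Measurable fun p : (Fin N → ℝ) × (Fin N → ℝ) => combine α p.2 p.1 := by
    refine measurable_pi_lambda _ fun n => ?_
    by_cases hn : n ∈ α <;> simp only [combine, hn, if_true, if_false] <;> fun_prop
  refine ⟨hmeas, (Measure.pi_eq fun s hs => ?_).symm⟩
  rw [Measure.map_apply hmeas (MeasurableSet.univ_pi hs)]
  have hpre : (fun p : (Fin N → ℝ) × (Fin N → ℝ) => combine α p.2 p.1) ⁻¹' Set.univ.pi s =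
      (Set.univ.pi fun n => if n ∈ α then Set.univ else s n) ×ˢ
        (Set.univ.pi fun n => if n ∈ α then s n else Set.univ) := by
    ext p
    simp only [Set.mem_preimage, Set.mem_prod, Set.mem_univ_pi, ← forall_and]
    refine forall_congr' fun n => ?_
    by_cases hn : n ∈ α <;> simp [combine, hn]
  rw [hpre, Measure.prod_prod, cubeMeasure, Measure.pi_pi, Measure.pi_pi,
    ← Finset.prod_mul_distrib]
  refine Finset.prod_congr rfl fun n _ => ?_
  by_cases hn : n ∈ α <;> simp [hn]

theorem ae_integrable_combine {N : ℕ} {h : ℝ} {E : Type*} [NormedAddCommGroup E]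
    (hh : 0 < h) (α : Finset (Fin N)) {f : (Fin N → ℝ) → E} (hf : Integrable f (cubeMeasure N h)) :
    ∀ᵐ x ∂cubeMeasure N h, Integrable (fun y => f (combine α y x)) (cubeMeasure N h) := by
  have := isProbabilityMeasure_cubeMeasure (N := N) hh
  exact (((measurePreserving_combine hh α).integrable_comp hf.1).2 hf).prod_right_ae

/-- The average of `f` over the coordinates in `α`. -/
def avg {N : ℕ} {E : Type*} [NormedAddCommGroup E] [NormedSpace ℝ E] (h : ℝ)
    (α : Finset (Fin N)) (f : (Fin N → ℝ) → E) (x : Fin N → ℝ) : E :=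
  ∫ y, f (combine α y x) ∂cubeMeasure N h

section avg

variable {N : ℕ} {h : ℝ} {E : Type*} [NormedAddCommGroup E] [NormedSpace ℝ E]

theorem avg_empty (hh : 0 < h) [CompleteSpace E] (f : (Fin N → ℝ) → E) : avg h ∅ f = f := by
  have := isProbabilityMeasure_cubeMeasure (N := N) hh
  funext x
  simp [avg, combine_empty]

theorem avg_congr_ae (hh : 0 < h) (α : Finset (Fin N)) {f g : (Fin N → ℝ) → E}
    (hfg : f =ᵐ[cubeMeasure N h] g) : avg h α f =ᵐ[cubeMeasure N h] avg h α g := by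
  have := isProbabilityMeasure_cubeMeasure (N := N) hh
  have hq := (measurePreserving_combine hh α).quasiMeasurePreserving.ae hfg
  filter_upwards [Measure.ae_ae_of_ae_prod hq] with x hx
  exact integral_congr_ae hx

theorem avg_avg (hh : 0 < h) (α β : Finset (Fin N)) {f : (Fin N → ℝ) → E}
    (hf : Integrable f (cubeMeasure N h)) :
    avg h α (avg h β f) =ᵐ[cubeMeasure N h] avg h (α ∪ β) f := by
  have := isProbabilityMeasure_cubeMeasure (N := N) hh
  filter_upwards [ae_integrable_combine hh (α ∪ β) hf] with x hx
  have mp := measurePreserving_combine hh β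
  have hint := (mp.integrable_comp hx.1).2 hx
  simp only [avg, combine_combine]
  have hmap := integral_map (f := fun y => f (combine (α ∪ β) y x)) mp.aemeasurable
    (by rw [mp.map_eq]; exact hx.1)
  rw [mp.map_eq] at hmap
  rw [hmap]
  exact (integral_prod _ hint).symm

theorem avg_mulVec (hh : 0 < h) {ι : Type*} [Fintype ι] (α : Finset (Fin N))
    (A : Matrix ι ι ℂ) {f : (Fin N → ℝ) → ι → ℂ} (hf : Integrable f (cubeMeasure N h)) :
    avg h α (fun x => A.mulVec (f x)) =ᵐ[cubeMeasure N h] fun x => A.mulVec (avg h α f x) := by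
  filter_upwards [ae_integrable_combine hh α hf] with x hx
  exact (LinearMap.toContinuousLinearMap A.mulVecLin).integral_comp_comm hx

theorem integrable_avg (hh : 0 < h) (α : Finset (Fin N)) {f : (Fin N → ℝ) → E}
    (hf : Integrable f (cubeMeasure N h)) : Integrable (avg h α f) (cubeMeasure N h) := by
  have := isProbabilityMeasure_cubeMeasure (N := N) hh
  exact (((measurePreserving_combine hh α).integrable_comp hf.1).2 hf).integral_prod_left

end avg

/-! ### The oscillating test functions -/

/-- A function on `[0,h)` with values `±1` and mean zero. -/
def haar (h t : ℝ) : ℝ := if t < h / 2 then 1 else -1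

theorem integral_haar {h : ℝ} (hh : 0 < h) : ∫ t, haar h t ∂unifMeasure h = 0 := by
  have hu : Set.Ico 0 h = Set.Ico 0 (h / 2) ∪ Set.Ico (h / 2) h :=
    (Set.Ico_union_Ico_eq_Ico (by linarith) (by linarith)).symm
  have e₁ : Set.EqOn (haar h) (fun _ => 1) (Set.Ico 0 (h / 2)) := fun t ht => by
    simp [haar, ht.2]
  have e₂ : Set.EqOn (haar h) (fun _ => -1) (Set.Ico (h / 2) h) := fun t ht => by
    simp [haar, ht.1]
  have i₁ : IntegrableOn (haar h) (Set.Ico 0 (h / 2)) :=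
    (integrableOn_congr_fun e₁ measurableSet_Ico).2 (by simp)
  have i₂ : IntegrableOn (haar h) (Set.Ico (h / 2) h) :=
    (integrableOn_congr_fun e₂ measurableSet_Ico).2 (by simp)
  rw [unifMeasure, integral_smul_measure, hu,
    setIntegral_union (Set.Ico_disjoint_Ico_same) measurableSet_Ico i₁ i₂,
    setIntegral_congr_fun measurableSet_Ico e₁, setIntegral_congr_fun measurableSet_Ico e₂]
  have : h - h / 2 = h / 2 := by ring
  simp [this, hh.le]

/-- The product of mean zero functions in the coordinates outside `α`. -/
def osc {N : ℕ} (h : ℝ) (α : Finset (Fin N)) (z : Fin N → ℝ) : ℝ :=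
  ∏ n, if n ∈ α then 1 else haar h (z n)

theorem abs_osc {N : ℕ} (h : ℝ) (α : Finset (Fin N)) (z : Fin N → ℝ) : |osc h α z| = 1 := by
  rw [osc, Finset.abs_prod]
  refine Finset.prod_eq_one fun n _ => ?_
  unfold haar
  split_ifs <;> simp

theorem measurable_osc {N : ℕ} (h : ℝ) (α : Finset (Fin N)) : Measurable (osc h α) := by
  refine Finset.measurable_fun_prod _ fun n _ => ?_
  by_cases hn : n ∈ α
  · simp [hn]
  · simp only [hn, if_false, haar]
    exact Measurable.ite (measurableSet_lt (measurable_pi_apply n) measurable_const)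
      measurable_const measurable_const

theorem avg_osc {N : ℕ} {h : ℝ} (hh : 0 < h) (α β : Finset (Fin N)) (x : Fin N → ℝ) :
    avg h β (osc h α) x = if β ⊆ α then osc h α x else 0 := by
  have := isProbabilityMeasure_unifMeasure hh
  have key : avg h β (osc h α) x = ∏ n, ∫ t, (if n ∈ α then 1 else
      haar h (if n ∈ β then t else x n)) ∂unifMeasure h :=
    integral_fintype_prod_eq_prod (μ := fun _ : Fin N => unifMeasure h)
      fun n t => if n ∈ α then (1 : ℝ) else haar h (if n ∈ β then t else x n)
  rw [key]
  split_ifs with hβ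
  · refine Finset.prod_congr rfl fun n _ => ?_
    by_cases h₁ : n ∈ α
    · simp [h₁]
    · have h₂ : n ∉ β := fun hn => h₁ (hβ hn)
      simp [h₁, h₂]
  · obtain ⟨n, hnβ, hnα⟩ := Finset.not_subset.1 hβ
    refine Finset.prod_eq_zero (Finset.mem_univ n) ?_
    simpa [hnα, hnβ] using integral_haar hh

/-! ### Möbius inversion over subsets -/

theorem sum_Icc_neg_one_pow {ι : Type*} [DecidableEq ι] {γ α : Finset ι} (hγ : γ ⊆ α) :
    ∑ β ∈ Finset.Icc γ α, (-1 : ℂ) ^ (β \ γ).card = if γ = α then 1 else 0 := by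
  have hdisj : ∀ x ∈ (α \ γ).powerset, Disjoint γ x := fun x hx =>
    (Finset.disjoint_sdiff).mono_right (Finset.mem_powerset.1 hx)
  rw [Finset.Icc_eq_image_powerset hγ, Finset.sum_image]
  · have h₁ : ∀ x ∈ (α \ γ).powerset, (-1 : ℂ) ^ ((γ ∪ x) \ γ).card = (-1) ^ x.card :=
      fun x hx => by rw [Finset.union_sdiff_cancel_left (hdisj x hx)]
    rw [Finset.sum_congr rfl h₁]
    have h₂ := congrArg (Int.cast : ℤ → ℂ) (Finset.sum_powerset_neg_one_pow_card (x := α \ γ))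
    push_cast at h₂
    rw [h₂]
    refine if_congr ?_ rfl rfl
    rw [Finset.sdiff_eq_empty_iff_subset]
    exact ⟨fun h => hγ.antisymm h, fun h => h ▸ subset_rfl⟩
  · intro x hx y hy hxy
    rw [← Finset.union_sdiff_cancel_left (hdisj x hx),
      ← Finset.union_sdiff_cancel_left (hdisj y hy)]
    exact congrArg (· \ γ) hxy

theorem sum_powerset_moebius {ι G : Type*} [DecidableEq ι] [AddCommGroup G] [Module ℂ G]
    (B : Finset ι → G) (α : Finset ι) :
    ∑ β ∈ α.powerset, ∑ γ ∈ β.powerset, ((-1 : ℂ) ^ (β \ γ).card) • B γ = B α := by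
  have hswap : ∑ β ∈ α.powerset, ∑ γ ∈ β.powerset, ((-1 : ℂ) ^ (β \ γ).card) • B γ =
      ∑ γ ∈ α.powerset, ∑ β ∈ Finset.Icc γ α, ((-1 : ℂ) ^ (β \ γ).card) • B γ := by
    refine Finset.sum_comm' fun β γ => ?_
    simp only [Finset.mem_powerset, Finset.mem_Icc]
    exact ⟨fun h => ⟨⟨h.2, h.1⟩, h.2.trans h.1⟩, fun h => ⟨h.1.2, h.1.1⟩⟩
  have hterm : ∀ γ ∈ α.powerset, ∑ β ∈ Finset.Icc γ α, ((-1 : ℂ) ^ (β \ γ).card) • B γ =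
      if γ = α then B γ else 0 := fun γ hγ => by
    rw [← Finset.sum_smul, sum_Icc_neg_one_pow (Finset.mem_powerset.1 hγ)]
    split_ifs <;> simp
  rw [hswap, Finset.sum_congr rfl hterm, Finset.sum_ite_eq']
  simp

theorem eq_of_sum_powerset_eq {ι G : Type*} [DecidableEq ι] [AddCommGroup G]
    {f g : Finset ι → G} (hfg : ∀ α : Finset ι, ∑ β ∈ α.powerset, f β = ∑ β ∈ α.powerset, g β) : f = g := by
  funext α
  induction α using Finset.strongInduction with
  | H α ih =>
    have hα := hfg α
    rw [← Finset.add_sum_erase _ f (Finset.mem_powerset_self α),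
      ← Finset.add_sum_erase _ g (Finset.mem_powerset_self α)] at hα
    have hrest : ∑ β ∈ α.powerset.erase α, f β = ∑ β ∈ α.powerset.erase α, g β := by
      refine Finset.sum_congr rfl fun β hβ => ih β ?_
      rw [Finset.mem_erase, Finset.mem_powerset] at hβ
      exact hβ.2.ssubset_of_ne hβ.1
    rw [hrest] at hα
    exact add_right_cancel hα

/-- If additive maps `E α` turn products into unions of the index sets, then two families whose
sums over subsets are pointwise inverse to each other give operators with product `E ∅ 1`. -/
theorem sum_mul_sum_eq_of_mul_eq_one {ι R T : Type*} [Fintype ι] [DecidableEq ι] [Ring R] [Ring T]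
    (E : Finset ι → R →+ T) (hE : ∀ α β X Y, E α X * E β Y = E (α ∪ β) (X * Y))
    {X Y : Finset ι → R}
    (hXY : ∀ α : Finset ι, (∑ β ∈ α.powerset, X β) * ∑ β ∈ α.powerset, Y β = 1) :
    (∑ α, E α (X α)) * ∑ α, E α (Y α) = E ∅ 1 := by
  have hconv : (fun γ => ∑ p : Finset ι × Finset ι with p.1 ∪ p.2 = γ, X p.1 * Y p.2) =
      fun γ => if γ = ∅ then 1 else 0 := by
    refine eq_of_sum_powerset_eq fun α => ?_
    have h₁ : ∑ γ ∈ α.powerset, ∑ p : Finset ι × Finset ι with p.1 ∪ p.2 = γ, X p.1 * Y p.2 =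
        ∑ p ∈ α.powerset ×ˢ α.powerset, X p.1 * Y p.2 := by
      rw [← Finset.sum_fiberwise_of_maps_to (s := α.powerset ×ˢ α.powerset) (t := α.powerset)
        (g := fun p : Finset ι × Finset ι => p.1 ∪ p.2)]
      · refine Finset.sum_congr rfl fun γ hγ => Finset.sum_congr ?_ fun _ _ => rfl
        ext p
        simp only [Finset.mem_filter, Finset.mem_univ, true_and, Finset.mem_product,
          Finset.mem_powerset] at hγ ⊢
        refine ⟨fun h => ⟨?_, h⟩, fun h => h.2⟩
        rw [← h] at hγ
        exact ⟨Finset.union_subset_left hγ, Finset.union_subset_right hγ⟩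
      · intro p hp
        simp only [Finset.mem_product, Finset.mem_powerset] at hp ⊢
        exact Finset.union_subset hp.1 hp.2
    rw [h₁, Finset.sum_product, ← Finset.sum_mul_sum, hXY, Finset.sum_ite_eq']
    simp
  calc (∑ α, E α (X α)) * ∑ α, E α (Y α)
      = ∑ p : Finset ι × Finset ι, E (p.1 ∪ p.2) (X p.1 * Y p.2) := by
        simp only [Finset.sum_mul_sum, hE, Fintype.sum_prod_type]
    _ = ∑ γ, ∑ p : Finset ι × Finset ι with p.1 ∪ p.2 = γ, E (p.1 ∪ p.2) (X p.1 * Y p.2) :=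
        (Finset.sum_fiberwise _ _ _).symm
    _ = ∑ γ, E γ (∑ p : Finset ι × Finset ι with p.1 ∪ p.2 = γ, X p.1 * Y p.2) := by
        refine Finset.sum_congr rfl fun γ _ => ?_
        rw [map_sum]
        refine Finset.sum_congr rfl fun p hp => ?_
        rw [(Finset.mem_filter.1 hp).2]
    _ = ∑ γ, E γ (if γ = ∅ then 1 else 0) := by
        refine Finset.sum_congr rfl fun γ _ => congrArg (E γ) (congrFun hconv γ)
    _ = E ∅ 1 := by
        rw [Finset.sum_eq_single ∅] <;> simp +contextual

/-! ### Functions on `Ω` as vector-valued functions on the cube -/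

/-- The restrictions of `u` to the cubes `Ω_i`, moved to `[0,h)^N` and collected in one vector. -/
def pieces {N M S : ℕ} (a : Fin S → Fin N → ℝ) (u : (Fin N → ℝ) → V M) (z : Fin N → ℝ) :
    Fin S × Fin M → ℂ :=
  fun p => u (a p.1 + z) p.2

section pieces

variable {N M S : ℕ} {a : Fin S → Fin N → ℝ} {h : ℝ}

theorem add_mem_OmegaI_iff {i : Fin S} {z : Fin N → ℝ} :
    a i + z ∈ OmegaI a h i ↔ z ∈ cube N h := by
  simp [OmegaI]

theorem measurableSet_OmegaI (i : Fin S) : MeasurableSet (OmegaI a h i) :=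
  measurableSet_preimage (measurable_id.sub_const (a i)) (measurableSet_cube N h)

theorem measurePreserving_add_restrict (i : Fin S) :
    MeasurePreserving (a i + ·) (volume.restrict (cube N h))
      (volume.restrict (OmegaI a h i)) := by
  have hpre : (a i + ·) ⁻¹' OmegaI a h i = cube N h := by
    ext z
    exact add_mem_OmegaI_iff
  have := (measurePreserving_add_left volume (a i)).restrict_preimage
    (measurableSet_OmegaI (a := a) (h := h) i)
  rwa [hpre] at this

theorem ae_restrict_Omega_iff (hh : 0 < h) {p : (Fin N → ℝ) → Prop} :
    (∀ᵐ x ∂volume.restrict (Omega a h), p x) ↔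
      ∀ i, ∀ᵐ z ∂cubeMeasure N h, p (a i + z) := by
  rw [Omega, ae_restrict_iUnion_iff]
  refine forall_congr' fun i => ?_
  rw [ae_cubeMeasure_iff hh, ← (measurePreserving_add_restrict i).map_eq,
    (measurableEmbedding_addLeft (a i)).ae_map_iff]

theorem pieces_congr_ae (hh : 0 < h) {u v : (Fin N → ℝ) → V M} :
    pieces a u =ᵐ[cubeMeasure N h] pieces a v ↔ u =ᵐ[volume.restrict (Omega a h)] v := by
  rw [Filter.EventuallyEq, Filter.EventuallyEq, ae_restrict_Omega_iff hh, ← ae_all_iff]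
  refine Filter.eventually_congr (Filter.Eventually.of_forall fun z => ?_)
  refine ⟨fun H i => ?_, fun H => funext fun p => by simp only [pieces, H p.1]⟩
  ext m
  exact congrFun H (i, m)

theorem Lp_eq_of_pieces (hh : 0 < h) {u v : Lp (V M) 2 (volume.restrict (Omega a h))}
    (huv : pieces a u =ᵐ[cubeMeasure N h] pieces a v) : u = v :=
  Lp.ext ((pieces_congr_ae hh).1 huv)

theorem pieces_Lp_sum (hh : 0 < h) {κ : Type*} (s : Finset κ)
    (u : κ → Lp (V M) 2 (volume.restrict (Omega a h))) :
    pieces a (∑ k ∈ s, u k : Lp (V M) 2 (volume.restrict (Omega a h)))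
      =ᵐ[cubeMeasure N h] fun z => ∑ k ∈ s, pieces a (u k) z := by
  classical
  induction s using Finset.induction_on with
  | empty =>
    have h0 := (pieces_congr_ae hh).2 (Lp.coeFn_zero (V M) 2 (volume.restrict (Omega a h)))
    filter_upwards [h0] with z hz
    simp only [Finset.sum_empty]
    rw [hz]
    rfl
  | insert k s hk ih =>
    rw [Finset.sum_insert hk]
    filter_upwards [(pieces_congr_ae hh).2 (Lp.coeFn_add (u k) (∑ k ∈ s, u k)), ih] with z hz hs
    rw [hz, Finset.sum_insert hk, ← hs]
    rfl

theorem integrable_pieces (hh : 0 < h) (u : Lp (V M) 2 (volume.restrict (Omega a h))) :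
    Integrable (pieces a u) (cubeMeasure N h) := by
  have := isProbabilityMeasure_cubeMeasure (N := N) hh
  refine Integrable.of_eval fun p => ?_
  have h₁ : MemLp u 2 (volume.restrict (OmegaI a h p.1)) :=
    (Lp.memLp u).mono_measure (Measure.restrict_mono (Set.subset_iUnion _ _) le_rfl)
  have h₂ := h₁.comp_measurePreserving (measurePreserving_add_restrict p.1)
  have h₃ : MemLp ((u : (Fin N → ℝ) → V M) ∘ (a p.1 + ·)) 2 (cubeMeasure N h) := by
    rw [cubeMeasure_eq_smul hh]
    refine h₂.smul_measure (ENNReal.pow_ne_top (ENNReal.inv_ne_top.2 ?_))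
    simpa using hh
  exact (EuclideanSpace.proj (𝕜 := ℂ) p.2).integrable_comp (h₃.integrable (by norm_num))

theorem pieces_Efun (hh : 0 < h)
    (hdisj : ∀ i j : Fin S, i ≠ j → Disjoint (OmegaI a h i) (OmegaI a h j))
    (i j : Fin S) (α : Finset (Fin N)) (A : Matrix (Fin M) (Fin M) ℂ)
    (u : Lp (V M) 2 (volume.restrict (Omega a h))) :
    pieces a (Efun a h i j α A u) =ᵐ[cubeMeasure N h] fun z p =>
      if p.1 = i then A.mulVec (fun m => avg h α (pieces a u) z (j, m)) p.2 else 0 := by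
  filter_upwards [ae_mem_cube hh, ae_integrable_combine hh α (integrable_pieces hh u)]
    with z hz hint
  funext p
  obtain ⟨k, m⟩ := p
  by_cases hk : k = i
  · subst hk
    have hpow : (h ^ α.card)⁻¹ * (h ^ (N - α.card))⁻¹ = (h ^ N)⁻¹ := by
      rw [← mul_inv, ← pow_add, Nat.add_sub_cancel' (by simpa using α.card_le_univ)]
    have havg : (fun m => avg h α (pieces a u) z (j, m)) =
        (h ^ N)⁻¹ • ∫ y in cube N h, (u (a j + combine α y z)).ofLp := by
      rw [← integral_cubeMeasure hh]
      have hj : Integrable (fun y => (u (a j + combine α y z)).ofLp) (cubeMeasure N h) :=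
        Integrable.of_eval fun m => hint.eval (j, m)
      funext m
      rw [avg, eval_integral fun p => hint.eval p, eval_integral fun p => hj.eval p]
      rfl
    simp only [if_true]
    rw [havg, Matrix.mulVec_smul]
    simp only [pieces, Efun, Set.indicator_of_mem (add_mem_OmegaI_iff.2 hz), hpow,
      add_sub_cancel_left]
    rfl
  · have hmem : a k + z ∉ OmegaI a h i :=
      Set.disjoint_left.1 (hdisj k i hk) (add_mem_OmegaI_iff.2 hz)
    simp [pieces, Efun, hmem, hk]

end pieces

/-! ### Operators given by block matrices -/

section blockOp

variable {N M S : ℕ} {a : Fin S → Fin N → ℝ} {h : ℝ}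
  {EE : Fin S → Fin S → Finset (Fin N) → Matrix (Fin M) (Fin M) ℂ →
    (Lp (V M) 2 (volume.restrict (Omega a h)) →L[ℂ]
      Lp (V M) 2 (volume.restrict (Omega a h)))}

/-- The operator `∑_{i,j} 𝓔_{ij}^α[X_{ij}]` for a block matrix `X`. -/
def blockOp
    (EE : Fin S → Fin S → Finset (Fin N) → Matrix (Fin M) (Fin M) ℂ →
      (Lp (V M) 2 (volume.restrict (Omega a h)) →L[ℂ]
        Lp (V M) 2 (volume.restrict (Omega a h))))
    (α : Finset (Fin N)) (X : Matrix (Fin S × Fin M) (Fin S × Fin M) ℂ) :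
    Lp (V M) 2 (volume.restrict (Omega a h)) →L[ℂ]
      Lp (V M) 2 (volume.restrict (Omega a h)) :=
  ∑ i, ∑ j, EE i j α (Matrix.of fun m m' => X (i, m) (j, m'))

theorem pieces_blockOp (hh : 0 < h)
    (hdisj : ∀ i j : Fin S, i ≠ j → Disjoint (OmegaI a h i) (OmegaI a h j))
    (hEE : ∀ i j α A (u : Lp (V M) 2 (volume.restrict (Omega a h))),
      (EE i j α A u : (Fin N → ℝ) → V M) =ᵐ[volume.restrict (Omega a h)] Efun a h i j α A u)
    (α : Finset (Fin N)) (X : Matrix (Fin S × Fin M) (Fin S × Fin M) ℂ)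
    (u : Lp (V M) 2 (volume.restrict (Omega a h))) :
    pieces a (blockOp EE α X u) =ᵐ[cubeMeasure N h]
      fun z => X.mulVec (avg h α (pieces a u) z) := by
  have hsum : blockOp EE α X u = ∑ q : Fin S × Fin S,
      EE q.1 q.2 α (Matrix.of fun m m' => X (q.1, m) (q.2, m')) u := by
    simp only [blockOp, _root_.sum_apply, Fintype.sum_prod_type]
  have hterm := fun q : Fin S × Fin S =>
    ((pieces_congr_ae hh).2 (hEE q.1 q.2 α (Matrix.of fun m m' => X (q.1, m) (q.2, m')) u)).trans
      (pieces_Efun hh hdisj q.1 q.2 α (Matrix.of fun m m' => X (q.1, m) (q.2, m')) u)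
  rw [hsum]
  filter_upwards [pieces_Lp_sum hh Finset.univ fun q : Fin S × Fin S =>
    EE q.1 q.2 α (Matrix.of fun m m' => X (q.1, m) (q.2, m')) u, ae_all_iff.2 hterm] with z hz ht
  rw [hz]
  funext p
  simp only [ht, Finset.sum_apply, Fintype.sum_prod_type, Matrix.mulVec, dotProduct,
    Matrix.of_apply]
  rw [Finset.sum_eq_single p.1]
  · simp
  · intro i _ hi
    simp [hi.symm]
  · simp

theorem blockOp_add (hh : 0 < h)
    (hdisj : ∀ i j : Fin S, i ≠ j → Disjoint (OmegaI a h i) (OmegaI a h j))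
    (hEE : ∀ i j α A (u : Lp (V M) 2 (volume.restrict (Omega a h))),
      (EE i j α A u : (Fin N → ℝ) → V M) =ᵐ[volume.restrict (Omega a h)] Efun a h i j α A u)
    (α : Finset (Fin N)) (X Y : Matrix (Fin S × Fin M) (Fin S × Fin M) ℂ) :
    blockOp EE α (X + Y) = blockOp EE α X + blockOp EE α Y := by
  ext1 u
  refine Lp_eq_of_pieces hh ?_
  filter_upwards [pieces_blockOp hh hdisj hEE α (X + Y) u, pieces_blockOp hh hdisj hEE α X u,
    pieces_blockOp hh hdisj hEE α Y u,
    (pieces_congr_ae hh).2 (Lp.coeFn_add (blockOp EE α X u) (blockOp EE α Y u))]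
    with z h₁ h₂ h₃ h₄
  rw [_root_.add_apply, h₁, h₄, Matrix.add_mulVec, ← h₂, ← h₃]
  rfl

theorem blockOp_mul (hh : 0 < h)
    (hdisj : ∀ i j : Fin S, i ≠ j → Disjoint (OmegaI a h i) (OmegaI a h j))
    (hEE : ∀ i j α A (u : Lp (V M) 2 (volume.restrict (Omega a h))),
      (EE i j α A u : (Fin N → ℝ) → V M) =ᵐ[volume.restrict (Omega a h)] Efun a h i j α A u)
    (α β : Finset (Fin N))
    (X Y : Matrix (Fin S × Fin M) (Fin S × Fin M) ℂ) :
    blockOp EE α X * blockOp EE β Y = blockOp EE (α ∪ β) (X * Y) := by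
  ext1 u
  refine Lp_eq_of_pieces hh ?_
  have hu := integrable_pieces hh u
  filter_upwards [pieces_blockOp hh hdisj hEE α X (blockOp EE β Y u),
    avg_congr_ae hh α (pieces_blockOp hh hdisj hEE β Y u),
    avg_mulVec hh α Y (integrable_avg hh β hu), avg_avg hh α β hu,
    pieces_blockOp hh hdisj hEE (α ∪ β) (X * Y) u] with z h₁ h₂ h₃ h₄ h₅
  rw [h₅, ← Matrix.mulVec_mulVec, ← h₄, ← h₃, ← h₂]
  exact h₁

theorem blockOp_empty_one (hh : 0 < h)
    (hdisj : ∀ i j : Fin S, i ≠ j → Disjoint (OmegaI a h i) (OmegaI a h j))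
    (hEE : ∀ i j α A (u : Lp (V M) 2 (volume.restrict (Omega a h))),
      (EE i j α A u : (Fin N → ℝ) → V M) =ᵐ[volume.restrict (Omega a h)] Efun a h i j α A u) :
    blockOp EE ∅ 1 = 1 := by
  ext1 u
  refine Lp_eq_of_pieces hh ?_
  filter_upwards [pieces_blockOp hh hdisj hEE ∅ 1 u] with z hz
  rw [hz, avg_empty hh, Matrix.one_mulVec]
  rfl

theorem sum_blockOp_mul_sum_blockOp (hh : 0 < h)
    (hdisj : ∀ i j : Fin S, i ≠ j → Disjoint (OmegaI a h i) (OmegaI a h j))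
    (hEE : ∀ i j α A (u : Lp (V M) 2 (volume.restrict (Omega a h))),
      (EE i j α A u : (Fin N → ℝ) → V M) =ᵐ[volume.restrict (Omega a h)] Efun a h i j α A u)
    {X Y : Finset (Fin N) → Matrix (Fin S × Fin M) (Fin S × Fin M) ℂ}
    (hXY : ∀ α : Finset (Fin N), (∑ β ∈ α.powerset, X β) * ∑ β ∈ α.powerset, Y β = 1) :
    (∑ α, blockOp EE α (X α)) * ∑ α, blockOp EE α (Y α) = 1 := by
  rw [← blockOp_empty_one hh hdisj hEE]
  exact sum_mul_sum_eq_of_mul_eq_one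
    (fun α => AddMonoidHom.mk' (blockOp EE α) (blockOp_add hh hdisj hEE α))
    (blockOp_mul hh hdisj hEE) hXY

theorem pieces_sum_blockOp (hh : 0 < h)
    (hdisj : ∀ i j : Fin S, i ≠ j → Disjoint (OmegaI a h i) (OmegaI a h j))
    (hEE : ∀ i j α A (u : Lp (V M) 2 (volume.restrict (Omega a h))),
      (EE i j α A u : (Fin N → ℝ) → V M) =ᵐ[volume.restrict (Omega a h)] Efun a h i j α A u)
    (X : Finset (Fin N) → Matrix (Fin S × Fin M) (Fin S × Fin M) ℂ)
    (u : Lp (V M) 2 (volume.restrict (Omega a h))) :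
    pieces a ((∑ α, blockOp EE α (X α)) u) =ᵐ[cubeMeasure N h]
      fun z => ∑ α, (X α).mulVec (avg h α (pieces a u) z) := by
  rw [_root_.sum_apply]
  filter_upwards [pieces_Lp_sum hh Finset.univ fun α => blockOp EE α (X α) u,
    ae_all_iff.2 fun α => pieces_blockOp hh hdisj hEE α (X α) u] with z hz ht
  rw [hz]
  exact Finset.sum_congr rfl fun α _ => ht α

end blockOp

/-- Every oscillating function times a constant vector is realized by an element of `L²`. -/
theorem exists_pieces_eq_osc_smul {N M S : ℕ} {a : Fin S → Fin N → ℝ} {h : ℝ} (hh : 0 < h)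
    (hdisj : ∀ i j : Fin S, i ≠ j → Disjoint (OmegaI a h i) (OmegaI a h j))
    (α : Finset (Fin N)) (v : Fin S × Fin M → ℂ) :
    ∃ u : Lp (V M) 2 (volume.restrict (Omega a h)),
      pieces a u =ᵐ[cubeMeasure N h] fun z => osc h α z • v := by
  let f : Fin S → (Fin N → ℝ) → V M := fun i => (OmegaI a h i).indicator fun x =>
    osc h α (x - a i) • (WithLp.toLp 2 fun m => v (i, m) : V M)
  have hf : ∀ i, MemLp (f i) 2 (volume.restrict (Omega a h)) := fun i => by
    refine (memLp_indicator_iff_restrict (measurableSet_OmegaI i)).2 ?_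
    rw [Measure.restrict_restrict_of_subset (show OmegaI a h i ⊆ Omega a h from
      Set.subset_iUnion _ i)]
    have hcube : volume (cube N h) < ⊤ := by
      rw [cube, volume_pi_pi]
      exact ENNReal.prod_lt_top fun n _ => by simp
    have hfin : IsFiniteMeasure (volume.restrict (OmegaI a h i)) := by
      have : IsFiniteMeasure (volume.restrict (cube N h)) := ⟨by simpa using hcube⟩
      rw [← (measurePreserving_add_restrict i).map_eq]
      infer_instance
    refine MemLp.of_bound ?_ ‖(WithLp.toLp 2 fun m => v (i, m) : V M)‖
      (Filter.Eventually.of_forall fun x => ?_)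
    · exact (((measurable_osc h α).comp (measurable_id.sub_const (a i))).smul_const
        _).aestronglyMeasurable
    · rw [norm_smul, Real.norm_eq_abs, abs_osc, one_mul]
  have hsum : MemLp (fun x => ∑ i, f i x) 2 (volume.restrict (Omega a h)) :=
    memLp_finsetSum _ fun i _ => hf i
  refine ⟨hsum.toLp, ?_⟩
  filter_upwards [(pieces_congr_ae hh).2 hsum.coeFn_toLp, ae_mem_cube hh] with z hz hmem
  rw [hz]
  funext p
  have hp : ∑ i, f i (a p.1 + z) = f p.1 (a p.1 + z) := by
    refine Finset.sum_eq_single p.1 (fun i _ hi => ?_) (by simp)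
    exact Set.indicator_of_notMem
      (Set.disjoint_left.1 (hdisj p.1 i hi.symm) (add_mem_OmegaI_iff.2 hmem)) _
  simp only [pieces, hp, f, Set.indicator_of_mem (add_mem_OmegaI_iff.2 hmem),
    add_sub_cancel_left]
  rfl

theorem isUnit_sum_powerset_of_isUnit {N M S : ℕ} {a : Fin S → Fin N → ℝ} {h : ℝ} (hh : 0 < h)
    (hdisj : ∀ i j : Fin S, i ≠ j → Disjoint (OmegaI a h i) (OmegaI a h j))
    {EE : Fin S → Fin S → Finset (Fin N) → Matrix (Fin M) (Fin M) ℂ →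
      (Lp (V M) 2 (volume.restrict (Omega a h)) →L[ℂ]
        Lp (V M) 2 (volume.restrict (Omega a h)))}
    (hEE : ∀ i j α A (u : Lp (V M) 2 (volume.restrict (Omega a h))),
      (EE i j α A u : (Fin N → ℝ) → V M) =ᵐ[volume.restrict (Omega a h)] Efun a h i j α A u)
    {X : Finset (Fin N) → Matrix (Fin S × Fin M) (Fin S × Fin M) ℂ}
    (hX : IsUnit (∑ α, blockOp EE α (X α))) (α : Finset (Fin N)) :
    IsUnit (∑ β ∈ α.powerset, X β) := by
  have := isProbabilityMeasure_cubeMeasure (N := N) hh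
  rw [Matrix.isUnit_iff_isUnit_det, isUnit_iff_ne_zero]
  intro hdet
  obtain ⟨v, hv, hXv⟩ := Matrix.exists_mulVec_eq_zero_iff.2 hdet
  obtain ⟨u, hu⟩ := exists_pieces_eq_osc_smul hh hdisj α v
  have hzero := (pieces_congr_ae hh).2 (Lp.coeFn_zero (V M) 2 (volume.restrict (Omega a h)))
  have hXu : (∑ β, blockOp EE β (X β)) u = 0 := by
    refine Lp_eq_of_pieces hh ?_
    filter_upwards [pieces_sum_blockOp hh hdisj hEE X u, hzero,
      ae_all_iff.2 fun β => avg_congr_ae hh β hu] with z hz h0 havg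
    have hsmul : ∀ β, avg h β (fun z => osc h α z • v) z =
        if β ∈ α.powerset then osc h α z • v else 0 := fun β => by
      have := avg_osc hh α β z
      simp only [avg] at this ⊢
      rw [integral_smul_const, this]
      simp only [Finset.mem_powerset, ite_smul, zero_smul]
    rw [hz, h0]
    simp only [havg, hsmul]
    calc ∑ β, (X β).mulVec (if β ∈ α.powerset then osc h α z • v else 0)
        = ∑ β ∈ α.powerset, (X β).mulVec (osc h α z • v) := by
          rw [← Finset.sum_subset (Finset.subset_univ α.powerset) fun β _ hβ => by
            rw [if_neg hβ, Matrix.mulVec_zero]]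
          exact Finset.sum_congr rfl fun β hβ => by rw [if_pos hβ]
      _ = osc h α z • (∑ β ∈ α.powerset, X β).mulVec v := by
          rw [Matrix.sum_mulVec, Finset.smul_sum]
          simp only [Matrix.mulVec_smul]
      _ = _ := by
          rw [hXv, smul_zero]
          rfl
  have hu0 : u = 0 := by
    obtain ⟨T, hT⟩ := hX.exists_left_inv
    have := congrArg (fun L => L u) hT
    simpa [hXu] using this.symm
  subst hu0
  obtain ⟨z, hz, h0⟩ := (hu.and hzero).exists
  have hosc : osc h α z ≠ 0 := fun h' => by simpa [h'] using abs_osc h α z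
  refine hv ((smul_eq_zero.1 (hz.symm.trans h0)).resolve_left hosc)

/-- `𝒜 = ∑_{α,i,j} 𝓔_{ij}^α[𝐀_{ij}^α]` is invertible as a
bounded operator on `L²(Ω → ℂ^M)` iff all the matrices `𝐁_α = ∑_{β⊆α} 𝐀_β`
are invertible; in that case `𝒜⁻¹ = ∑_{α,i,j} 𝓔_{ij}^α[𝐂_{ij}^α]` with
`𝐂_α = ∑_{β⊆α} (−1)^{|α∖β|} 𝐁_β⁻¹`. -/
theorem invertibility_criterion (N M S : ℕ) (hN : 1 ≤ N)
    (hM : 1 ≤ M) (hS : 1 ≤ S) (h : ℝ) (hh : 0 < h) (a : Fin S → Fin N → ℝ)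
    (hdisj : ∀ i j : Fin S, i ≠ j → Disjoint (OmegaI a h i) (OmegaI a h j))
    (EE : Fin S → Fin S → Finset (Fin N) → Matrix (Fin M) (Fin M) ℂ →
      (Lp (V M) 2 (volume.restrict (Omega a h)) →L[ℂ]
        Lp (V M) 2 (volume.restrict (Omega a h))))
    (hEE : ∀ i j α A (u : Lp (V M) 2 (volume.restrict (Omega a h))),
      (EE i j α A u : (Fin N → ℝ) → V M) =ᵐ[volume.restrict (Omega a h)]
        Efun a h i j α A u)
    (coef : Finset (Fin N) → Fin S → Fin S → Matrix (Fin M) (Fin M) ℂ) :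
    (IsUnit (bigSum EE coef) ↔
      ∀ α : Finset (Fin N), IsUnit (∑ β ∈ α.powerset, blockM (coef β))) ∧
    ((∀ α : Finset (Fin N), IsUnit (∑ β ∈ α.powerset, blockM (coef β))) →
      bigSum EE coef * psiOp EE (fun α => (∑ β ∈ α.powerset, blockM (coef β))⁻¹) = 1 ∧
      psiOp EE (fun α => (∑ β ∈ α.powerset, blockM (coef β))⁻¹) * bigSum EE coef = 1) := by
  have hA : bigSum EE coef = ∑ α, blockOp EE α (blockM (coef α)) := rfl
  have hmul : (∀ α : Finset (Fin N), IsUnit (∑ β ∈ α.powerset, blockM (coef β))) →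
      bigSum EE coef * psiOp EE (fun α => (∑ β ∈ α.powerset, blockM (coef β))⁻¹) = 1 ∧
      psiOp EE (fun α => (∑ β ∈ α.powerset, blockM (coef β))⁻¹) * bigSum EE coef = 1 := by
    intro hunit
    constructor
    · refine sum_blockOp_mul_sum_blockOp hh hdisj hEE (X := fun α => blockM (coef α)) fun α => ?_
      rw [sum_powerset_moebius]
      exact Matrix.mul_nonsing_inv _ ((Matrix.isUnit_iff_isUnit_det _).1 (hunit α))
    · refine sum_blockOp_mul_sum_blockOp hh hdisj hEE (Y := fun α => blockM (coef α)) fun α => ?_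
      rw [sum_powerset_moebius]
      exact Matrix.nonsing_inv_mul _ ((Matrix.isUnit_iff_isUnit_det _).1 (hunit α))
  refine ⟨⟨fun hU α => ?_, fun hunit => ?_⟩, hmul⟩
  · rw [hA] at hU
    exact isUnit_sum_powerset_of_isUnit hh hdisj hEE hU α
  · exact ⟨⟨_, _, (hmul hunit).1, (hmul hunit).2⟩, rfl⟩

end Stmt10
end
end

section
/- Let 𝒜 = ∑_{α⊆{1,...,N}} ∑_{i,j=1}^S 𝓔_{ij}^α[𝐀_{ij}^α] be an element of the C*-algebra 𝔄 of operators on L²(Ω → ℂ^M) generated by the elementary operators, and let 𝐁_α = ∑_{β⊆α} 𝐀_β with 𝐀_α = (𝐀_{ij}^α)_{i,j=1}^S ∈ ℂ^{MS×MS}. Then the operator norm of 𝒜 equals the maximum over all α ⊆ {1,...,N} of the largest singular value of 𝐁_α; that is, ‖𝒜‖_{L²→L²} = max_{α⊆{1,...,N}} ‖𝐁_α‖, where ‖𝐁_α‖ is the operator (spectral) norm of the matrix 𝐁_α on ℂ^{MS}. -/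
/-!
STATEMENT 11: For 𝒜 = ∑_{α,i,j} 𝓔_{ij}^α[𝐀_{ij}^α] with 𝐁_α = ∑_{β⊆α} 𝐀_β,
the operator norm satisfies ‖𝒜‖_{L²→L²} = max_α ‖𝐁_α‖, the matrix norm being
the operator (spectral) norm on ℂ^{MS} (largest singular value).
-/

open MeasureTheory Finset

noncomputable section

namespace Stmt11

/-- `ℂ^M` with its Euclidean (Hilbert) structure. -/
abbrev V (M : ℕ) := EuclideanSpace ℂ (Fin M)

/-- The half-open cube `H = [0,h)^N`. -/
def cube (N : ℕ) (h : ℝ) : Set (Fin N → ℝ) := Set.univ.pi fun _ => Set.Ico 0 h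

/-- `combine α y x` agrees with `y` in the coordinates `n ∈ α` and with `x`
in the coordinates `n ∉ α`. -/
def combine {N : ℕ} (α : Finset (Fin N)) (y x : Fin N → ℝ) : Fin N → ℝ :=
  fun n => if n ∈ α then y n else x n

/-- The shifted cube `Ω_i = a_i + [0,h)^N`. -/
def OmegaI {N S : ℕ} (a : Fin S → Fin N → ℝ) (h : ℝ) (i : Fin S) :
    Set (Fin N → ℝ) := {x | x - a i ∈ cube N h}

/-- `Ω = ⋃_{i=1}^S Ω_i`. -/
def Omega {N S : ℕ} (a : Fin S → Fin N → ℝ) (h : ℝ) : Set (Fin N → ℝ) :=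
  ⋃ i, OmegaI a h i

/-- The pointwise formula for the elementary operator `𝓔_{ij}^α[𝐀]`:
`(𝓔_{ij}^α[𝐀]u)(x + a_i) = h^{−|α|} 𝐀 ∫_{[0,h)^{|α|}} u(x' + a_j) dx'_α` for
`x ∈ H`, and `0` outside `Ω_i`.  Here the partial integral over the coordinates
in `α` is realized as an integral over the whole cube `[0,h)^N` (the integrand
does not depend on the coordinates of `y` outside `α`), compensated by the
additional normalization `h^{−(N−|α|)}`. -/
def Efun {N M S : ℕ} (a : Fin S → Fin N → ℝ) (h : ℝ) (i j : Fin S)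
    (α : Finset (Fin N)) (A : Matrix (Fin M) (Fin M) ℂ)
    (u : (Fin N → ℝ) → V M) : (Fin N → ℝ) → V M :=
  (OmegaI a h i).indicator fun x =>
    ((h ^ α.card)⁻¹ * (h ^ (N - α.card))⁻¹ : ℝ) •
      (show V M from WithLp.toLp 2 (A.mulVec
        (show Fin M → ℂ from ∫ y in cube N h, u (a j + combine α y (x - a i)))))

/-- The operator `∑_{α ⊆ {1,...,N}} ∑_{i,j=1}^S 𝓔_{ij}^α[coef α i j]`. -/
def bigSum {N M S : ℕ} {a : Fin S → Fin N → ℝ} {h : ℝ}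
    (EE : Fin S → Fin S → Finset (Fin N) → Matrix (Fin M) (Fin M) ℂ →
      (Lp (V M) 2 (volume.restrict (Omega a h)) →L[ℂ]
        Lp (V M) 2 (volume.restrict (Omega a h))))
    (coef : Finset (Fin N) → Fin S → Fin S → Matrix (Fin M) (Fin M) ℂ) :
    Lp (V M) 2 (volume.restrict (Omega a h)) →L[ℂ]
      Lp (V M) 2 (volume.restrict (Omega a h)) :=
  ∑ α : Finset (Fin N), ∑ i : Fin S, ∑ j : Fin S, EE i j α (coef α i j)

/-- The block matrix `(𝐀_{ij})_{i,j=1}^S ∈ ℂ^{MS×MS}` built from an `S×S` array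
of `M×M` matrices. -/
def blockM {M S : ℕ} (c : Fin S → Fin S → Matrix (Fin M) (Fin M) ℂ) :
    Matrix (Fin S × Fin M) (Fin S × Fin M) ℂ :=
  Matrix.of fun p q => c p.1 q.1 p.2 q.2

/-- The operator (spectral) norm of a square complex matrix, i.e. its norm as a
linear operator on the Euclidean space, i.e. its largest singular value. -/
def matOpNorm {M S : ℕ} (B : Matrix (Fin S × Fin M) (Fin S × Fin M) ℂ) : ℝ :=
  ‖(Matrix.toEuclideanCLM (𝕜 := ℂ) B :
      EuclideanSpace ℂ (Fin S × Fin M) →L[ℂ] EuclideanSpace ℂ (Fin S × Fin M))‖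

/-- The supremum norm on a finite product, as an indexed supremum. -/
lemma pi_norm_eq_iSup {ι E : Type*} [Fintype ι] [SeminormedAddCommGroup E] (f : ι → E) :
    ‖f‖ = ⨆ i, ‖f i‖ :=
  le_antisymm
    ((pi_norm_le_iff_of_nonneg (Real.iSup_nonneg fun i => norm_nonneg (f i))).mpr
      (le_ciSup (Set.finite_range fun i => ‖f i‖).bddAbove))
    (Real.iSup_le (norm_le_pi_norm f) (norm_nonneg f))

section UnionConvolution

variable {ι R B : Type*}

/-- Summation of a family indexed by finsets over all subsets, as a linear map. -/
def subsetSum [AddCommGroup R] [Module ℂ R] :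
    (Finset ι → R) →ₗ[ℂ] (Finset ι → R) where
  toFun A α := ∑ β ∈ α.powerset, A β
  map_add' A A' := by ext α; simp [Finset.sum_add_distrib]
  map_smul' c A := by ext α; simp [Finset.smul_sum]

lemma subsetSum_apply [AddCommGroup R] [Module ℂ R] (A : Finset ι → R) (α : Finset ι) :
    subsetSum A α = ∑ β ∈ α.powerset, A β := rfl

lemma subsetSum_injective [AddCommGroup R] [Module ℂ R] :
    Function.Injective (subsetSum : (Finset ι → R) →ₗ[ℂ] (Finset ι → R)) := by
  rw [injective_iff_map_eq_zero]
  intro A hA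
  ext α
  induction α using Finset.strongInduction with
  | H α ih =>
    have h := congrFun hA α
    rw [subsetSum_apply, Finset.sum_eq_single_of_mem α (Finset.mem_powerset_self α)] at h
    · exact h
    · exact fun β hβ hne => ih β ((Finset.mem_powerset.mp hβ).ssubset_of_ne hne)

variable [Fintype ι] [DecidableEq ι]

/-- The subset sums of a union convolution are the products of the subset sums. -/
lemma subsetSum_unionConvolution [Ring R] [Algebra ℂ R] (A A' : Finset ι → R) :
    subsetSum (fun γ => ∑ p : Finset ι × Finset ι, if p.1 ∪ p.2 = γ then A p.1 * A' p.2 else 0) =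
      subsetSum A * subsetSum A' := by
  ext α
  simp only [subsetSum_apply, Pi.mul_apply, Finset.sum_mul_sum]
  rw [Finset.sum_comm, ← Finset.sum_product' (f := fun i j => A i * A' j),
    ← Finset.sum_subset (Finset.subset_univ (α.powerset ×ˢ α.powerset))]
  · refine Finset.sum_congr rfl fun p hp => ?_
    rw [Finset.sum_ite_eq, if_pos]
    simp only [Finset.mem_product, Finset.mem_powerset] at hp ⊢
    exact Finset.union_subset hp.1 hp.2
  · intro p _ hp
    rw [Finset.sum_ite_eq, if_neg]
    simp only [Finset.mem_product, Finset.mem_powerset] at hp ⊢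
    exact fun h => hp (Finset.union_subset_iff.mp h)

/-- A family of linear maps which multiplies along unions of the index sets and respects the
involution combines into a map whose norm is the supremum norm of the subset sums. -/
lemma norm_sum_eq_norm_subsetSum [CStarAlgebra R] [FiniteDimensional ℂ R] [CStarAlgebra B]
    (F : Finset ι → R →ₗ[ℂ] B)
    (hmul : ∀ α β X Y, F α X * F β Y = F (α ∪ β) (X * Y))
    (hstar : ∀ α X, star (F α X) = F α (star X))
    (hinj : ∀ A : Finset ι → R, ∑ α, F α (A α) = 0 → subsetSum A = 0) (A : Finset ι → R) :
    ‖∑ α, F α (A α)‖ = ‖subsetSum A‖ := by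
  let Z : (Finset ι → R) ≃ₗ[ℂ] (Finset ι → R) :=
    LinearEquiv.ofInjectiveEndo subsetSum subsetSum_injective
  have hZ : ∀ A, Z A = subsetSum A := fun A => rfl
  let T : (Finset ι → R) →ₗ[ℂ] B := ∑ α, F α ∘ₗ LinearMap.proj α
  have hT : ∀ A, T A = ∑ α, F α (A α) := fun A => by simp [T]
  have hTmul : ∀ A A', T A * T A' = T (Z.symm (Z A * Z A')) := by
    intro A A'
    have : Z.symm (Z A * Z A') = fun γ => ∑ p : Finset ι × Finset ι,
        if p.1 ∪ p.2 = γ then A p.1 * A' p.2 else 0 := by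
      rw [LinearEquiv.symm_apply_eq, hZ, hZ, hZ, subsetSum_unionConvolution]
    rw [this, hT, hT, hT, Finset.sum_mul_sum, ← Finset.sum_product', Finset.univ_product_univ]
    simp only [map_sum]
    rw [Finset.sum_comm]
    refine Finset.sum_congr rfl fun p _ => ?_
    rw [Finset.sum_eq_single (p.1 ∪ p.2)]
    · simp [hmul]
    · intro b _ hb
      simp [Ne.symm hb]
    · simp
  have hTstar : ∀ A, T (Z.symm (star (Z A))) = star (T A) := by
    intro A
    have : Z.symm (star (Z A)) = star A := by
      rw [LinearEquiv.symm_apply_eq, hZ, hZ]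
      ext α
      simp [subsetSum_apply]
    rw [this, hT, hT, star_sum]
    simp [hstar]
  let Φ : (Finset ι → R) →⋆ₙₐ[ℂ] B :=
    { toFun := fun b => T (Z.symm b)
      map_smul' := fun c b => by simp
      map_zero' := by simp
      map_add' := fun b b' => by simp
      map_mul' := fun b b' => by simp [hTmul]
      map_star' := fun b => by simpa using hTstar (Z.symm b) }
  have hΦ : Function.Injective Φ := by
    rw [injective_iff_map_eq_zero]
    intro b hb
    have := hinj (Z.symm b) (by rw [← hT]; exact hb)
    rwa [← hZ, LinearEquiv.apply_symm_apply] at this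
  have := NonUnitalStarAlgHom.norm_map Φ hΦ (Z A)
  rw [hZ] at this
  rw [← this, ← hT]
  change _ = ‖T (Z.symm (subsetSum A))‖
  rw [← hZ, LinearEquiv.symm_apply_apply]

end UnionConvolution

section CubeMeasure

variable {N : ℕ} {h : ℝ}

/-- Lebesgue measure on the cube `[0,h)^N`. -/
abbrev cubeMeasure (N : ℕ) (h : ℝ) : Measure (Fin N → ℝ) :=
  Measure.pi fun _ => volume.restrict (Set.Ico 0 h)

lemma volume_restrict_cube : volume.restrict (cube N h) = cubeMeasure N h := by
  rw [cube, volume_pi, Measure.restrict_pi_pi]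

lemma cubeMeasure_real_univ (hh : 0 < h) : (cubeMeasure N h).real Set.univ = h ^ N := by
  simp [Measure.real, Measure.pi_univ, hh.le]

/-- Exchange of the coordinates in `α` between two points. -/
def exchange (α : Finset (Fin N)) (p : (Fin N → ℝ) × (Fin N → ℝ)) :
    (Fin N → ℝ) × (Fin N → ℝ) :=
  (combine α p.2 p.1, combine α p.1 p.2)

lemma exchange_exchange (α : Finset (Fin N)) (p : (Fin N → ℝ) × (Fin N → ℝ)) :
    exchange α (exchange α p) = p := by
  ext n <;> simp only [exchange, combine] <;> split_ifs <;> rfl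

lemma measurePreserving_exchange (α : Finset (Fin N)) :
    MeasurePreserving (exchange α) ((cubeMeasure N h).prod (cubeMeasure N h))
      ((cubeMeasure N h).prod (cubeMeasure N h)) := by
  let ρ : Measure ℝ := volume.restrict (Set.Ico 0 h)
  have e := measurePreserving_arrowProdEquivProdArrow ℝ ℝ (Fin N) (fun _ => ρ) (fun _ => ρ)
  let s : Fin N → ℝ × ℝ → ℝ × ℝ := fun n => if n ∈ α then Prod.swap else id
  have hs : ∀ n, MeasurePreserving (s n) (ρ.prod ρ) (ρ.prod ρ) := by
    intro n
    by_cases hn : n ∈ α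
    · simpa [s, hn] using Measure.measurePreserving_swap
    · simpa [s, hn] using MeasurePreserving.id _
  have m := measurePreserving_pi (fun _ : Fin N => ρ.prod ρ) (fun _ => ρ.prod ρ) hs
  have key := (e.comp m).comp (e.symm _)
  convert key using 1
  funext p
  ext n <;> by_cases hn : n ∈ α <;>
    simp [exchange, combine, s, hn, MeasurableEquiv.arrowProdEquivProdArrow,
      Equiv.arrowProdEquivProdArrow]

lemma measurableEmbedding_exchange (α : Finset (Fin N)) : MeasurableEmbedding (exchange α) :=
  (MeasurableEquiv.ofInvolutive (exchange α) (exchange_exchange α)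
    (measurePreserving_exchange (h := 1) α).measurable).measurableEmbedding

lemma ae_ae_combine (α : Finset (Fin N)) {p : (Fin N → ℝ) → Prop}
    (hp : ∀ᵐ x ∂cubeMeasure N h, p x) :
    ∀ᵐ x ∂cubeMeasure N h, ∀ᵐ y ∂cubeMeasure N h, p (combine α y x) :=
  Measure.ae_ae_of_ae_prod
    ((Measure.quasiMeasurePreserving_fst.comp
      (measurePreserving_exchange α).quasiMeasurePreserving).ae hp)

variable {E : Type*} [NormedAddCommGroup E]

lemma integrable_prod_combine (α : Finset (Fin N)) {f : (Fin N → ℝ) → E}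
    (hf : Integrable f (cubeMeasure N h)) :
    Integrable (fun p : (Fin N → ℝ) × (Fin N → ℝ) => f (combine α p.2 p.1))
      ((cubeMeasure N h).prod (cubeMeasure N h)) :=
  (measurePreserving_exchange α).integrable_comp_of_integrable (hf.comp_fst _)

lemma ae_integrable_combine (α : Finset (Fin N)) {f : (Fin N → ℝ) → E}
    (hf : Integrable f (cubeMeasure N h)) :
    ∀ᵐ x ∂cubeMeasure N h, Integrable (fun y => f (combine α y x)) (cubeMeasure N h) :=
  (integrable_prod_combine α hf).prod_right_ae

variable [NormedSpace ℝ E]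

lemma integral_exchange (α : Finset (Fin N)) (f : (Fin N → ℝ) × (Fin N → ℝ) → E) :
    ∫ p, f (exchange α p) ∂(cubeMeasure N h).prod (cubeMeasure N h) =
      ∫ p, f p ∂(cubeMeasure N h).prod (cubeMeasure N h) :=
  (measurePreserving_exchange α).integral_comp (measurableEmbedding_exchange α) f

lemma integral_integral_combine (hh : 0 < h) (α : Finset (Fin N)) {f : (Fin N → ℝ) → E}
    (hf : Integrable f (cubeMeasure N h)) :
    ∫ y, ∫ z, f (combine α z y) ∂cubeMeasure N h ∂cubeMeasure N h =
      h ^ N • ∫ w, f w ∂cubeMeasure N h := by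
  rw [integral_integral (f := fun y z => f (combine α z y)) (integrable_prod_combine α hf),
    ← cubeMeasure_real_univ hh, ← integral_fun_fst]
  exact integral_exchange α fun p => f p.1

lemma combine_combine (α β : Finset (Fin N)) (x y z : Fin N → ℝ) :
    combine β z (combine α y x) = combine (α ∪ β) (combine β z y) x := by
  funext n
  by_cases hα : n ∈ α <;> by_cases hβ : n ∈ β <;> simp [combine, hα, hβ]

/-- Averaging over the coordinates in `α` is symmetric with respect to the `L²` inner product. -/
lemma integral_inner_integral_combine (α : Finset (Fin N)) {F : Type*} [NormedAddCommGroup F]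
    [InnerProductSpace ℂ F] [CompleteSpace F] {f g : (Fin N → ℝ) → F}
    (hf : MemLp f 2 (cubeMeasure N h)) (hg : MemLp g 2 (cubeMeasure N h)) :
    ∫ x, inner ℂ (∫ y, f (combine α y x) ∂cubeMeasure N h) (g x) ∂cubeMeasure N h =
      ∫ x, inner ℂ (f x) (∫ y, g (combine α y x) ∂cubeMeasure N h) ∂cubeMeasure N h := by
  have hfst {f : (Fin N → ℝ) → F} (hf : MemLp f 2 (cubeMeasure N h)) :
      MemLp (fun p : (Fin N → ℝ) × (Fin N → ℝ) => f p.1) 2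
        ((cubeMeasure N h).prod (cubeMeasure N h)) := hf.comp_fst _
  have hcomb {f : (Fin N → ℝ) → F} (hf : MemLp f 2 (cubeMeasure N h)) :
      MemLp (fun p : (Fin N → ℝ) × (Fin N → ℝ) => f (combine α p.2 p.1)) 2
        ((cubeMeasure N h).prod (cubeMeasure N h)) :=
    (hfst hf).comp_measurePreserving (measurePreserving_exchange α)
  have hint {u v : (Fin N → ℝ) × (Fin N → ℝ) → F}
      (hu : MemLp u 2 ((cubeMeasure N h).prod (cubeMeasure N h)))
      (hv : MemLp v 2 ((cubeMeasure N h).prod (cubeMeasure N h))) :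
      Integrable (fun p => inner ℂ (u p) (v p))
        ((cubeMeasure N h).prod (cubeMeasure N h)) := by
    refine (L2.integrable_inner (𝕜 := ℂ) (hu.toLp u) (hv.toLp v)).congr ?_
    filter_upwards [hu.coeFn_toLp, hv.coeFn_toLp] with p h1 h2
    rw [h1, h2]
  calc
    _ = ∫ x, ∫ y, inner ℂ (f (combine α y x)) (g x) ∂cubeMeasure N h ∂cubeMeasure N h := by
      refine integral_congr_ae ?_
      filter_upwards [ae_integrable_combine α (hf.integrable one_le_two)] with x hx
      rw [← inner_conj_symm, ← integral_inner hx, ← integral_conj]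
      simp only [inner_conj_symm]
    _ = ∫ p, inner ℂ (f (combine α p.2 p.1)) (g p.1)
          ∂(cubeMeasure N h).prod (cubeMeasure N h) :=
      integral_integral (f := fun x y => inner ℂ (f (combine α y x)) (g x))
        (hint (hcomb hf) (hfst hg))
    _ = ∫ p, inner ℂ (f p.1) (g (combine α p.2 p.1))
          ∂(cubeMeasure N h).prod (cubeMeasure N h) := by
      rw [← integral_exchange α]
      refine integral_congr_ae (ae_of_all _ fun p => ?_)
      have := congrArg Prod.fst (exchange_exchange α p)
      simp only [exchange] at this ⊢
      rw [this]
    _ = ∫ x, ∫ y, inner ℂ (f x) (g (combine α y x)) ∂cubeMeasure N h ∂cubeMeasure N h :=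
      (integral_integral (f := fun x y => inner ℂ (f x) (g (combine α y x)))
        (hint (hfst hf) (hcomb hg))).symm
    _ = _ := by
      refine integral_congr_ae ?_
      filter_upwards [ae_integrable_combine α (hg.integrable one_le_two)] with x hx
      rw [← integral_inner hx]

end CubeMeasure

section Translates

variable {N S : ℕ} {h : ℝ} {a : Fin S → Fin N → ℝ}

lemma measurableSet_cube : MeasurableSet (cube N h) :=
  MeasurableSet.univ_pi fun _ => measurableSet_Ico

lemma measurableSet_OmegaI (i : Fin S) : MeasurableSet (OmegaI a h i) :=
  measurableSet_cube.preimage (measurable_id.sub_const (a i))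

lemma preimage_add_OmegaI (i : Fin S) : (a i + ·) ⁻¹' OmegaI a h i = cube N h := by
  ext x
  simp [OmegaI]

lemma measurePreserving_translate (i : Fin S) :
    MeasurePreserving (a i + ·) (cubeMeasure N h) (volume.restrict (OmegaI a h i)) := by
  have := (measurePreserving_add_left volume (a i)).restrict_preimage
    (measurableSet_OmegaI (a := a) (h := h) i)
  rwa [preimage_add_OmegaI, volume_restrict_cube] at this

lemma ae_restrict_Omega_iff {p : (Fin N → ℝ) → Prop} :
    (∀ᵐ x ∂volume.restrict (Omega a h), p x) ↔
      ∀ i, ∀ᵐ x ∂cubeMeasure N h, p (a i + x) := by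
  rw [Omega, ae_restrict_iUnion_iff]
  refine forall_congr' fun i => ?_
  rw [← (measurePreserving_translate (a := a) (h := h) i).map_eq,
    (measurableEmbedding_addLeft (a i)).ae_map_iff]

lemma ae_mem_cube : ∀ᵐ x ∂cubeMeasure N h, x ∈ cube N h := by
  rw [← volume_restrict_cube]
  exact ae_restrict_mem measurableSet_cube

variable {E : Type*} [NormedAddCommGroup E]

lemma memLp_translate {u : (Fin N → ℝ) → E} (hu : MemLp u 2 (volume.restrict (Omega a h)))
    (i : Fin S) : MemLp (fun x => u (a i + x)) 2 (cubeMeasure N h) :=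
  (hu.mono_measure (Measure.restrict_mono (Set.subset_iUnion _ i) le_rfl)).comp_measurePreserving
    (measurePreserving_translate i)

lemma integral_Omega [NormedSpace ℝ E]
    (hdisj : ∀ i j : Fin S, i ≠ j → Disjoint (OmegaI a h i) (OmegaI a h j))
    {f : (Fin N → ℝ) → E} (hf : Integrable f (volume.restrict (Omega a h))) :
    ∫ x in Omega a h, f x = ∑ i, ∫ x, f (a i + x) ∂cubeMeasure N h := by
  rw [Omega, integral_iUnion_fintype (fun i => measurableSet_OmegaI i)
    (fun i j hij => hdisj i j hij)
    (fun i => hf.mono_measure (Measure.restrict_mono (Set.subset_iUnion _ i) le_rfl))]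
  exact Finset.sum_congr rfl fun i _ =>
    ((measurePreserving_translate i).integral_comp (measurableEmbedding_addLeft (a i)) f).symm

end Translates

section Elementary

variable {N M S : ℕ} {h : ℝ} {a : Fin S → Fin N → ℝ}

/-- The action of a matrix on Euclidean space. -/
abbrev act (A : Matrix (Fin M) (Fin M) ℂ) : V M →L[ℂ] V M := Matrix.toEuclideanCLM (𝕜 := ℂ) A

lemma Efun_translate (hdisj : ∀ i j : Fin S, i ≠ j → Disjoint (OmegaI a h i) (OmegaI a h j))
    (i j k : Fin S) (α : Finset (Fin N)) (A : Matrix (Fin M) (Fin M) ℂ)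
    (u : (Fin N → ℝ) → V M) {x : Fin N → ℝ} (hx : x ∈ cube N h) :
    Efun a h i j α A u (a k + x) =
      if k = i then
        (h ^ N)⁻¹ • act A (∫ y, u (a j + combine α y x) ∂cubeMeasure N h)
      else 0 := by
  have hk : a k + x ∈ OmegaI a h k := by simpa [OmegaI] using hx
  split_ifs with hki
  · subst hki
    have hint : (∫ y in cube N h, (u (a j + combine α y x)).ofLp) =
        (∫ y in cube N h, u (a j + combine α y x)).ofLp :=
      (EuclideanSpace.equiv (Fin M) ℂ).integral_comp_comm _
    rw [Efun, Set.indicator_of_mem hk, ← mul_inv, ← pow_add,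
      Nat.add_sub_of_le ((Finset.card_le_univ α).trans_eq (Fintype.card_fin N)),
      add_sub_cancel_left, hint, volume_restrict_cube]
    rfl
  · rw [Efun, Set.indicator_of_notMem]
    exact fun hi => Set.disjoint_left.mp (hdisj k i hki) hk hi

/-- A family of operators given almost everywhere by the formula for elementary operators. -/
def IsElementary (a : Fin S → Fin N → ℝ) (h : ℝ)
    (EE : Fin S → Fin S → Finset (Fin N) → Matrix (Fin M) (Fin M) ℂ →
      (Lp (V M) 2 (volume.restrict (Omega a h)) →L[ℂ]
        Lp (V M) 2 (volume.restrict (Omega a h)))) : Prop :=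
  ∀ i j α A (u : Lp (V M) 2 (volume.restrict (Omega a h))) (k : Fin S),
    ∀ᵐ x ∂cubeMeasure N h, EE i j α A u (a k + x) =
      if k = i then
        (h ^ N)⁻¹ • act A (∫ y, u (a j + combine α y x) ∂cubeMeasure N h)
      else 0

lemma Lp_ext_translate {u v : Lp (V M) 2 (volume.restrict (Omega a h))}
    (huv : ∀ k, ∀ᵐ x ∂cubeMeasure N h, u (a k + x) = v (a k + x)) : u = v :=
  Lp.ext (ae_restrict_Omega_iff.mpr huv)

lemma ae_translate {p : (Fin N → ℝ) → Prop} (hp : ∀ᵐ x ∂volume.restrict (Omega a h), p x)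
    (k : Fin S) : ∀ᵐ x ∂cubeMeasure N h, p (a k + x) :=
  ae_restrict_Omega_iff.mp hp k

variable {EE : Fin S → Fin S → Finset (Fin N) → Matrix (Fin M) (Fin M) ℂ →
  (Lp (V M) 2 (volume.restrict (Omega a h)) →L[ℂ] Lp (V M) 2 (volume.restrict (Omega a h)))}

namespace IsElementary

lemma map_add (hE : IsElementary a h EE) (i j : Fin S) (α : Finset (Fin N))
    (A B : Matrix (Fin M) (Fin M) ℂ) : EE i j α (A + B) = EE i j α A + EE i j α B := by
  refine ContinuousLinearMap.ext fun u => Lp_ext_translate fun k => ?_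
  rw [add_apply]
  filter_upwards [hE i j α (A + B) u k, hE i j α A u k, hE i j α B u k,
    ae_translate (Lp.coeFn_add (EE i j α A u) (EE i j α B u)) k] with x h1 h2 h3 h4
  rw [h1, h4, Pi.add_apply, h2, h3]
  split_ifs <;> simp [act]

lemma map_smul (hE : IsElementary a h EE) (i j : Fin S) (α : Finset (Fin N)) (c : ℂ)
    (A : Matrix (Fin M) (Fin M) ℂ) : EE i j α (c • A) = c • EE i j α A := by
  refine ContinuousLinearMap.ext fun u => Lp_ext_translate fun k => ?_
  rw [smul_apply]
  filter_upwards [hE i j α (c • A) u k, hE i j α A u k,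
    ae_translate (Lp.coeFn_smul c (EE i j α A u)) k] with x h1 h2 h4
  rw [h1, h4, Pi.smul_apply, h2]
  split_ifs
  · rw [act, _root_.map_smul, smul_apply, smul_comm]
  · simp

lemma integrable_translate (u : Lp (V M) 2 (volume.restrict (Omega a h))) (j : Fin S) :
    Integrable (fun x => u (a j + x)) (cubeMeasure N h) :=
  (memLp_translate (Lp.memLp u) j).integrable one_le_two

lemma mul_eq (hE : IsElementary a h EE) (hh : 0 < h) (i j k l : Fin S) (α β : Finset (Fin N))
    (A B : Matrix (Fin M) (Fin M) ℂ) :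
    EE i j α A * EE k l β B = if j = k then EE i l (α ∪ β) (A * B) else 0 := by
  refine ContinuousLinearMap.ext fun u => Lp_ext_translate fun m => ?_
  rw [mul_apply_eq_comp]
  have h2 := ae_ae_combine α (hE k l β B u j)
  split_ifs with hjk
  · subst hjk
    filter_upwards [hE i j α A (EE j l β B u) m, h2, hE i l (α ∪ β) (A * B) u m,
      ae_integrable_combine (α ∪ β) (integrable_translate u l)] with x h1 h2 h3 h4
    rw [h1, h3]
    split_ifs
    · congr 1
      simp only [if_true] at h2
      rw [integral_congr_ae h2]
      simp only [combine_combine]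
      rw [integral_smul, ContinuousLinearMap.integral_comp_comm,
        integral_integral_combine hh β h4]
      · rw [LinearMapClass.map_smul_of_tower, LinearMapClass.map_smul_of_tower,
          LinearMapClass.map_smul_of_tower, inv_smul_smul₀ (pow_pos hh N).ne']
        simp [act]
      · exact (integrable_prod_combine β h4).integral_prod_left
    · rfl
  · filter_upwards [hE i j α A (EE k l β B u) m, h2,
      ae_translate (Lp.coeFn_zero (V M) 2 (volume.restrict (Omega a h))) m] with x h1 h2 h3
    rw [h1, zero_apply, h3]
    simp only [if_neg hjk] at h2
    rw [integral_congr_ae h2]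
    simp

lemma star_eq (hE : IsElementary a h EE)
    (hdisj : ∀ i j : Fin S, i ≠ j → Disjoint (OmegaI a h i) (OmegaI a h j))
    (i j : Fin S) (α : Finset (Fin N)) (A : Matrix (Fin M) (Fin M) ℂ) :
    star (EE i j α A) = EE j i α (star A) := by
  symm
  rw [ContinuousLinearMap.star_eq_adjoint, ContinuousLinearMap.eq_adjoint_iff]
  intro u v
  rw [L2.inner_def, L2.inner_def, integral_Omega hdisj (L2.integrable_inner _ _),
    integral_Omega hdisj (L2.integrable_inner _ _), Finset.sum_eq_single j, Finset.sum_eq_single i]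
  · have hl : ∀ᵐ x ∂cubeMeasure N h, inner ℂ (EE j i α (star A) u (a j + x)) (v (a j + x)) =
        ((h ^ N)⁻¹ : ℝ) • inner ℂ (∫ y, u (a i + combine α y x) ∂cubeMeasure N h)
          (act A (v (a j + x))) := by
      filter_upwards [hE j i α (star A) u j] with x hx
      rw [hx, if_pos rfl, RCLike.real_smul_eq_coe_smul (K := ℂ), inner_smul_real_left, act,
        map_star, ContinuousLinearMap.star_eq_adjoint, ContinuousLinearMap.adjoint_inner_left]
    have hr : ∀ᵐ x ∂cubeMeasure N h, inner ℂ (u (a i + x)) (EE i j α A v (a i + x)) =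
        ((h ^ N)⁻¹ : ℝ) • inner ℂ (u (a i + x))
          (∫ y, act A (v (a j + combine α y x)) ∂cubeMeasure N h) := by
      filter_upwards [hE i j α A v i,
        ae_integrable_combine α (integrable_translate v j)] with x hx hv
      rw [hx, if_pos rfl, ContinuousLinearMap.integral_comp_comm _ hv,
        RCLike.real_smul_eq_coe_smul (K := ℂ), inner_smul_real_right]
    rw [integral_congr_ae hl, integral_congr_ae hr, integral_smul, integral_smul]
    congr 1
    exact integral_inner_integral_combine α (memLp_translate (Lp.memLp u) i)
      ((act A).comp_memLp' (memLp_translate (Lp.memLp v) j))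
  · intro k _ hk
    refine integral_eq_zero_of_ae ?_
    filter_upwards [hE i j α A v k] with x hx
    simp [hx, hk]
  · simp
  · intro k _ hk
    refine integral_eq_zero_of_ae ?_
    filter_upwards [hE j i α (star A) u k] with x hx
    simp [hx, hk]
  · simp

/-- Elementary operators as a linear map of the matrix. -/
def toLinearMap (hE : IsElementary a h EE) (i j : Fin S) (α : Finset (Fin N)) :
    Matrix (Fin M) (Fin M) ℂ →ₗ[ℂ] (Lp (V M) 2 (volume.restrict (Omega a h)) →L[ℂ]
      Lp (V M) 2 (volume.restrict (Omega a h))) where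
  toFun := EE i j α
  map_add' := hE.map_add i j α
  map_smul' := hE.map_smul i j α

/-- The operator attached to a block matrix, averaging over the coordinates in `α`. -/
def blockOperator (hE : IsElementary a h EE) (α : Finset (Fin N)) :
    Matrix (Fin S × Fin M) (Fin S × Fin M) ℂ →ₗ[ℂ]
      (Lp (V M) 2 (volume.restrict (Omega a h)) →L[ℂ]
        Lp (V M) 2 (volume.restrict (Omega a h))) where
  toFun X := ∑ i, ∑ j, hE.toLinearMap i j α (X.submatrix (Prod.mk i) (Prod.mk j))
  map_add' X Y := by simp [Finset.sum_add_distrib, Matrix.submatrix_add]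
  map_smul' c X := by simp [Finset.smul_sum, Matrix.submatrix_smul]

lemma blockOperator_apply (hE : IsElementary a h EE) (α : Finset (Fin N))
    (X : Matrix (Fin S × Fin M) (Fin S × Fin M) ℂ) :
    hE.blockOperator α X = ∑ i, ∑ j, EE i j α (X.submatrix (Prod.mk i) (Prod.mk j)) := rfl

lemma bigSum_eq_sum_blockOperator (hE : IsElementary a h EE)
    (coef : Finset (Fin N) → Fin S → Fin S → Matrix (Fin M) (Fin M) ℂ) :
    bigSum EE coef = ∑ α, hE.blockOperator α (blockM (coef α)) := rfl

lemma blockOperator_mul (hE : IsElementary a h EE) (hh : 0 < h) (α β : Finset (Fin N))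
    (X Y : Matrix (Fin S × Fin M) (Fin S × Fin M) ℂ) :
    hE.blockOperator α X * hE.blockOperator β Y = hE.blockOperator (α ∪ β) (X * Y) := by
  have hXY : ∀ i l, (X * Y).submatrix (Prod.mk i) (Prod.mk l) =
      ∑ j, X.submatrix (Prod.mk i) (Prod.mk j) * Y.submatrix (Prod.mk j) (Prod.mk l) := by
    intro i l
    ext p q
    simp [Matrix.mul_apply, Fintype.sum_prod_type, Matrix.sum_apply]
  have hsum : ∀ i l, EE i l (α ∪ β) ((X * Y).submatrix (Prod.mk i) (Prod.mk l)) =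
      ∑ j, EE i l (α ∪ β)
        (X.submatrix (Prod.mk i) (Prod.mk j) * Y.submatrix (Prod.mk j) (Prod.mk l)) := by
    intro i l
    rw [hXY]
    exact map_sum (hE.toLinearMap i l (α ∪ β)) _ _
  simp only [blockOperator_apply, hsum, Finset.sum_mul, Finset.mul_sum, hE.mul_eq hh,
    Finset.sum_ite_eq', Finset.mem_univ, if_true]
  rw [Finset.sum_comm_cycle]
  exact Finset.sum_congr rfl fun i _ => Finset.sum_comm

lemma blockOperator_star (hE : IsElementary a h EE)
    (hdisj : ∀ i j : Fin S, i ≠ j → Disjoint (OmegaI a h i) (OmegaI a h j))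
    (α : Finset (Fin N)) (X : Matrix (Fin S × Fin M) (Fin S × Fin M) ℂ) :
    star (hE.blockOperator α X) = hE.blockOperator α (star X) := by
  simp only [blockOperator_apply, star_sum, hE.star_eq hdisj]
  rw [Finset.sum_comm]
  rfl

end IsElementary

end Elementary

section Wave

variable {N : ℕ} {h : ℝ}

/-- A plane wave on the cube, constant exactly in the coordinates belonging to `α`. -/
def wave (h : ℝ) (α : Finset (Fin N)) (x : Fin N → ℝ) : ℂ :=
  ∏ n, if n ∈ α then 1 else Complex.exp (2 * Real.pi * Complex.I / h * x n)

lemma continuous_wave (α : Finset (Fin N)) : Continuous (wave h α) := by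
  refine continuous_finsetProd _ fun n _ => ?_
  split_ifs <;> fun_prop

lemma norm_wave (α : Finset (Fin N)) (x : Fin N → ℝ) : ‖wave h α x‖ = 1 := by
  rw [wave, norm_prod]
  refine Finset.prod_eq_one fun n _ => ?_
  split_ifs
  · simp
  · rw [show (2 * Real.pi * Complex.I / h * x n : ℂ) = ((2 * Real.pi / h * x n : ℝ) : ℂ) *
      Complex.I by push_cast; ring, Complex.norm_exp_ofReal_mul_I]

lemma integral_Ico_exp (hh : 0 < h) :
    ∫ t in Set.Ico 0 h, Complex.exp (2 * Real.pi * Complex.I / h * t) = 0 := by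
  have hh' : (h : ℂ) ≠ 0 := by exact_mod_cast hh.ne'
  rw [integral_Ico_eq_integral_Ioc, ← intervalIntegral.integral_of_le hh.le,
    integral_exp_mul_complex (by simp [hh', Real.pi_ne_zero]), div_mul_cancel₀ _ hh']
  simp [Complex.exp_two_pi_mul_I]

lemma integral_wave_combine (hh : 0 < h) (α β : Finset (Fin N)) (x : Fin N → ℝ) :
    ∫ y, wave h α (combine β y x) ∂cubeMeasure N h =
      if β ⊆ α then (h : ℂ) ^ N * wave h α x else 0 := by
  split_ifs with hβ
  · have : ∀ y, wave h α (combine β y x) = wave h α x := by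
      intro y
      refine Finset.prod_congr rfl fun n _ => ?_
      by_cases hn : n ∈ α
      · simp [hn]
      · have hnβ : n ∉ β := fun hb => hn (hβ hb)
        simp [combine, hnβ]
    simp only [this]
    rw [integral_const, cubeMeasure_real_univ hh]
    simp
  · obtain ⟨m, hmβ, hmα⟩ := Finset.not_subset.mp hβ
    let f : Fin N → ℝ → ℂ := fun n t =>
      if n ∈ α then 1 else
        Complex.exp (2 * Real.pi * Complex.I / h * ((if n ∈ β then t else x n : ℝ) : ℂ))
    have hf : ∀ y, wave h α (combine β y x) = ∏ n, f n (y n) := fun y => rfl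
    simp only [hf]
    rw [integral_fintype_prod_eq_prod (f := f)]
    refine Finset.prod_eq_zero (Finset.mem_univ m) ?_
    simpa [f, hmα, hmβ] using integral_Ico_exp hh

end Wave

namespace IsElementary

variable {N M S : ℕ} {h : ℝ} {a : Fin S → Fin N → ℝ}
  {EE : Fin S → Fin S → Finset (Fin N) → Matrix (Fin M) (Fin M) ℂ →
    (Lp (V M) 2 (volume.restrict (Omega a h)) →L[ℂ] Lp (V M) 2 (volume.restrict (Omega a h)))}

lemma exists_wave (hdisj : ∀ i j : Fin S, i ≠ j → Disjoint (OmegaI a h i) (OmegaI a h j))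
    (α : Finset (Fin N)) (j : Fin S) (v : V M) :
    ∃ u : Lp (V M) 2 (volume.restrict (Omega a h)), ∀ k, ∀ᵐ x ∂cubeMeasure N h,
      u (a k + x) = if k = j then wave h α x • v else 0 := by
  let w : (Fin N → ℝ) → V M := (OmegaI a h j).indicator fun x => wave h α (x - a j) • v
  have hfin : IsFiniteMeasure (volume.restrict (Omega a h)) := by
    refine ⟨?_⟩
    rw [Measure.restrict_apply_univ, Omega]
    refine (measure_iUnion_le _).trans_lt ?_
    rw [tsum_fintype]
    refine ENNReal.sum_lt_top.mpr fun i _ => ?_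
    rw [← Measure.restrict_apply_univ, ← (measurePreserving_translate i).map_eq]
    exact measure_lt_top _ _
  have hw : MemLp w 2 (volume.restrict (Omega a h)) := by
    refine MemLp.of_bound ?_ ‖v‖ (ae_of_all _ fun x => ?_)
    · refine Measurable.aestronglyMeasurable ?_
      refine Measurable.indicator ?_ (measurableSet_OmegaI j)
      exact (((continuous_wave α).comp (continuous_id.sub continuous_const)).smul
        continuous_const).measurable
    · refine (norm_indicator_le_norm_self _ _).trans ?_
      simp [norm_smul, norm_wave]
  refine ⟨hw.toLp w, fun k => ?_⟩
  filter_upwards [ae_translate hw.coeFn_toLp k, ae_mem_cube] with x hx hxc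
  have hk : a k + x ∈ OmegaI a h k := by simpa [OmegaI] using hxc
  rw [hx]
  split_ifs with hkj
  · subst hkj
    simp [w, Set.indicator_of_mem hk]
  · exact Set.indicator_of_notMem (fun hj => Set.disjoint_left.mp (hdisj k j hkj) hk hj) _

lemma subsetSum_eq_zero (hE : IsElementary a h EE) (hh : 0 < h)
    (hdisj : ∀ i j : Fin S, i ≠ j → Disjoint (OmegaI a h i) (OmegaI a h j))
    (A : Finset (Fin N) → Matrix (Fin S × Fin M) (Fin S × Fin M) ℂ)
    (hA : ∑ α, hE.blockOperator α (A α) = 0) : subsetSum A = 0 := by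
  funext α
  suffices hblock : ∀ i j, ∑ β ∈ α.powerset, (A β).submatrix (Prod.mk i) (Prod.mk j) = 0 by
    ext ⟨i, p⟩ ⟨j, q⟩
    simpa [subsetSum_apply, Matrix.sum_apply] using congrFun₂ (hblock i j) p q
  intro i j
  apply (Matrix.toEuclideanCLM (𝕜 := ℂ) (n := Fin M)).injective
  rw [map_zero]
  refine ContinuousLinearMap.ext fun v => ?_
  obtain ⟨u, hu⟩ := exists_wave hdisj α j v
  have hterm : ∀ β k l, ∀ᵐ x ∂cubeMeasure N h,
      EE k l β ((A β).submatrix (Prod.mk k) (Prod.mk l)) u (a i + x) =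
        if l = j then if i = k then if β ⊆ α then
          wave h α x • act ((A β).submatrix (Prod.mk k) (Prod.mk l)) v else 0 else 0 else 0 := by
    intro β k l
    filter_upwards [hE k l β ((A β).submatrix (Prod.mk k) (Prod.mk l)) u i,
      ae_ae_combine β (hu l)] with x hx hux
    rw [hx]
    split_ifs with hik hlj hβ
    · simp only [if_pos hlj] at hux
      rw [integral_congr_ae hux, integral_smul_const, integral_wave_combine hh, if_pos hβ,
        _root_.map_smul, RCLike.real_smul_eq_coe_smul (K := ℂ), smul_smul]
      congr 1
      have hN : ((h : ℂ) ^ N) ≠ 0 := by exact_mod_cast (pow_pos hh N).ne'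
      simp [hN]
    · simp only [if_pos hlj] at hux
      rw [integral_congr_ae hux, integral_smul_const, integral_wave_combine hh, if_neg hβ]
      simp
    · simp only [if_neg hlj] at hux
      rw [integral_congr_ae hux]
      simp
    all_goals rfl
  have hzero : ∀ᵐ x ∂cubeMeasure N h, ((∑ β, hE.blockOperator β (A β)) u) (a i + x) = 0 := by
    rw [hA]
    exact ae_translate (Lp.coeFn_zero (V M) 2 (volume.restrict (Omega a h))) i
  have hsum : ∀ᵐ x ∂cubeMeasure N h, ((∑ β, hE.blockOperator β (A β)) u) (a i + x) =
      ∑ β, ∑ k, ∑ l, EE k l β ((A β).submatrix (Prod.mk k) (Prod.mk l)) u (a i + x) := by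
    simp only [blockOperator_apply, ← Finset.sum_product', Finset.univ_product_univ,
      _root_.sum_apply]
    exact ae_translate (Lp.coeFn_fun_finsetSum _ _) i
  have hne : (cubeMeasure N h).real Set.univ ≠ 0 := by
    rw [cubeMeasure_real_univ hh]
    positivity
  have : (ae (cubeMeasure N h)).NeBot := by
    rw [ae_neBot]
    rintro h0
    simp [h0] at hne
  have hterm' := ae_all_iff.mpr fun β => ae_all_iff.mpr fun k => ae_all_iff.mpr (hterm β k)
  obtain ⟨x, hx0, hxs, hxt⟩ := (hzero.and (hsum.and hterm')).exists
  rw [hxs] at hx0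
  simp only [hxt, Finset.sum_ite_eq, Finset.sum_ite_eq', Finset.mem_univ, if_true] at hx0
  have hmem : ∀ β, β ⊆ α ↔ β ∈ α.powerset := fun β => Finset.mem_powerset.symm
  simp only [hmem, Finset.sum_ite_mem, Finset.univ_inter, ← Finset.smul_sum] at hx0
  have hwave : wave h α x ≠ 0 := fun h0 => by simpa [h0] using norm_wave (h := h) α x
  have hact := (smul_eq_zero.mp hx0).resolve_left hwave
  change Matrix.toEuclideanCLM (𝕜 := ℂ) _ v = 0
  rwa [map_sum, _root_.sum_apply]

end IsElementary

/-- `‖𝒜‖_{L²→L²} = max_{α⊆{1,...,N}} ‖𝐁_α‖`, where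
`𝐁_α = ∑_{β⊆α} 𝐀_β` and `‖𝐁_α‖` is the operator norm of `𝐁_α` on `ℂ^{MS}`
(its largest singular value). -/
theorem operator_norm_eq_max_matrix_norm (N M S : ℕ) (hN : 1 ≤ N)
    (hM : 1 ≤ M) (hS : 1 ≤ S) (h : ℝ) (hh : 0 < h) (a : Fin S → Fin N → ℝ)
    (hdisj : ∀ i j : Fin S, i ≠ j → Disjoint (OmegaI a h i) (OmegaI a h j))
    (EE : Fin S → Fin S → Finset (Fin N) → Matrix (Fin M) (Fin M) ℂ →
      (Lp (V M) 2 (volume.restrict (Omega a h)) →L[ℂ]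
        Lp (V M) 2 (volume.restrict (Omega a h))))
    (hEE : ∀ i j α A (u : Lp (V M) 2 (volume.restrict (Omega a h))),
      (EE i j α A u : (Fin N → ℝ) → V M) =ᵐ[volume.restrict (Omega a h)]
        Efun a h i j α A u)
    (coef : Finset (Fin N) → Fin S → Fin S → Matrix (Fin M) (Fin M) ℂ) :
    ‖bigSum EE coef‖ =
      ⨆ α : Finset (Fin N), matOpNorm (∑ β ∈ α.powerset, blockM (coef β)) := by
  have hE : IsElementary a h EE := by
    intro i j α A u k
    filter_upwards [ae_translate (hEE i j α A u) k, ae_mem_cube] with x hx hxc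
    rw [hx, Efun_translate hdisj i j k α A u hxc]
  open scoped Matrix.Norms.L2Operator in
  rw [hE.bigSum_eq_sum_blockOperator, norm_sum_eq_norm_subsetSum hE.blockOperator
    (hE.blockOperator_mul hh) (hE.blockOperator_star hdisj) (hE.subsetSum_eq_zero hh hdisj),
    pi_norm_eq_iSup]
  rfl

end Stmt11
end
end

section
/- Let 𝒜 = ∑_{α⊆{1,...,N}} ∑_{i,j=1}^S 𝓔_{ij}^α[𝐀_{ij}^α] be an element of the C*-algebra 𝔄 of operators on L²(Ω → ℂ^M) generated by the elementary operators, and let 𝐁_α = ∑_{β⊆α} 𝐀_β with 𝐀_α = (𝐀_{ij}^α)_{i,j=1}^S ∈ ℂ^{MS×MS}. Then the spectrum of 𝒜 as a bounded operator on L² equals the union of the spectra of the matrices 𝐁_α; equivalently, sp(𝒜) = {λ ∈ ℂ : ∏_{α⊆{1,...,N}} det(𝐁_α − λ𝐈) = 0}, where 𝐈 is the MS×MS identity matrix. -/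
/-!
STATEMENT 12: For 𝒜 = ∑_{α,i,j} 𝓔_{ij}^α[𝐀_{ij}^α] with 𝐁_α = ∑_{β⊆α} 𝐀_β,
the spectrum of 𝒜 equals the union of the spectra of the matrices 𝐁_α;
equivalently sp(𝒜) = {λ ∈ ℂ : ∏_α det(𝐁_α − λ𝐈) = 0}.
-/

open MeasureTheory Finset

noncomputable section

namespace Stmt12

/-- `ℂ^M` with its Euclidean (Hilbert) structure. -/
abbrev V (M : ℕ) := EuclideanSpace ℂ (Fin M)

/-- The half-open cube `H = [0,h)^N`. -/
def cube (N : ℕ) (h : ℝ) : Set (Fin N → ℝ) := Set.univ.pi fun _ => Set.Ico 0 h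

/-- `combine α y x` agrees with `y` in the coordinates `n ∈ α` and with `x`
in the coordinates `n ∉ α`. -/
def combine {N : ℕ} (α : Finset (Fin N)) (y x : Fin N → ℝ) : Fin N → ℝ :=
  fun n => if n ∈ α then y n else x n

/-- The shifted cube `Ω_i = a_i + [0,h)^N`. -/
def OmegaI {N S : ℕ} (a : Fin S → Fin N → ℝ) (h : ℝ) (i : Fin S) :
    Set (Fin N → ℝ) := {x | x - a i ∈ cube N h}

/-- `Ω = ⋃_{i=1}^S Ω_i`. -/
def Omega {N S : ℕ} (a : Fin S → Fin N → ℝ) (h : ℝ) : Set (Fin N → ℝ) :=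
  ⋃ i, OmegaI a h i

/-- The pointwise formula for the elementary operator `𝓔_{ij}^α[𝐀]`:
`(𝓔_{ij}^α[𝐀]u)(x + a_i) = h^{−|α|} 𝐀 ∫_{[0,h)^{|α|}} u(x' + a_j) dx'_α` for
`x ∈ H`, and `0` outside `Ω_i`.  Here the partial integral over the coordinates
in `α` is realized as an integral over the whole cube `[0,h)^N` (the integrand
does not depend on the coordinates of `y` outside `α`), compensated by the
additional normalization `h^{−(N−|α|)}`. -/
def Efun {N M S : ℕ} (a : Fin S → Fin N → ℝ) (h : ℝ) (i j : Fin S)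
    (α : Finset (Fin N)) (A : Matrix (Fin M) (Fin M) ℂ)
    (u : (Fin N → ℝ) → V M) : (Fin N → ℝ) → V M :=
  (OmegaI a h i).indicator fun x =>
    ((h ^ α.card)⁻¹ * (h ^ (N - α.card))⁻¹ : ℝ) •
      (show V M from WithLp.toLp 2 (A.mulVec
        (show Fin M → ℂ from ∫ y in cube N h, u (a j + combine α y (x - a i)))))

/-- The operator `∑_{α ⊆ {1,...,N}} ∑_{i,j=1}^S 𝓔_{ij}^α[coef α i j]`. -/
def bigSum {N M S : ℕ} {a : Fin S → Fin N → ℝ} {h : ℝ}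
    (EE : Fin S → Fin S → Finset (Fin N) → Matrix (Fin M) (Fin M) ℂ →
      (Lp (V M) 2 (volume.restrict (Omega a h)) →L[ℂ]
        Lp (V M) 2 (volume.restrict (Omega a h))))
    (coef : Finset (Fin N) → Fin S → Fin S → Matrix (Fin M) (Fin M) ℂ) :
    Lp (V M) 2 (volume.restrict (Omega a h)) →L[ℂ]
      Lp (V M) 2 (volume.restrict (Omega a h)) :=
  ∑ α : Finset (Fin N), ∑ i : Fin S, ∑ j : Fin S, EE i j α (coef α i j)

/-- The block matrix `(𝐀_{ij})_{i,j=1}^S ∈ ℂ^{MS×MS}` built from an `S×S` array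
of `M×M` matrices. -/
def blockM {M S : ℕ} (c : Fin S → Fin S → Matrix (Fin M) (Fin M) ℂ) :
    Matrix (Fin S × Fin M) (Fin S × Fin M) ℂ :=
  Matrix.of fun p q => c p.1 q.1 p.2 q.2

/-! ### Averaging over a subset of the coordinates -/

section PartialMean

variable {N : ℕ}

theorem combine_combine (α β : Finset (Fin N)) (z y x : Fin N → ℝ) :
    combine β z (combine α y x) = combine (α ∪ β) (combine β z y) x := by
  funext n
  by_cases hβ : n ∈ β <;> by_cases hα : n ∈ α <;> simp [combine, hα, hβ]

theorem combine_empty (y x : Fin N → ℝ) : combine ∅ y x = x := by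
  funext n
  simp [combine]

theorem measurable_combine (α : Finset (Fin N)) :
    Measurable fun p : (Fin N → ℝ) × (Fin N → ℝ) => combine α p.2 p.1 := by
  refine measurable_pi_lambda _ fun n => ?_
  by_cases hn : n ∈ α <;> simp only [combine, hn, if_true, if_false] <;> fun_prop

/-- Replacing the coordinates in `α` by independent copies preserves a product
of probability measures. -/
theorem measurePreserving_combine (κ : Fin N → Measure ℝ) [∀ n, IsProbabilityMeasure (κ n)]
    (α : Finset (Fin N)) :
    MeasurePreserving (fun p : (Fin N → ℝ) × (Fin N → ℝ) => combine α p.2 p.1)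
      ((Measure.pi κ).prod (Measure.pi κ)) (Measure.pi κ) := by
  refine ⟨measurable_combine α, (Measure.pi_eq fun s hs => ?_).symm⟩
  rw [Measure.map_apply (measurable_combine α) (MeasurableSet.univ_pi hs)]
  have hpre : (fun p : (Fin N → ℝ) × (Fin N → ℝ) => combine α p.2 p.1) ⁻¹' Set.univ.pi s =
      (Set.univ.pi fun n => if n ∈ α then Set.univ else s n) ×ˢ
        (Set.univ.pi fun n => if n ∈ α then s n else Set.univ) := by
    ext p
    simp only [Set.mem_preimage, Set.mem_univ_pi, Set.mem_prod, combine, ← forall_and]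
    refine forall_congr' fun n => ?_
    by_cases hn : n ∈ α <;> simp [hn]
  rw [hpre, Measure.prod_prod, Measure.pi_pi, Measure.pi_pi, ← Finset.prod_mul_distrib]
  refine Finset.prod_congr rfl fun n _ => ?_
  by_cases hn : n ∈ α <;> simp [hn]

theorem integrable_comp_combine {W : Type*} [NormedAddCommGroup W] (κ : Fin N → Measure ℝ)
    [∀ n, IsProbabilityMeasure (κ n)] (α : Finset (Fin N)) {w : (Fin N → ℝ) → W}
    (hw : Integrable w (Measure.pi κ)) :
    ∀ᵐ x ∂Measure.pi κ, Integrable (fun y => w (combine α y x)) (Measure.pi κ) :=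
  ((measurePreserving_combine κ α).integrable_comp_of_integrable hw).prod_right_ae

variable {W : Type*} [NormedAddCommGroup W] [NormedSpace ℝ W]

/-- The average of `w` over the coordinates in `α`. -/
def partialMean (μ : Measure (Fin N → ℝ)) (α : Finset (Fin N)) (w : (Fin N → ℝ) → W)
    (x : Fin N → ℝ) : W :=
  ∫ y, w (combine α y x) ∂μ

theorem partialMean_empty (μ : Measure (Fin N → ℝ)) [IsProbabilityMeasure μ] [CompleteSpace W]
    (w : (Fin N → ℝ) → W) : partialMean μ ∅ w = w := by
  funext x
  simp [partialMean, combine_empty]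

variable (κ : Fin N → Measure ℝ) [∀ n, IsProbabilityMeasure (κ n)]

theorem partialMean_congr_ae (α : Finset (Fin N)) {w w' : (Fin N → ℝ) → W}
    (hw : w =ᵐ[Measure.pi κ] w') :
    partialMean (Measure.pi κ) α w =ᵐ[Measure.pi κ] partialMean (Measure.pi κ) α w' := by
  have hprod := (measurePreserving_combine κ α).quasiMeasurePreserving.ae_eq_comp hw
  filter_upwards [Measure.ae_ae_of_ae_prod hprod] with x hx
  exact integral_congr_ae hx

theorem partialMean_partialMean (α β : Finset (Fin N)) {w : (Fin N → ℝ) → W}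
    (hw : Integrable w (Measure.pi κ)) :
    partialMean (Measure.pi κ) α (partialMean (Measure.pi κ) β w) =ᵐ[Measure.pi κ]
      partialMean (Measure.pi κ) (α ∪ β) w := by
  filter_upwards [integrable_comp_combine κ (α ∪ β) hw] with x hx
  have hmp := measurePreserving_combine κ β
  simp only [partialMean, combine_combine]
  rw [← integral_prod (fun p : (Fin N → ℝ) × (Fin N → ℝ) =>
    w (combine (α ∪ β) (combine β p.2 p.1) x)) (hmp.integrable_comp_of_integrable hx)]
  have hmap := integral_map (μ := (Measure.pi κ).prod (Measure.pi κ))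
    hmp.measurable.aemeasurable (f := fun y => w (combine (α ∪ β) y x))
    (by rw [hmp.map_eq]; exact hx.aestronglyMeasurable)
  rw [hmp.map_eq] at hmap
  exact hmap.symm

theorem integrable_partialMean (α : Finset (Fin N)) {w : (Fin N → ℝ) → W}
    (hw : Integrable w (Measure.pi κ)) :
    Integrable (partialMean (Measure.pi κ) α w) (Measure.pi κ) :=
  ((measurePreserving_combine κ α).integrable_comp_of_integrable hw).integral_prod_left

theorem partialMean_mulVec {ι : Type*} [Fintype ι] (α : Finset (Fin N)) (K : Matrix ι ι ℂ)
    {w : (Fin N → ℝ) → ι → ℂ} (hw : Integrable w (Measure.pi κ)) :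
    partialMean (Measure.pi κ) α (fun x => K.mulVec (w x)) =ᵐ[Measure.pi κ]
      fun x => K.mulVec (partialMean (Measure.pi κ) α w x) := by
  filter_upwards [integrable_comp_combine κ α hw] with x hx
  exact (LinearMap.toContinuousLinearMap K.mulVecLin).integral_comp_comm hx

end PartialMean

/-! ### The normalized measure on the cube -/

section CubeMeasure

variable {N S : ℕ} {h : ℝ}

/-- The uniform probability measure on `[0,h)`. -/
def uniformIco (h : ℝ) : Measure ℝ := (ENNReal.ofReal h)⁻¹ • volume.restrict (Set.Ico 0 h)

/-- The uniform probability measure on the cube `[0,h)^N`. -/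
abbrev cubeMeasure (N : ℕ) (h : ℝ) : Measure (Fin N → ℝ) := Measure.pi fun _ => uniformIco h

instance [hh : Fact (0 < h)] : IsProbabilityMeasure (uniformIco h) := by
  constructor
  simp only [uniformIco, Measure.smul_apply, Measure.restrict_apply_univ, Real.volume_Ico,
    sub_zero, smul_eq_mul]
  exact ENNReal.inv_mul_cancel (by simpa using hh.out) ENNReal.ofReal_ne_top

theorem restrict_cube [hh : Fact (0 < h)] :
    (volume : Measure (Fin N → ℝ)).restrict (cube N h) =
      ENNReal.ofReal (h ^ N) • cubeMeasure N h := by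
  have hpos := hh.out
  have h0 : ENNReal.ofReal (h ^ N) ≠ 0 := by simpa using pow_pos hpos N
  have key : cubeMeasure N h = (ENNReal.ofReal (h ^ N))⁻¹ • volume.restrict (cube N h) := by
    refine Measure.pi_eq fun s _ => ?_
    rw [cube, volume_pi, Measure.restrict_pi_pi]
    simp only [Measure.smul_apply, Measure.pi_pi, uniformIco, smul_eq_mul,
      Finset.prod_mul_distrib, Finset.prod_const, Finset.card_univ, Fintype.card_fin]
    rw [ENNReal.ofReal_pow hpos.le, ENNReal.inv_pow]
  rw [key, smul_smul, ENNReal.mul_inv_cancel h0 ENNReal.ofReal_ne_top, one_smul]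

theorem setIntegral_cube [hh : Fact (0 < h)] {W : Type*} [NormedAddCommGroup W] [NormedSpace ℝ W]
    (f : (Fin N → ℝ) → W) : ∫ y in cube N h, f y = h ^ N • ∫ y, f y ∂cubeMeasure N h := by
  rw [restrict_cube, integral_smul_measure, ENNReal.toReal_ofReal (pow_nonneg hh.out.le N)]

theorem measurableSet_cube : MeasurableSet (cube N h) :=
  MeasurableSet.univ_pi fun _ => measurableSet_Ico

theorem measurableSet_OmegaI (a : Fin S → Fin N → ℝ) (i : Fin S) :
    MeasurableSet (OmegaI a h i) :=
  (measurable_id.sub_const (a i)) measurableSet_cube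

theorem map_add_left_restrict_cube (a : Fin S → Fin N → ℝ) (i : Fin S) :
    (volume.restrict (cube N h)).map (fun x => a i + x) = volume.restrict (OmegaI a h i) := by
  have hmp := (measurePreserving_add_left (volume : Measure (Fin N → ℝ)) (a i)).restrict_preimage
    (measurableSet_OmegaI (h := h) a i)
  have hpre : (fun x => a i + x) ⁻¹' OmegaI a h i = cube N h := by
    ext x
    simp [OmegaI]
  rw [hpre] at hmp
  exact hmp.map_eq

theorem ae_restrict_cube_iff [hh : Fact (0 < h)] {p : (Fin N → ℝ) → Prop} :
    (∀ᵐ x ∂volume.restrict (cube N h), p x) ↔ ∀ᵐ x ∂cubeMeasure N h, p x := by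
  have h0 : ENNReal.ofReal (h ^ N) ≠ 0 := by simpa using pow_pos hh.out N
  rw [restrict_cube, Measure.ae_ennreal_smul_measure_iff h0]

theorem ae_Omega_iff [Fact (0 < h)] (a : Fin S → Fin N → ℝ) {p : (Fin N → ℝ) → Prop} :
    (∀ᵐ x ∂volume.restrict (Omega a h), p x) ↔ ∀ i, ∀ᵐ x ∂cubeMeasure N h, p (a i + x) := by
  rw [Omega, ae_restrict_iUnion_iff]
  refine forall_congr' fun i => ?_
  rw [← map_add_left_restrict_cube, (measurableEmbedding_addLeft (a i)).ae_map_iff,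
    ae_restrict_cube_iff]

theorem ae_mem_cube [Fact (0 < h)] : ∀ᵐ x ∂cubeMeasure N h, x ∈ cube N h :=
  ae_restrict_cube_iff.1 (ae_restrict_mem measurableSet_cube)

end CubeMeasure

/-! ### The elementary operators on the fibres over the cube -/

section Trace

variable {N M S : ℕ} {h : ℝ} {a : Fin S → Fin N → ℝ}

/-- The function on the cube whose value at `x` collects the values `u (a i + x)` for all `i`. -/
def trace (a : Fin S → Fin N → ℝ) (u : (Fin N → ℝ) → V M) (x : Fin N → ℝ) :
    Fin S × Fin M → ℂ :=
  fun p => u (a p.1 + x) p.2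

theorem trace_congr_ae [Fact (0 < h)] {u v : (Fin N → ℝ) → V M}
    (huv : u =ᵐ[volume.restrict (Omega a h)] v) :
    trace a u =ᵐ[cubeMeasure N h] trace a v := by
  filter_upwards [ae_all_iff.2 ((ae_Omega_iff a).1 huv)] with x hx
  funext p
  simp only [trace, hx p.1]

theorem Lp_ext_trace [Fact (0 < h)] {u v : Lp (V M) 2 (volume.restrict (Omega a h))}
    (huv : trace a u =ᵐ[cubeMeasure N h] trace a v) : u = v := by
  refine Lp.ext ((ae_Omega_iff a).2 fun i => ?_)
  filter_upwards [huv] with x hx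
  ext m
  exact congrFun hx (i, m)

theorem integrable_trace [hh : Fact (0 < h)] (u : Lp (V M) 2 (volume.restrict (Omega a h))) :
    Integrable (trace a u) (cubeMeasure N h) := by
  refine Integrable.of_eval fun p => ?_
  have hu : MemLp u 2 (volume.restrict (OmegaI a h p.1)) :=
    (Lp.memLp u).mono_measure (Measure.restrict_mono (Set.subset_iUnion _ p.1) le_rfl)
  have hu' := hu.aestronglyMeasurable
  rw [← map_add_left_restrict_cube,
    memLp_map_measure_iff (by rw [map_add_left_restrict_cube]; exact hu')
      (measurable_const_add (a p.1)).aemeasurable] at hu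
  have h0 : ENNReal.ofReal (h ^ N) ≠ 0 := by simpa using pow_pos hh.out N
  rw [restrict_cube] at hu
  have := (hu.of_measure_le_smul (μ' := cubeMeasure N h) (c := (ENNReal.ofReal (h ^ N))⁻¹)
    (by simp [h0]) (by
      rw [smul_smul, ENNReal.inv_mul_cancel h0 ENNReal.ofReal_ne_top, one_smul])).integrable
    one_le_two
  exact (EuclideanSpace.proj p.2 : V M →L[ℂ] ℂ).integrable_comp this

theorem trace_add [Fact (0 < h)] (u v : Lp (V M) 2 (volume.restrict (Omega a h))) :
    trace a (u + v : Lp (V M) 2 (volume.restrict (Omega a h))) =ᵐ[cubeMeasure N h]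
      fun x => trace a u x + trace a v x :=
  trace_congr_ae (Lp.coeFn_add u v)

theorem trace_zero [Fact (0 < h)] :
    trace a (0 : Lp (V M) 2 (volume.restrict (Omega a h))) =ᵐ[cubeMeasure N h] fun _ => 0 :=
  trace_congr_ae (Lp.coeFn_zero _ _ _)

theorem trace_sum [Fact (0 < h)] {ι : Type*} (s : Finset ι)
    (f : ι → Lp (V M) 2 (volume.restrict (Omega a h))) :
    trace a (∑ k ∈ s, f k : Lp (V M) 2 (volume.restrict (Omega a h))) =ᵐ[cubeMeasure N h]
      fun x => ∑ k ∈ s, trace a (f k) x := by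
  classical
  induction s using Finset.induction_on with
  | empty => simpa using trace_zero
  | insert k s hk ih =>
    simp only [Finset.sum_insert hk]
    filter_upwards [trace_add (f k) (∑ k ∈ s, f k), ih] with x hx hx'
    rw [hx, hx']

theorem trace_Efun [hh : Fact (0 < h)]
    (hdisj : ∀ i j : Fin S, i ≠ j → Disjoint (OmegaI a h i) (OmegaI a h j))
    (i j : Fin S) (α : Finset (Fin N)) (A : Matrix (Fin M) (Fin M) ℂ)
    (u : Lp (V M) 2 (volume.restrict (Omega a h))) :
    trace a (Efun a h i j α A u) =ᵐ[cubeMeasure N h] fun x p =>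
      if p.1 = i then
        A.mulVec (fun m => partialMean (cubeMeasure N h) α (trace a u) x (j, m)) p.2
      else 0 := by
  filter_upwards [ae_mem_cube,
    integrable_comp_combine (fun _ => uniformIco h) α (integrable_trace u)] with x hx hint
  have hmem : ∀ k, a k + x ∈ OmegaI a h k := fun k => by simpa [OmegaI] using hx
  funext ⟨k, m⟩
  by_cases hk : k = i
  · subst hk
    have hN : (h ^ α.card)⁻¹ * (h ^ (N - α.card))⁻¹ * h ^ N = 1 := by
      have hcard : α.card ≤ N := by simpa using α.card_le_univ
      rw [← mul_inv, ← pow_add, Nat.add_sub_cancel' hcard]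
      exact inv_mul_cancel₀ (pow_pos hh.out N).ne'
    have hmean : (∫ y, (u (a j + combine α y x)).ofLp ∂cubeMeasure N h) =
        fun m => partialMean (cubeMeasure N h) α (trace a u) x (j, m) := by
      funext m
      have hint' := fun p => hint.eval p
      rw [partialMean, eval_integral hint']
      exact eval_integral (fun m => hint' (j, m)) m
    simp only [trace, Efun, Set.indicator_of_mem (hmem k), add_sub_cancel_left, setIntegral_cube,
      hmean, Matrix.mulVec_smul, WithLp.toLp_smul, smul_smul, hN, one_smul, if_true]
  · have hnot : a k + x ∉ OmegaI a h i := Set.disjoint_left.1 (hdisj k i hk) (hmem k)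
    simp [trace, Efun, hnot, hk]

variable (EE : Fin S → Fin S → Finset (Fin N) → Matrix (Fin M) (Fin M) ℂ →
  (Lp (V M) 2 (volume.restrict (Omega a h)) →L[ℂ] Lp (V M) 2 (volume.restrict (Omega a h))))

/-- The operator `∑_{i,j} 𝓔_{ij}^α[K_{ij}]` of a block matrix `K = (K_{ij})`. -/
def blockOp (α : Finset (Fin N)) (K : Matrix (Fin S × Fin M) (Fin S × Fin M) ℂ) :
    Lp (V M) 2 (volume.restrict (Omega a h)) →L[ℂ] Lp (V M) 2 (volume.restrict (Omega a h)) :=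
  ∑ i, ∑ j, EE i j α (K.submatrix (Prod.mk i) (Prod.mk j))

/-- The cubes are pairwise disjoint and the operators `EE` are the elementary operators. -/
structure IsElementary : Prop where
  disjoint : ∀ i j : Fin S, i ≠ j → Disjoint (OmegaI a h i) (OmegaI a h j)
  coeFn_ae : ∀ i j α A (u : Lp (V M) 2 (volume.restrict (Omega a h))),
    (EE i j α A u : (Fin N → ℝ) → V M) =ᵐ[volume.restrict (Omega a h)] Efun a h i j α A u

variable {EE}

theorem trace_blockOp [Fact (0 < h)]
    (hEE : IsElementary EE) (α : Finset (Fin N))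
    (K : Matrix (Fin S × Fin M) (Fin S × Fin M) ℂ)
    (u : Lp (V M) 2 (volume.restrict (Omega a h))) :
    trace a (blockOp EE α K u) =ᵐ[cubeMeasure N h] fun x =>
      K.mulVec (partialMean (cubeMeasure N h) α (trace a u) x) := by
  simp only [blockOp, _root_.sum_apply]
  have hE := fun i j => (trace_congr_ae
    (hEE.coeFn_ae i j α (K.submatrix (Prod.mk i) (Prod.mk j)) u)).trans
    (trace_Efun hEE.disjoint i j α (K.submatrix (Prod.mk i) (Prod.mk j)) u)
  have hinner := fun i => trace_sum Finset.univ
    fun j => EE i j α (K.submatrix (Prod.mk i) (Prod.mk j)) u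
  filter_upwards [trace_sum Finset.univ
      fun i => ∑ j, EE i j α (K.submatrix (Prod.mk i) (Prod.mk j)) u,
    ae_all_iff.2 hinner, ae_all_iff.2 fun i => ae_all_iff.2 (hE i)] with x hx hx' hx''
  rw [hx]
  funext ⟨k, m⟩
  simp only [hx', hx'', Finset.sum_apply]
  rw [Finset.sum_eq_single k (by intro i _ hi; simp [hi.symm]) (by simp)]
  simp only [if_true, Matrix.mulVec, dotProduct, Matrix.submatrix_apply, Fintype.sum_prod_type]

variable [Fact (0 < h)]

theorem blockOp_add (hEE : IsElementary EE) (α : Finset (Fin N))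
    (K L : Matrix (Fin S × Fin M) (Fin S × Fin M) ℂ) :
    blockOp EE α (K + L) = blockOp EE α K + blockOp EE α L := by
  ext1 u
  refine Lp_ext_trace ?_
  filter_upwards [trace_blockOp hEE α (K + L) u, trace_blockOp hEE α K u,
    trace_blockOp hEE α L u, trace_add (blockOp EE α K u) (blockOp EE α L u)]
    with x h₁ h₂ h₃ h₄
  rw [h₁, add_apply, h₄, h₂, h₃, Matrix.add_mulVec]

theorem blockOp_sum (hEE : IsElementary EE) {ι : Type*} (s : Finset ι) (α : Finset (Fin N))
    (K : ι → Matrix (Fin S × Fin M) (Fin S × Fin M) ℂ) :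
    blockOp EE α (∑ k ∈ s, K k) = ∑ k ∈ s, blockOp EE α (K k) :=
  map_sum (AddMonoidHom.mk' (blockOp EE α) (blockOp_add hEE α)) K s

theorem blockOp_zero (hEE : IsElementary EE) (α : Finset (Fin N)) : blockOp EE α 0 = 0 := by
  simpa using blockOp_sum hEE (∅ : Finset ℕ) α 0

theorem blockOp_empty_one (hEE : IsElementary EE) : blockOp EE ∅ 1 = 1 := by
  ext1 u
  refine Lp_ext_trace ?_
  filter_upwards [trace_blockOp hEE ∅ 1 u] with x hx
  rw [hx, partialMean_empty, Matrix.one_mulVec, one_apply_eq_self]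

theorem blockOp_smul (hEE : IsElementary EE) (z : ℂ) (α : Finset (Fin N))
    (K : Matrix (Fin S × Fin M) (Fin S × Fin M) ℂ) :
    blockOp EE α (z • K) = z • blockOp EE α K := by
  ext1 u
  refine Lp_ext_trace ?_
  filter_upwards [trace_blockOp hEE α (z • K) u, trace_blockOp hEE α K u,
    trace_congr_ae (Lp.coeFn_smul z (blockOp EE α K u))] with x h₁ h₂ h₃
  rw [h₁, smul_apply, h₃, Matrix.smul_mulVec, ← h₂]
  rfl

theorem blockOp_mul_blockOp (hEE : IsElementary EE) (α β : Finset (Fin N))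
    (K L : Matrix (Fin S × Fin M) (Fin S × Fin M) ℂ) :
    blockOp EE α K * blockOp EE β L = blockOp EE (α ∪ β) (K * L) := by
  ext1 u
  refine Lp_ext_trace ?_
  have hu := integrable_trace u
  filter_upwards [trace_blockOp hEE α K (blockOp EE β L u),
    trace_blockOp hEE (α ∪ β) (K * L) u,
    partialMean_congr_ae (fun _ => uniformIco h) α (trace_blockOp hEE β L u),
    partialMean_mulVec (fun _ => uniformIco h) α L
      (integrable_partialMean (fun _ => uniformIco h) β hu),
    partialMean_partialMean (fun _ => uniformIco h) α β hu] with x h₁ h₂ h₃ h₄ h₅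
  rw [mul_apply_eq_comp, h₁, h₂, h₃, h₄, h₅, Matrix.mulVec_mulVec]

end Trace

/-! ### Möbius inversion on subsets and inversion of operators -/

section Moebius

variable {ι R : Type*} [DecidableEq ι] [AddCommGroup R]

theorem exists_sum_powerset_eq (C : Finset ι → R) :
    ∃ A : Finset ι → R, ∀ α : Finset ι, ∑ β ∈ α.powerset, A β = C α := by
  refine ⟨Finset.strongInduction fun α A => C α - ∑ β ∈ α.ssubsets.attach,
    A β (Finset.mem_ssubsets.1 β.2), fun α => ?_⟩
  rw [← Finset.add_sum_erase _ _ (Finset.mem_powerset_self α), Finset.strongInduction_eq,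
    Finset.sum_attach α.ssubsets (Finset.strongInduction fun α A =>
      C α - ∑ β ∈ α.ssubsets.attach, A β (Finset.mem_ssubsets.1 β.2))]
  exact sub_add_cancel _ _

theorem eq_of_sum_powerset_eq {A A' : Finset ι → R}
    (hA : ∀ α : Finset ι, ∑ β ∈ α.powerset, A β = ∑ β ∈ α.powerset, A' β) : A = A' := by
  funext α
  induction α using Finset.strongInduction with
  | H α ih =>
    have hα := hA α
    rw [← Finset.add_sum_erase _ _ (Finset.mem_powerset_self α),
      ← Finset.add_sum_erase _ _ (Finset.mem_powerset_self α),
      Finset.sum_congr (s₁ := α.powerset.erase α) rfl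
        fun β hβ => ih β (Finset.mem_ssubsets.1 hβ)] at hα
    exact add_right_cancel hα

theorem sum_powerset_single_empty (α : Finset ι) (r : R) :
    ∑ β ∈ α.powerset, (Pi.single ∅ r : Finset ι → R) β = r := by
  rw [Finset.sum_eq_single ∅, Pi.single_eq_same]
  · intro β _ hβ
    rw [Pi.single_eq_of_ne hβ]
  · simp

end Moebius

section Inversion

variable {N M S : ℕ} {h : ℝ} {a : Fin S → Fin N → ℝ}
  {EE : Fin S → Fin S → Finset (Fin N) → Matrix (Fin M) (Fin M) ℂ →
    (Lp (V M) 2 (volume.restrict (Omega a h)) →L[ℂ] Lp (V M) 2 (volume.restrict (Omega a h)))}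
  [Fact (0 < h)]

theorem sum_blockOp_single (hEE : IsElementary EE) (K : Matrix (Fin S × Fin M) (Fin S × Fin M) ℂ) :
    ∑ α, blockOp EE α ((Pi.single ∅ K : Finset (Fin N) → _) α) = blockOp EE ∅ K := by
  rw [Finset.sum_eq_single ∅, Pi.single_eq_same]
  · intro α _ hα
    rw [Pi.single_eq_of_ne hα, blockOp_zero hEE]
  · simp

theorem sum_blockOp_mul_eq_one (hEE : IsElementary EE)
    {A A' : Finset (Fin N) → Matrix (Fin S × Fin M) (Fin S × Fin M) ℂ}
    (hA : ∀ α : Finset (Fin N), (∑ β ∈ α.powerset, A β) * (∑ β ∈ α.powerset, A' β) = 1) :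
    (∑ α, blockOp EE α (A α)) * (∑ α, blockOp EE α (A' α)) = 1 := by
  let P : Finset (Fin N) → Matrix (Fin S × Fin M) (Fin S × Fin M) ℂ := fun γ =>
    ∑ p : Finset (Fin N) × Finset (Fin N) with p.1 ∪ p.2 = γ, A p.1 * A' p.2
  have hP : P = Pi.single ∅ 1 := by
    refine eq_of_sum_powerset_eq fun γ => ?_
    rw [sum_powerset_single_empty, ← hA γ,
      Finset.sum_mul_sum, ← Finset.sum_product',
      ← Finset.sum_fiberwise_of_maps_to (t := γ.powerset)
        (g := fun p : Finset (Fin N) × Finset (Fin N) => p.1 ∪ p.2)]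
    · refine Finset.sum_congr rfl fun δ hδ => Finset.sum_congr ?_ fun _ _ => rfl
      ext p
      simp only [Finset.mem_filter, Finset.mem_univ, true_and, Finset.mem_product,
        Finset.mem_powerset] at hδ ⊢
      refine ⟨fun hp => ⟨?_, hp⟩, fun hp => hp.2⟩
      exact Finset.union_subset_iff.1 (hp ▸ hδ)
    · intro p hp
      simp only [Finset.mem_product, Finset.mem_powerset] at hp ⊢
      exact Finset.union_subset hp.1 hp.2
  calc (∑ α, blockOp EE α (A α)) * (∑ α, blockOp EE α (A' α))
      = ∑ p : Finset (Fin N) × Finset (Fin N), blockOp EE (p.1 ∪ p.2) (A p.1 * A' p.2) := by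
        simp only [Finset.sum_mul_sum, blockOp_mul_blockOp hEE, Fintype.sum_prod_type]
    _ = ∑ γ, blockOp EE γ (P γ) := by
        rw [← Finset.sum_fiberwise Finset.univ
          (fun p : Finset (Fin N) × Finset (Fin N) => p.1 ∪ p.2)]
        refine Finset.sum_congr rfl fun γ _ => ?_
        rw [blockOp_sum hEE]
        refine Finset.sum_congr rfl fun p hp => ?_
        rw [(Finset.mem_filter.1 hp).2]
    _ = 1 := by rw [hP, sum_blockOp_single hEE, blockOp_empty_one hEE]

theorem isUnit_sum_blockOp (hEE : IsElementary EE)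
    {A : Finset (Fin N) → Matrix (Fin S × Fin M) (Fin S × Fin M) ℂ}
    (hA : ∀ α : Finset (Fin N), IsUnit (∑ β ∈ α.powerset, A β)) :
    IsUnit (∑ α, blockOp EE α (A α)) := by
  obtain ⟨A', hA'⟩ := exists_sum_powerset_eq fun α =>
    ((hA α).unit⁻¹ : (Matrix (Fin S × Fin M) (Fin S × Fin M) ℂ)ˣ).val
  refine ⟨⟨_, ∑ α, blockOp EE α (A' α), sum_blockOp_mul_eq_one hEE fun α => ?_,
    sum_blockOp_mul_eq_one hEE fun α => ?_⟩, rfl⟩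
  · rw [hA']
    exact (hA α).mul_val_inv
  · rw [hA']
    exact (hA α).val_inv_mul

theorem algebraMap_sub_sum_blockOp (hEE : IsElementary EE) (z : ℂ)
    (A : Finset (Fin N) → Matrix (Fin S × Fin M) (Fin S × Fin M) ℂ) :
    algebraMap ℂ _ z - ∑ α, blockOp EE α (A α) =
      ∑ α, blockOp EE α ((Pi.single ∅ (z • 1) : Finset (Fin N) → _) α - A α) := by
  have hsub : ∀ α K L, blockOp EE α (K - L) = blockOp EE α K - blockOp EE α L := fun α =>
    map_sub (AddMonoidHom.mk' (blockOp EE α) (blockOp_add hEE α))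
  simp only [hsub, Finset.sum_sub_distrib]
  rw [sum_blockOp_single hEE, blockOp_smul hEE, blockOp_empty_one hEE,
    Algebra.algebraMap_eq_smul_one]

theorem spectrum_sum_blockOp_subset (hEE : IsElementary EE)
    (A : Finset (Fin N) → Matrix (Fin S × Fin M) (Fin S × Fin M) ℂ) :
    spectrum ℂ (∑ α, blockOp EE α (A α)) ⊆
      ⋃ α : Finset (Fin N), spectrum ℂ (∑ β ∈ α.powerset, A β) := by
  intro z hz
  by_contra hnot
  simp only [Set.mem_iUnion, not_exists, spectrum.notMem_iff] at hnot
  rw [spectrum.mem_iff, algebraMap_sub_sum_blockOp hEE] at hz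
  refine hz (isUnit_sum_blockOp hEE fun α => ?_)
  rw [Finset.sum_sub_distrib, sum_powerset_single_empty,
    ← Algebra.algebraMap_eq_smul_one]
  exact hnot α

end Inversion

/-! ### Eigenfunctions -/

section Eigenfunction

variable {N M S : ℕ} {h : ℝ} {a : Fin S → Fin N → ℝ}

/-- The function on `[0,h)` equal to `1` on the first half and to `-1` on the second half. -/
def halfSign (h t : ℝ) : ℂ := if t < h / 2 then 1 else -1

/-- The product of `halfSign` over the coordinates outside `α`. -/
def signProd (h : ℝ) (α : Finset (Fin N)) (x : Fin N → ℝ) : ℂ :=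
  ∏ n, if n ∈ α then 1 else halfSign h (x n)

theorem norm_signProd (α : Finset (Fin N)) (x : Fin N → ℝ) : ‖signProd h α x‖ = 1 := by
  rw [signProd, norm_prod]
  refine Finset.prod_eq_one fun n _ => ?_
  unfold halfSign
  split_ifs <;> simp

theorem measurable_halfSign : Measurable (halfSign h) :=
  Measurable.ite measurableSet_Iio measurable_const measurable_const

theorem measurable_signProd (α : Finset (Fin N)) : Measurable (signProd h α) := by
  refine Finset.measurable_prod _ fun n _ => ?_
  split_ifs
  · exact measurable_const
  · exact measurable_halfSign.comp (measurable_pi_apply n)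

theorem integral_halfSign [hh : Fact (0 < h)] : ∫ t, halfSign h t ∂uniformIco h = 0 := by
  have hpos := hh.out
  have hdecomp : Set.Ico 0 h = Set.Ico 0 (h / 2) ∪ Set.Ico (h / 2) h :=
    (Set.Ico_union_Ico_eq_Ico (by linarith) (by linarith)).symm
  have hleft : Set.EqOn (halfSign h) (fun _ => 1) (Set.Ico 0 (h / 2)) := fun t ht => by
    simp [halfSign, ht.2]
  have hright : Set.EqOn (halfSign h) (fun _ => -1) (Set.Ico (h / 2) h) := fun t ht => by
    simp [halfSign, not_lt.2 ht.1]
  rw [uniformIco, integral_smul_measure, hdecomp, setIntegral_union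
    (Set.Ico_disjoint_Ico_same) measurableSet_Ico
    ((integrableOn_congr_fun hleft measurableSet_Ico).2 (by simp [integrableOn_const_iff]))
    ((integrableOn_congr_fun hright measurableSet_Ico).2 (by simp [integrableOn_const_iff])),
    setIntegral_congr_fun measurableSet_Ico hleft, setIntegral_congr_fun measurableSet_Ico hright]
  have hhalf : h - h / 2 = h / 2 := by ring
  simp [measureReal_def, Real.volume_Ico, hhalf]

theorem partialMean_signProd [Fact (0 < h)] (α β : Finset (Fin N)) (x : Fin N → ℝ) :
    partialMean (cubeMeasure N h) β (signProd h α) x = if β ⊆ α then signProd h α x else 0 := by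
  have hterm : ∀ y, signProd h α (combine β y x) = ∏ n, (fun t => if n ∈ α then (1 : ℂ) else
      if n ∈ β then halfSign h t else halfSign h (x n)) (y n) := fun y => by
    refine Finset.prod_congr rfl fun n _ => ?_
    by_cases hβ : n ∈ β <;> simp [combine, hβ]
  simp only [partialMean, hterm]
  rw [integral_fintype_prod_eq_prod (𝕜 := ℂ) fun n t => if n ∈ α then (1 : ℂ) else
    if n ∈ β then halfSign h t else halfSign h (x n)]
  split_ifs with hβα
  · refine Finset.prod_congr rfl fun n _ => ?_
    by_cases hα : n ∈ α
    · simp [hα]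
    · have hβ : n ∉ β := fun hβ => hα (hβα hβ)
      simp [hα, hβ]
  · obtain ⟨n, hβ, hα⟩ := Finset.not_subset.1 hβα
    refine Finset.prod_eq_zero (Finset.mem_univ n) ?_
    simp [hα, hβ, integral_halfSign]

/-- The function on `Ω` equal to `signProd h α (x - a i) • v_i` on `Ω_i`. -/
def eigenfun (a : Fin S → Fin N → ℝ) (h : ℝ) (α : Finset (Fin N)) (v : Fin S × Fin M → ℂ)
    (x : Fin N → ℝ) : V M :=
  ∑ i, (OmegaI a h i).indicator
    (fun x => signProd h α (x - a i) • (WithLp.toLp 2 fun m => v (i, m) : V M)) x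

theorem memLp_eigenfun [Fact (0 < h)] (α : Finset (Fin N)) (v : Fin S × Fin M → ℂ) :
    MemLp (eigenfun a h α v) 2 (volume.restrict (Omega a h)) := by
  have hfin : ∀ i, IsFiniteMeasure (volume.restrict (OmegaI a h i)) := fun i => by
    rw [← map_add_left_restrict_cube, restrict_cube]
    have := (cubeMeasure N h).smul_finite (ENNReal.ofReal_ne_top (r := h ^ N))
    infer_instance
  refine memLp_finsetSum _ fun i _ => ?_
  rw [memLp_indicator_iff_restrict (measurableSet_OmegaI a i)]
  refine MemLp.mono_measure (ε := V M) (μ := volume.restrict (OmegaI a h i)) ?_ ?_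
  · rw [Measure.restrict_restrict (measurableSet_OmegaI a i)]
    exact Measure.restrict_mono Set.inter_subset_left le_rfl
  · refine MemLp.of_bound ?_ ‖(WithLp.toLp 2 fun m => v (i, m) : V M)‖ (ae_of_all _ fun x => ?_)
    · exact (((measurable_signProd α).comp (measurable_id.sub_const (a i))).smul_const
        _).aestronglyMeasurable
    · rw [norm_smul, norm_signProd, one_mul]

theorem trace_eigenfun [Fact (0 < h)]
    (hdisj : ∀ i j : Fin S, i ≠ j → Disjoint (OmegaI a h i) (OmegaI a h j))
    (α : Finset (Fin N)) (v : Fin S × Fin M → ℂ) :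
    trace a (eigenfun a h α v) =ᵐ[cubeMeasure N h] fun x => signProd h α x • v := by
  filter_upwards [ae_mem_cube] with x hx
  have hmem : ∀ k, a k + x ∈ OmegaI a h k := fun k => by simpa [OmegaI] using hx
  funext ⟨k, m⟩
  rw [trace, eigenfun, Finset.sum_eq_single k]
  · simp [hmem k]
  · intro i _ hi
    exact Set.indicator_of_notMem (Set.disjoint_left.1 (hdisj k i hi.symm) (hmem k)) _
  · simp

theorem subset_spectrum_sum_blockOp [Fact (0 < h)]
    {EE : Fin S → Fin S → Finset (Fin N) → Matrix (Fin M) (Fin M) ℂ →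
      (Lp (V M) 2 (volume.restrict (Omega a h)) →L[ℂ] Lp (V M) 2 (volume.restrict (Omega a h)))}
    (hEE : IsElementary EE) (A : Finset (Fin N) → Matrix (Fin S × Fin M) (Fin S × Fin M) ℂ)
    (α : Finset (Fin N)) :
    spectrum ℂ (∑ β ∈ α.powerset, A β) ⊆ spectrum ℂ (∑ β, blockOp EE β (A β)) := by
  intro z hz
  rw [spectrum.mem_iff, Matrix.isUnit_iff_isUnit_det, isUnit_iff_ne_zero, not_not,
    ← Matrix.exists_mulVec_eq_zero_iff] at hz
  obtain ⟨v, hv, hzv⟩ := hz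
  rw [Matrix.sub_mulVec, sub_eq_zero, Algebra.algebraMap_eq_smul_one, Matrix.smul_mulVec,
    Matrix.one_mulVec] at hzv
  let u : Lp (V M) 2 (volume.restrict (Omega a h)) := (memLp_eigenfun α v).toLp _
  have hu : trace a u =ᵐ[cubeMeasure N h] fun x => signProd h α x • v :=
    (trace_congr_ae (MemLp.coeFn_toLp _)).trans (trace_eigenfun hEE.disjoint α v)
  have hu0 : u ≠ 0 := by
    intro h0
    have hae : ∀ᵐ _ ∂cubeMeasure N h, False := by
      have hzero := trace_zero (M := M) (a := a) (h := h)
      rw [h0] at hu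
      filter_upwards [hu, hzero] with x hx hx'
      rw [hx', eq_comm, smul_eq_zero] at hx
      refine hx.elim (fun hs => ?_) hv
      simpa [hs] using norm_signProd (h := h) α x
    exact hae.exists.choose_spec
  have heig : (∑ β, blockOp EE β (A β)) u = z • u := by
    refine Lp_ext_trace ?_
    rw [_root_.sum_apply]
    filter_upwards [trace_sum Finset.univ fun β => blockOp EE β (A β) u,
      ae_all_iff.2 fun β => trace_blockOp hEE β (A β) u,
      ae_all_iff.2 fun β => partialMean_congr_ae (fun _ => uniformIco h) β hu, hu,
      trace_congr_ae (Lp.coeFn_smul z u)] with x h₁ h₂ h₃ h₄ h₅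
    have hmean : ∀ β, partialMean (cubeMeasure N h) β (fun x => signProd h α x • v) x =
        if β ⊆ α then signProd h α x • v else 0 := fun β => by
      have := partialMean_signProd α β x (h := h)
      simp only [partialMean] at this ⊢
      rw [integral_smul_const, this]
      split_ifs <;> simp
    have h₅' : trace a (z • u : Lp (V M) 2 (volume.restrict (Omega a h))) x = z • trace a u x := h₅
    rw [h₁, h₅', h₄]
    simp only [h₂, h₃, hmean]
    rw [smul_comm, hzv, ← Matrix.mulVec_smul, Matrix.sum_mulVec]
    have hset : α.powerset = Finset.univ.filter (· ⊆ α) := by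
      ext β
      simp
    rw [hset, Finset.sum_filter]
    refine Finset.sum_congr rfl fun β _ => ?_
    split_ifs <;> simp
  rw [spectrum.mem_iff]
  intro hunit
  obtain ⟨T, hT⟩ := hunit.exists_left_inv
  have hker : (algebraMap ℂ _ z - ∑ β, blockOp EE β (A β)) u = 0 := by
    rw [sub_apply, heig, Algebra.algebraMap_eq_smul_one, smul_apply, one_apply_eq_self, sub_self]
  refine hu0 ?_
  rw [← one_apply_eq_self (F := Lp (V M) 2 (volume.restrict (Omega a h)) →L[ℂ]
    Lp (V M) 2 (volume.restrict (Omega a h))) u, ← hT, mul_apply_eq_comp, hker, map_zero]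

end Eigenfunction

/-- The spectrum of `𝒜 = ∑_{α,i,j} 𝓔_{ij}^α[𝐀_{ij}^α]` as a
bounded operator on `L²` equals the union of the spectra of the matrices
`𝐁_α = ∑_{β⊆α} 𝐀_β`, i.e. `{λ : ∏_α det(𝐁_α − λ𝐈) = 0}`. -/
theorem spectrum_eq_union_matrix_spectra (N M S : ℕ) (hN : 1 ≤ N)
    (hM : 1 ≤ M) (hS : 1 ≤ S) (h : ℝ) (hh : 0 < h) (a : Fin S → Fin N → ℝ)
    (hdisj : ∀ i j : Fin S, i ≠ j → Disjoint (OmegaI a h i) (OmegaI a h j))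
    (EE : Fin S → Fin S → Finset (Fin N) → Matrix (Fin M) (Fin M) ℂ →
      (Lp (V M) 2 (volume.restrict (Omega a h)) →L[ℂ]
        Lp (V M) 2 (volume.restrict (Omega a h))))
    (hEE : ∀ i j α A (u : Lp (V M) 2 (volume.restrict (Omega a h))),
      (EE i j α A u : (Fin N → ℝ) → V M) =ᵐ[volume.restrict (Omega a h)]
        Efun a h i j α A u)
    (coef : Finset (Fin N) → Fin S → Fin S → Matrix (Fin M) (Fin M) ℂ) :
    (spectrum ℂ (bigSum EE coef) =
      ⋃ α : Finset (Fin N), spectrum ℂ (∑ β ∈ α.powerset, blockM (coef β))) ∧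
    (spectrum ℂ (bigSum EE coef) =
      {z : ℂ | ∏ α : Finset (Fin N),
        ((∑ β ∈ α.powerset, blockM (coef β)) - z •
          (1 : Matrix (Fin S × Fin M) (Fin S × Fin M) ℂ)).det = 0}) := by
  have : Fact (0 < h) := ⟨hh⟩
  have hElem : IsElementary EE := ⟨hdisj, hEE⟩
  have hspec : spectrum ℂ (bigSum EE coef) =
      ⋃ α : Finset (Fin N), spectrum ℂ (∑ β ∈ α.powerset, blockM (coef β)) :=
    Set.Subset.antisymm
      (spectrum_sum_blockOp_subset hElem fun α => blockM (coef α))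
      (Set.iUnion_subset
        (subset_spectrum_sum_blockOp hElem fun α => blockM (coef α)))
  refine ⟨hspec, hspec.trans ?_⟩
  ext z
  simp only [Set.mem_iUnion, Set.mem_ofPred_eq, Finset.prod_eq_zero_iff, Finset.mem_univ, true_and]
  refine exists_congr fun α => ?_
  rw [spectrum.mem_iff, ← IsUnit.neg_iff, neg_sub, Matrix.isUnit_iff_isUnit_det,
    isUnit_iff_ne_zero, not_not, Algebra.algebraMap_eq_smul_one]

end Stmt12
end
end
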